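/- Let G be a connected simple graph on n ≥ 2 vertices. Then G has a spanning closed walk of length at most (14(√2 − 1)/(12√2 − 13)) · OLP(G). In particular, the integrality gap of the Held-Karp relaxation for graph-TSP is at most 14(√2 − 1)/(12√2 − 13) < 1.461. -/

import Mathlib

open SimpleGraph

/-- The value `Σ_{e ∈ E} x e` of an assignment `x` on the edges of `G`. -/
noncomputable def hkValue {V : Type*} (G : SimpleGraph V) (x : Sym2 V → ℝ) : ℝ :=
  ∑ᶠ e ∈ G.edgeSet, x e

/-- The total weight `Σ_{e ∈ δ(S)} x e` of the edges of `G` crossing the cut `(S, Sᶜ)`. -/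
noncomputable def hkCut {V : Type*} (G : SimpleGraph V) (x : Sym2 V → ℝ)
    (S : Set V) : ℝ :=
  ∑ᶠ e ∈ {e ∈ G.edgeSet | ∃ a b, e = s(a, b) ∧ a ∈ S ∧ b ∉ S}, x e

/-- Feasibility for the Held-Karp relaxation of graph-TSP on `G`. -/
def HKFeasible {V : Type*} (G : SimpleGraph V) (x : Sym2 V → ℝ) : Prop :=
  (∀ e, 0 ≤ x e) ∧
  ∀ S : Set V, S.Nonempty → S ≠ Set.univ → 2 ≤ hkCut G x S

/-- The optimum value `OLP(G)` of the Held-Karp relaxation of graph-TSP on `G`. -/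
noncomputable def OLP {V : Type*} [Fintype V] (G : SimpleGraph V) : ℝ :=
  sInf {y | ∃ x, HKFeasible G x ∧ y = hkValue G x}

/-!
The proof is Mömke and Svensson's removable-edge argument with Mucha's analysis, and gives the ratio
`13 / 9`. A basic solution `x` of the relaxation is supported on at most `2 n - 2` edges, because
its tight cuts can be uncrossed to a laminar family. A depth-first search which always proceeds
along the heaviest available edge yields a spanning tree all of whose nontree edges are back edges,
and the cut constraints bound the cost of covering every tree edge by back edges carrying `x`. As
networks have integral optimal flows, this fractional cover by back edges can be replaced by an
honest set of them at no extra cost.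

A covering set of back edges and the tree form a multigraph in which some pairs of edges are
removable: deleting at most one edge from each pair leaves it connected. Splitting off each pair at
a new vertex of degree three and weighting the edges by `1 / 3`, or by `2 / 3` for a back edge
without a partner, gives every odd cut weight at least one, so by Sebő's theorem on conservative
weightings some join of the odd vertices costs no more than this weighting. Correcting the parities
along that join, with removable edges deleted instead of doubled, leaves a connected Eulerian
multigraph with few edges.
-/

section BasicSolution

variable {𝕜 E κ : Type*} [Field 𝕜] [LinearOrder 𝕜] [IsStrictOrderedRing 𝕜]
  [AddCommGroup E] [Module 𝕜 E]

/-- A basic solution of the system of linear inequalities `b k ≤ A k x`, encoded as a solution at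
which no direction is annihilated by all tight constraints. Basic solutions are sparse: for a system
containing the sign constraints, they have at most as many nonzero coordinates as other independent
tight constraints. -/
def IsBasicSolution (A : κ → E →ₗ[𝕜] 𝕜) (b : κ → 𝕜) (x : E) : Prop :=
  (∀ k, b k ≤ A k x) ∧ ∀ z, (∀ k, A k x = b k → A k z = 0) → z = 0

variable {A : κ → E →ₗ[𝕜] 𝕜} {b : κ → 𝕜}

lemma exists_add_smul_feasible_and_tight [Finite κ] {x z : E} (hx : ∀ k, b k ≤ A k x)
    (hz : ∀ k, A k x = b k → A k z = 0) (hneg : ∃ k, A k z < 0) :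
    ∃ ε ≥ (0 : 𝕜), (∀ k, b k ≤ A k (x + ε • z)) ∧
      ∃ k, A k x ≠ b k ∧ A k (x + ε • z) = b k := by
  obtain ⟨k₀, hk₀, hmin⟩ := {k | A k z < 0}.toFinite.exists_minimalFor
    (fun k ↦ (A k x - b k) / -A k z) _ hneg
  have hk₀ : A k₀ z < 0 := hk₀
  set ε := (A k₀ x - b k₀) / -A k₀ z with hε
  have hε₀ : 0 ≤ ε := div_nonneg (by linarith [hx k₀]) (by linarith)
  have hstep (k : κ) : A k (x + ε • z) = A k x + ε * A k z := by simp
  refine ⟨ε, hε₀, fun k ↦ ?_, k₀, fun h ↦ hk₀.ne (hz k₀ h), ?_⟩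
  · rw [hstep]
    rcases lt_or_ge (A k z) 0 with hk | hk
    · have hratio : ε ≤ (A k x - b k) / -A k z := (le_total _ _).elim id (hmin hk)
      rw [le_div_iff₀ (by linarith)] at hratio
      linarith
    · linarith [hx k, mul_nonneg hε₀ hk]
  · have hk₀' : A k₀ z ≠ 0 := hk₀.ne
    rw [hstep, hε]
    field_simp
    ring

theorem exists_isBasicSolution_le [Finite κ] (c : E →ₗ[𝕜] 𝕜)
    (hc : ∀ z, (∀ k, 0 ≤ A k z) → c z ≤ 0 → z = 0) {x : E} (hx : ∀ k, b k ≤ A k x) :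
    ∃ x', IsBasicSolution A b x' ∧ c x' ≤ c x ∧ ∀ k, A k x = b k → A k x' = b k := by
  induction hm : {k | A k x ≠ b k}.ncard using Nat.strong_induction_on generalizing x with
  | _ m ih =>
    by_cases hbasic : ∀ z, (∀ k, A k x = b k → A k z = 0) → z = 0
    · exact ⟨x, ⟨hx, hbasic⟩, le_rfl, fun _ h ↦ h⟩
    obtain ⟨z, hz, hz₀, hcz⟩ : ∃ z, (∀ k, A k x = b k → A k z = 0) ∧ z ≠ 0 ∧ c z ≤ 0 := by
      push Not at hbasic
      obtain ⟨z, hz, hz₀⟩ := hbasic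
      rcases le_total (c z) 0 with h | h
      · exact ⟨z, hz, hz₀, h⟩
      · exact ⟨-z, fun k hk ↦ by simp [hz k hk], neg_ne_zero.mpr hz₀, by simpa using h⟩
    have hneg : ∃ k, A k z < 0 := by
      by_contra! h
      exact hz₀ (hc z h hcz)
    obtain ⟨ε, hε, hfeas, k₀, hk₀, hk₀'⟩ := exists_add_smul_feasible_and_tight hx hz hneg
    have htight (k : κ) (hk : A k x = b k) : A k (x + ε • z) = b k := by simp [hz k hk, hk]
    have hlt : {k | A k (x + ε • z) ≠ b k}.ncard < m := hm ▸
      Set.ncard_lt_ncard ⟨fun k hk h ↦ hk (htight k h), fun h ↦ h hk₀ hk₀'⟩ (Set.toFinite _)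
    obtain ⟨x', hx', hcx', htight'⟩ := ih _ hlt hfeas rfl
    refine ⟨x', hx', hcx'.trans ?_, fun k hk ↦ htight' k (htight k hk)⟩
    simpa using mul_nonpos_of_nonneg_of_nonpos hε hcz

lemma card_support_le_card_forms {𝕜 ι κ : Type*} [Field 𝕜] [Finite ι] (F : Finset ι)
    (L : Finset κ) (φ : κ → (ι → 𝕜) →ₗ[𝕜] 𝕜)
    (h : ∀ z : ι → 𝕜, (∀ i ∉ F, z i = 0) → (∀ k ∈ L, φ k z = 0) → z = 0) :
    F.card ≤ L.card := by
  cases nonempty_fintype ι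
  let ext : (F → 𝕜) →ₗ[𝕜] (ι → 𝕜) := Function.ExtendByZero.linearMap 𝕜 (Subtype.val : F → ι)
  have hext (z : F → 𝕜) (i : F) : ext z i = z i := Subtype.val_injective.extend_apply z 0 i
  let Φ : (F → 𝕜) →ₗ[𝕜] (L → 𝕜) := LinearMap.pi fun k ↦ (φ k.1).comp ext
  have hΦ : Function.Injective Φ := by
    rw [injective_iff_map_eq_zero]
    intro z hz
    have hz' : ext z = 0 := h _
      (fun i hi ↦ Function.extend_apply' _ _ _ (by rintro ⟨a, rfl⟩; exact hi a.2))
      (fun k hk ↦ congrFun hz ⟨k, hk⟩)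
    exact funext fun i ↦ (hext z i).symm.trans (congrFun hz' i)
  simpa using LinearMap.finrank_le_finrank_of_injective hΦ

end BasicSolution

section IntegralFlow

variable {N A : Type*} [DecidableEq N]

/-- The node-arc incidence matrix of the directed multigraph whose arc `a` runs from `s a` to
`t a`. -/
def incidence (s t : A → N) (n : N) (a : A) : ℤ :=
  (if t a = n then 1 else 0) - (if s a = n then 1 else 0)

lemma incidence_eq_zero {s t : A → N} {n : N} {a : A} (hs : s a ≠ n) (ht : t a ≠ n) :
    incidence s t n a = 0 := by
  simp [incidence, hs, ht]

variable [Fintype A] {𝕜 : Type*} [Field 𝕜]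

/-- The net inflow of `f` at the node `n`; circulations are the `f` for which it vanishes at every
node. -/
def netInflow (s t : A → N) (n : N) : (A → 𝕜) →ₗ[𝕜] 𝕜 :=
  ∑ a, (incidence s t n a : 𝕜) • LinearMap.proj a

lemma netInflow_apply (s t : A → N) (n : N) (f : A → 𝕜) :
    netInflow s t n f = ∑ a, (incidence s t n a : 𝕜) * f a := by
  simp [netInflow]

lemma sum_netInflow [Fintype N] (s t : A → N) (f : A → 𝕜) : ∑ n, netInflow s t n f = 0 := by
  simp only [netInflow_apply]
  rw [Finset.sum_comm]
  refine Finset.sum_eq_zero fun a _ ↦ ?_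
  simp [← Finset.sum_mul, incidence]

lemma card_lt_card_endpoints_of_forest [Finite N] {s t : A → N} {F : Finset A} (hF : F.Nonempty)
    (hforest : ∀ z : A → 𝕜, (∀ a ∉ F, z a = 0) → (∀ n, netInflow s t n z = 0) → z = 0) :
    F.card < (F.image s ∪ F.image t).card := by
  classical
  cases nonempty_fintype N
  obtain ⟨a₁, ha₁⟩ := hF
  have hs₁ : s a₁ ∈ F.image s ∪ F.image t :=
    Finset.mem_union_left _ (Finset.mem_image_of_mem s ha₁)
  suffices h : F.card ≤ ((F.image s ∪ F.image t).erase (s a₁)).card from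
    h.trans_lt (Finset.card_erase_lt_of_mem hs₁)
  refine card_support_le_card_forms F _ (netInflow s t) fun z hz hflow ↦ hforest z hz ?_
  have hne (n : N) (hn : n ≠ s a₁) : netInflow s t n z = 0 := by
    by_cases hnT : n ∈ F.image s ∪ F.image t
    · exact hflow n (Finset.mem_erase.mpr ⟨hn, hnT⟩)
    rw [netInflow_apply]
    refine Finset.sum_eq_zero fun a _ ↦ ?_
    by_cases haF : a ∈ F
    · simp only [Finset.mem_union, Finset.mem_image, not_or, not_exists, not_and] at hnT
      simp [incidence_eq_zero (hnT.1 a haF) (hnT.2 a haF)]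
    · simp [hz a haF]
  intro n
  by_cases hn : n = s a₁
  · rw [hn, ← sum_netInflow s t z, eq_comm]
    exact Fintype.sum_eq_single _ hne
  · exact hne n hn

lemma exists_leaf_of_forest [Finite N] {s t : A → N} {F : Finset A} (hF : F.Nonempty)
    (hforest : ∀ z : A → 𝕜, (∀ a ∉ F, z a = 0) → (∀ n, netInflow s t n z = 0) → z = 0) :
    ∃ n, ∃ a₀ ∈ F, IsUnit (incidence s t n a₀) ∧ ∀ a ∈ F, a ≠ a₀ → incidence s t n a = 0 := by
  classical
  let deg (n : N) (a : A) : ℕ := (if s a = n then 1 else 0) + (if t a = n then 1 else 0)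
  set T := F.image s ∪ F.image t
  have hsum : ∑ n ∈ T, ∑ a ∈ F, deg n a < ∑ n ∈ T, 2 := by
    have hmem (a : A) (ha : a ∈ F) : s a ∈ T ∧ t a ∈ T := by
      grind
    rw [Finset.sum_comm, Finset.sum_congr rfl fun a ha ↦ show ∑ n ∈ T, deg n a = 2 by
      simp [deg, Finset.sum_add_distrib, hmem a ha]]
    simpa using card_lt_card_endpoints_of_forest hF hforest
  obtain ⟨n, hnT, hn⟩ := Finset.exists_lt_of_sum_lt hsum
  obtain ⟨a₀, ha₀, hdeg₀⟩ : ∃ a ∈ F, deg n a ≠ 0 := by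
    simp only [T, Finset.mem_union, Finset.mem_image] at hnT
    rcases hnT with ⟨a, ha, rfl⟩ | ⟨a, ha, rfl⟩ <;> exact ⟨a, ha, by simp [deg]⟩
  rw [← Finset.add_sum_erase _ _ ha₀] at hn
  refine ⟨n, a₀, ha₀, ?_, fun a ha hne ↦ ?_⟩
  · have hone : deg n a₀ = 1 := by omega
    rw [Int.isUnit_iff]
    grind [incidence]
  · have hzero : ∑ a ∈ F.erase a₀, deg n a = 0 := by omega
    have := Finset.sum_eq_zero_iff.mp hzero a (Finset.mem_erase.mpr ⟨hne, ha⟩)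
    grind [incidence]

lemma exists_intCast_eq_of_sum_mul_eq_zero {d : A → ℤ} {x : A → 𝕜} {a₀ : A} (hd : IsUnit (d a₀))
    (hintegral : ∀ a ≠ a₀, d a = 0 ∨ ∃ m : ℤ, (m : 𝕜) = x a) (hsum : ∑ a, (d a : 𝕜) * x a = 0) :
    ∃ m : ℤ, (m : 𝕜) = x a₀ := by
  classical
  have hterm (a : A) (ha : a ≠ a₀) : ∃ m : ℤ, (m : 𝕜) = d a * x a := by
    rcases hintegral a ha with h | ⟨m, hm⟩
    · exact ⟨0, by simp [h]⟩
    · exact ⟨d a * m, by push_cast; rw [hm]⟩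
  choose! g hg using hterm
  rw [← Finset.add_sum_erase _ _ (Finset.mem_univ a₀), Finset.sum_congr rfl fun a ha ↦
    (hg a (Finset.ne_of_mem_erase ha)).symm, ← Int.cast_sum] at hsum
  rcases Int.isUnit_iff.mp hd with h | h
  · exact ⟨-∑ a ∈ Finset.univ.erase a₀, g a, by
      rw [Int.cast_neg, neg_eq_iff_add_eq_zero, add_comm]; simpa [h] using hsum⟩
  · exact ⟨∑ a ∈ Finset.univ.erase a₀, g a, by
      rw [← sub_eq_zero, sub_eq_neg_add]; simpa [h] using hsum⟩

/-- A leaf of the forest of fractional arcs would carry an integral value, so there are none. -/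
lemma exists_intCast_eq_of_circulation [Finite N] {s t : A → N} {x : A → 𝕜}
    (hx : ∀ n, netInflow s t n x = 0)
    (hforest : ∀ z : A → 𝕜, (∀ a, (∃ m : ℤ, (m : 𝕜) = x a) → z a = 0) →
      (∀ n, netInflow s t n z = 0) → z = 0) (a : A) :
    ∃ m : ℤ, (m : 𝕜) = x a := by
  classical
  by_contra ha
  obtain ⟨n, a₀, ha₀, hunit, hleaf⟩ :=
    exists_leaf_of_forest (F := {a | ¬ ∃ m : ℤ, (m : 𝕜) = x a}) ⟨a, by simpa using ha⟩
      fun z hz ↦ hforest z fun a ha ↦ hz a (by simpa using ha)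
  refine (Finset.mem_filter.mp ha₀).2
    (exists_intCast_eq_of_sum_mul_eq_zero hunit (fun a hne ↦ ?_) (netInflow_apply s t n x ▸ hx n))
  by_cases hintegral : ∃ m : ℤ, (m : 𝕜) = x a
  · exact .inr hintegral
  · exact .inl (hleaf a (by simpa using hintegral) hne)

variable [LinearOrder 𝕜] [IsStrictOrderedRing 𝕜] [FloorRing 𝕜]

theorem exists_integral_circulation_le [Finite N] (s t : A → N) {f : A → 𝕜} (c : A → 𝕜)
    (hf : ∀ n, netInflow s t n f = 0) :
    ∃ g : A → ℤ, (∀ n, netInflow s t n (fun a ↦ (g a : 𝕜)) = 0) ∧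
      (∀ a, ⌊f a⌋ ≤ g a ∧ g a ≤ ⌈f a⌉) ∧ ∑ a, c a * g a ≤ ∑ a, c a * f a := by
  let L : (N ⊕ N) ⊕ (A ⊕ A) → (A → 𝕜) →ₗ[𝕜] 𝕜 := Sum.elim
    (Sum.elim (netInflow s t) fun n ↦ -netInflow s t n)
    (Sum.elim LinearMap.proj fun a ↦ -LinearMap.proj a)
  let b : (N ⊕ N) ⊕ (A ⊕ A) → 𝕜 := Sum.elim 0 (Sum.elim (fun a ↦ ⌊f a⌋) fun a ↦ -⌈f a⌉)
  let C : (A → 𝕜) →ₗ[𝕜] 𝕜 := ∑ a, c a • LinearMap.proj a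
  have hC (x : A → 𝕜) : C x = ∑ a, c a * x a := by simp [C]
  have hbounded (z : A → 𝕜) (hz : ∀ k, 0 ≤ L k z) (_ : C z ≤ 0) : z = 0 :=
    funext fun a ↦ le_antisymm (by simpa [L] using hz (.inr (.inr a)))
      (by simpa [L] using hz (.inr (.inl a)))
  have hfeas : ∀ k, b k ≤ L k f := by
    rintro ((n | n) | (a | a)) <;> simp [L, b, hf, Int.floor_le, Int.le_ceil]
  obtain ⟨x, ⟨hx, hbasic⟩, hcost, -⟩ := exists_isBasicSolution_le C hbounded hfeas
  have hflow (n : N) : netInflow s t n x = 0 :=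
    le_antisymm (by simpa [L, b] using hx (.inl (.inr n)))
      (by simpa [L, b] using hx (.inl (.inl n)))
  have hlower (a : A) : (⌊f a⌋ : 𝕜) ≤ x a := by simpa [L, b] using hx (.inr (.inl a))
  have hupper (a : A) : x a ≤ (⌈f a⌉ : 𝕜) := by simpa [L, b] using hx (.inr (.inr a))
  have hforest (z : A → 𝕜) (hz : ∀ a, (∃ m : ℤ, (m : 𝕜) = x a) → z a = 0)
      (hzflow : ∀ n, netInflow s t n z = 0) : z = 0 := by
    refine hbasic z ?_
    rintro ((n | n) | (a | a)) hk
    · simp [L, hzflow n]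
    · simp [L, hzflow n]
    · exact hz a ⟨⌊f a⌋, by simpa [L, b] using hk.symm⟩
    · simp [L, hz a ⟨⌈f a⌉, by simpa [L, b] using hk.symm⟩]
  choose g hg using exists_intCast_eq_of_circulation hflow hforest
  obtain rfl : (fun a ↦ (g a : 𝕜)) = x := funext hg
  refine ⟨g, hflow, fun a ↦ ⟨Int.cast_le.mp (hlower a), Int.cast_le.mp (hupper a)⟩, ?_⟩
  rwa [hC, hC] at hcost

end IntegralFlow

section Laminar

variable {α : Type*}

/-- Two sets overlap when they meet and neither contains the other. -/
def Overlaps (A B : Finset α) : Prop :=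
  ¬ Disjoint A B ∧ ¬ A ⊆ B ∧ ¬ B ⊆ A

/-- A laminar family, in which any two members are nested or disjoint. -/
def IsLaminar (L : Finset (Finset α)) : Prop :=
  ∀ A ∈ L, ∀ B ∈ L, ¬ Overlaps A B

lemma Overlaps.symm {A B : Finset α} (h : Overlaps A B) : Overlaps B A :=
  ⟨fun hd ↦ h.1 hd.symm, h.2.2, h.2.1⟩

lemma not_overlaps_self (A : Finset α) : ¬ Overlaps A A :=
  fun h ↦ h.2.1 Finset.Subset.rfl

lemma not_overlaps_iff {A B : Finset α} :
    ¬ Overlaps A B ↔ A ⊆ B ∨ B ⊆ A ∨ Disjoint A B := by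
  unfold Overlaps
  tauto

open Classical in
/-- The number of members of `L` overlapping `S`, the measure of progress of uncrossing. -/
noncomputable def overlapCount (L : Finset (Finset α)) (S : Finset α) : ℕ :=
  (L.filter (Overlaps · S)).card

variable {L : Finset (Finset α)} {A S : Finset α}

lemma overlapCount_lt_of_subset (hA : A ∈ L) (hAS : Overlaps A S) {T : Finset α}
    (hT : ¬ Overlaps A T) (hsub : ∀ B ∈ L, Overlaps B T → Overlaps B S) :
    overlapCount L T < overlapCount L S := by
  classical
  refine Finset.card_lt_card ((Finset.ssubset_iff_of_subset fun B hB ↦ ?_).mpr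
    ⟨A, by simp [hA, hAS], by simp [hT]⟩)
  rw [Finset.mem_filter] at hB ⊢
  exact ⟨hB.1, hsub B hB.1 hB.2⟩

variable [DecidableEq α]

lemma IsLaminar.insert_of_not_overlaps (hL : IsLaminar L)
    (hS : ∀ A ∈ L, ¬ Overlaps A S) : IsLaminar (insert S L) := by
  simp only [IsLaminar, Finset.forall_mem_insert]
  exact ⟨⟨not_overlaps_self S, fun B hB h ↦ hS B hB h.symm⟩, fun A hA ↦ ⟨hS A hA, hL A hA⟩⟩

lemma IsLaminar.eq_of_insert_mem (hL : IsLaminar L)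
    (hne : ∀ A ∈ L, A.Nonempty) {m : α} {A B : Finset α} (hA : A ∈ L) (hmA : m ∉ A)
    (hA' : insert m A ∈ L) (hB : B ∈ L) (hmB : m ∉ B) (hB' : insert m B ∈ L) : A = B := by
  have key {A B : Finset α} (hA : A ∈ L) (hmA : m ∉ A) (hA' : insert m A ∈ L) (hB : B ∈ L)
      (hmB : m ∉ B) (hAB : insert m A ⊆ insert m B) : A = B := by
    have hAB : A ⊆ B := (Finset.insert_subset_insert_iff hmA).mp hAB
    obtain ⟨a, ha⟩ := hne A hA
    rcases not_overlaps_iff.mp (hL _ hA' _ hB) with h | h | h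
    · exact absurd (h (Finset.mem_insert_self m A)) hmB
    · exact hAB.antisymm ((Finset.subset_insert_iff_of_notMem hmB).mp h)
    · exact absurd (hAB ha) (Finset.disjoint_left.mp h (Finset.mem_insert_of_mem ha))
  rcases not_overlaps_iff.mp (hL _ hA' _ hB') with h | h | h
  · exact key hA hmA hA' hB hmB h
  · exact (key hB hmB hB' hA hmA h).symm
  · exact absurd (Finset.mem_insert_self m B)
      (Finset.disjoint_left.mp h (Finset.mem_insert_self m A))

lemma IsLaminar.image_erase (hL : IsLaminar L) (m : α) :
    IsLaminar (L.image (·.erase m)) := by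
  simp only [IsLaminar, Finset.forall_mem_image]
  intro A hA B hB
  rw [not_overlaps_iff]
  rcases not_overlaps_iff.mp (hL A hA B hB) with h | h | h
  · exact .inl (Finset.erase_subset_erase m h)
  · exact .inr (.inl (Finset.erase_subset_erase m h))
  · exact .inr (.inr (h.mono (Finset.erase_subset _ _) (Finset.erase_subset _ _)))

/-- Deleting a point `m` identifies at most one pair of members, and empties at most one. -/
lemma IsLaminar.card_le_card_image_erase (hL : IsLaminar L)
    (hne : ∀ A ∈ L, A.Nonempty) (m : α) :
    L.card ≤ ((L.image (·.erase m)).erase ∅).card + 2 := by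
  let twins := L.filter fun A ↦ m ∉ A ∧ insert m A ∈ L
  have htwins : twins.card ≤ 1 := by
    rw [Finset.card_le_one]
    intro A hA B hB
    obtain ⟨hA, hmA, hA'⟩ := Finset.mem_filter.mp hA
    obtain ⟨hB, hmB, hB'⟩ := Finset.mem_filter.mp hB
    exact hL.eq_of_insert_mem hne hA hmA hA' hB hmB hB'
  have hinj : Set.InjOn (fun A : Finset α ↦ A.erase m) (L \ twins : Finset (Finset α)) := by
    intro A hA B hB (hAB : A.erase m = B.erase m)
    simp only [twins, Finset.coe_sdiff, Finset.coe_filter, Set.mem_sdiff, Finset.mem_coe,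
      Set.mem_ofPred_eq, not_and] at hA hB
    by_cases hmA : m ∈ A <;> by_cases hmB : m ∈ B
    · rw [← Finset.insert_erase hmA, ← Finset.insert_erase hmB, hAB]
    · rw [Finset.erase_eq_of_notMem hmB] at hAB
      exact absurd (by rw [← hAB, Finset.insert_erase hmA]; exact hA.1) (hB.2 hB.1 hmB)
    · rw [Finset.erase_eq_of_notMem hmA] at hAB
      exact absurd (by rw [hAB, Finset.insert_erase hmB]; exact hB.1) (hA.2 hA.1 hmA)
    · rwa [Finset.erase_eq_of_notMem hmA, Finset.erase_eq_of_notMem hmB] at hAB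
  have hsub : (L \ twins).card ≤ (L.image (·.erase m)).card := by
    rw [← Finset.card_image_of_injOn hinj]
    exact Finset.card_le_card (Finset.image_subset_image Finset.sdiff_subset)
  have herase := Finset.pred_card_le_card_erase (s := L.image (·.erase m)) (a := ∅)
  have hsplit : L.card ≤ (L \ twins).card + twins.card := Finset.card_le_card_sdiff_add_card
  omega

lemma IsLaminar.overlapCount_inter_lt (hL : IsLaminar L) (hA : A ∈ L) (hAS : Overlaps A S) :
    overlapCount L (A ∩ S) < overlapCount L S := by
  refine overlapCount_lt_of_subset hA hAS (fun h ↦ h.2.2 Finset.inter_subset_left) ?_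
  rintro B hB ⟨hmeet, hBT, hTB⟩
  rcases not_overlaps_iff.mp (hL B hB A hA) with h | h | h
  · exact ⟨fun hd ↦ hmeet (hd.mono_right Finset.inter_subset_right),
      fun hs ↦ hBT (Finset.subset_inter h hs), fun hs ↦ hAS.2.2 (hs.trans h)⟩
  · exact absurd (Finset.inter_subset_left.trans h) hTB
  · exact absurd (h.mono_right Finset.inter_subset_left) hmeet

lemma IsLaminar.overlapCount_union_lt (hL : IsLaminar L) (hA : A ∈ L) (hAS : Overlaps A S) :
    overlapCount L (A ∪ S) < overlapCount L S := by
  refine overlapCount_lt_of_subset hA hAS (fun h ↦ h.2.1 Finset.subset_union_left) ?_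
  rintro B hB ⟨hmeet, hBT, hTB⟩
  have hBS : ¬ B ⊆ S := fun hs ↦ hBT (hs.trans Finset.subset_union_right)
  rcases not_overlaps_iff.mp (hL B hB A hA) with h | h | h
  · exact absurd (h.trans Finset.subset_union_left) hBT
  · exact ⟨fun hd ↦ hAS.1 (hd.mono_left h), hBS, fun hs ↦ hTB (Finset.union_subset h hs)⟩
  · exact ⟨fun hd ↦ hmeet (Finset.disjoint_union_right.mpr ⟨h, hd⟩), hBS,
      fun hs ↦ hAS.1 (h.symm.mono_right hs)⟩

end Laminar

theorem IsLaminar.card_le {α : Type*} {L : Finset (Finset α)} (hL : IsLaminar L) {M : Finset α}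
    (hne : ∀ A ∈ L, A.Nonempty) (hM : ∀ A ∈ L, A ⊆ M) : L.card ≤ 2 * M.card := by
  classical
  induction M using Finset.induction_on generalizing L with
  | empty =>
    rw [Finset.eq_empty_of_forall_notMem fun A hA ↦
      (hne A hA).ne_empty (Finset.subset_empty.mp (hM A hA))]
    simp
  | insert m M hm ih =>
    have hcard := ih (L := (L.image (·.erase m)).erase ∅)
      (fun A hA B hB ↦
        hL.image_erase m A (Finset.mem_of_mem_erase hA) B (Finset.mem_of_mem_erase hB))
      (fun A hA ↦ Finset.nonempty_iff_ne_empty.mpr (Finset.ne_of_mem_erase hA))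
      (fun A hA ↦ by
        obtain ⟨B, hB, rfl⟩ := Finset.mem_image.mp (Finset.mem_of_mem_erase hA)
        exact Finset.subset_insert_iff.mp (hM B hB))
    have := hL.card_le_card_image_erase hne m
    rw [Finset.card_insert_of_notMem hm]
    omega

section CutForms

variable {V : Type*}

/-- The pair `e` has exactly one end in `S`, i.e. it belongs to `δ(S)`. -/
def Crosses (S : Finset V) (e : Sym2 V) : Prop :=
  ∃ a b, e = s(a, b) ∧ a ∈ S ∧ b ∉ S

lemma crosses_mk {S : Finset V} {a b : V} :
    Crosses S s(a, b) ↔ (a ∈ S ∧ b ∉ S) ∨ (b ∈ S ∧ a ∉ S) := by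
  constructor
  · rintro ⟨c, d, h, hc, hd⟩
    rcases Sym2.eq_iff.mp h with ⟨rfl, rfl⟩ | ⟨rfl, rfl⟩
    · exact .inl ⟨hc, hd⟩
    · exact .inr ⟨hc, hd⟩
  · rintro (h | h)
    · exact ⟨a, b, rfl, h⟩
    · exact ⟨b, a, Sym2.eq_swap, h⟩

open Classical in
/-- The indicator function of the cut `δ(S)`. -/
noncomputable def cutIndicator (S : Finset V) (e : Sym2 V) : ℝ :=
  if Crosses S e then 1 else 0

lemma cutIndicator_submodular [DecidableEq V] (A B : Finset V) (e : Sym2 V) :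
    cutIndicator (A ∩ B) e + cutIndicator (A ∪ B) e ≤ cutIndicator A e + cutIndicator B e := by
  induction e using Sym2.ind with
  | _ a b =>
    simp only [cutIndicator, crosses_mk, Finset.mem_inter, Finset.mem_union]
    by_cases a ∈ A <;> by_cases b ∈ A <;> by_cases a ∈ B <;> by_cases b ∈ B <;> simp_all

variable [Fintype V]

/-- The weight `x(δ(S))` of a cut, as a linear form in `x`. -/
noncomputable def cutWeight (S : Finset V) : (Sym2 V → ℝ) →ₗ[ℝ] ℝ :=
  ∑ e, cutIndicator S e • LinearMap.proj e

lemma cutWeight_apply (S : Finset V) (x : Sym2 V → ℝ) :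
    cutWeight S x = ∑ e, cutIndicator S e * x e := by
  simp [cutWeight]

/-- The Held-Karp constraints on the complete graph, with every cut described by its side avoiding
the root `r`. -/
structure IsCutCover (r : V) (x : Sym2 V → ℝ) : Prop where
  nonneg : ∀ e, 0 ≤ x e
  two_le_cutWeight : ∀ S : Finset V, S.Nonempty → r ∉ S → 2 ≤ cutWeight S x

/-- The cuts whose Held-Karp constraint holds with equality at `x`. -/
def IsTightCut (r : V) (x : Sym2 V → ℝ) (S : Finset V) : Prop :=
  S.Nonempty ∧ r ∉ S ∧ cutWeight S x = 2

variable {r : V} {x : Sym2 V → ℝ}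

lemma IsTightCut.uncross [DecidableEq V] (hx : IsCutCover r x) {A B : Finset V}
    (hA : IsTightCut r x A) (hB : IsTightCut r x B) (hAB : (A ∩ B).Nonempty) :
    IsTightCut r x (A ∩ B) ∧ IsTightCut r x (A ∪ B) ∧ ∀ z : Sym2 V → ℝ, (∀ e, x e = 0 → z e = 0) →
      cutWeight A z + cutWeight B z = cutWeight (A ∩ B) z + cutWeight (A ∪ B) z := by
  let gap (e : Sym2 V) : ℝ :=
    cutIndicator A e + cutIndicator B e - cutIndicator (A ∩ B) e - cutIndicator (A ∪ B) e
  have hgap (y : Sym2 V → ℝ) : ∑ e, gap e * y e =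
      cutWeight A y + cutWeight B y - cutWeight (A ∩ B) y - cutWeight (A ∪ B) y := by
    simp only [gap, cutWeight_apply, sub_mul, add_mul, Finset.sum_sub_distrib,
      Finset.sum_add_distrib]
  have hnonneg : ∀ e ∈ Finset.univ, 0 ≤ gap e * x e := fun e _ ↦
    mul_nonneg (by linarith [cutIndicator_submodular A B e]) (hx.nonneg e)
  have hrI : r ∉ A ∩ B := fun h ↦ hA.2.1 (Finset.mem_inter.mp h).1
  have hrU : r ∉ A ∪ B := fun h ↦ (Finset.mem_union.mp h).elim hA.2.1 hB.2.1
  have hneU : (A ∪ B).Nonempty := hA.1.mono Finset.subset_union_left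
  have hI := hx.two_le_cutWeight _ hAB hrI
  have hU := hx.two_le_cutWeight _ hneU hrU
  have hsum : 0 ≤ ∑ e, gap e * x e := Finset.sum_nonneg hnonneg
  have htightA := hA.2.2
  have htightB := hB.2.2
  rw [hgap] at hsum
  refine ⟨⟨hAB, hrI, by linarith⟩, ⟨hneU, hrU, by linarith⟩, fun z hz ↦ ?_⟩
  have hzero : ∑ e, gap e * x e = 0 := by
    rw [hgap]
    linarith
  have hgapz : ∑ e, gap e * z e = 0 := Finset.sum_eq_zero fun e he ↦ by
    rcases mul_eq_zero.mp ((Finset.sum_eq_zero_iff_of_nonneg hnonneg).mp hzero e he) with h | h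
    · rw [h, zero_mul]
    · rw [hz e h, mul_zero]
  rw [hgap] at hgapz
  linarith

/-- Uncrossing: on vectors supported where `x` is, the forms of a maximal laminar family of tight
cuts span those of all tight cuts. -/
lemma IsTightCut.cutWeight_eq_zero (hx : IsCutCover r x) {L : Finset (Finset V)}
    (hL : IsLaminar L) (htight : ∀ A ∈ L, IsTightCut r x A)
    (hmax : ∀ S, IsTightCut r x S → (∀ A ∈ L, ¬ Overlaps A S) → S ∈ L)
    {z : Sym2 V → ℝ} (hzx : ∀ e, x e = 0 → z e = 0) (hz : ∀ A ∈ L, cutWeight A z = 0)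
    {S : Finset V} (hS : IsTightCut r x S) : cutWeight S z = 0 := by
  classical
  induction hm : overlapCount L S using Nat.strong_induction_on generalizing S with
  | _ m ih =>
    by_cases hno : ∀ A ∈ L, ¬ Overlaps A S
    · exact hz S (hmax S hS hno)
    push Not at hno
    obtain ⟨A, hA, hAS⟩ := hno
    obtain ⟨hI, hU, hz_uncross⟩ := (htight A hA).uncross hx hS
      (Finset.not_disjoint_iff_nonempty_inter.mp hAS.1)
    have hzI := ih _ (hm ▸ hL.overlapCount_inter_lt hA hAS) hI rfl
    have hzU := ih _ (hm ▸ hL.overlapCount_union_lt hA hAS) hU rfl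
    linarith [hz A hA, hz_uncross z hzx]

lemma exists_maximal_laminar_tightCuts (r : V) (x : Sym2 V → ℝ) :
    ∃ L : Finset (Finset V), IsLaminar L ∧ (∀ A ∈ L, IsTightCut r x A) ∧
      ∀ S, IsTightCut r x S → (∀ A ∈ L, ¬ Overlaps A S) → S ∈ L := by
  classical
  obtain ⟨L, ⟨hL, htight⟩, hmax⟩ := (Set.toFinite
    {L : Finset (Finset V) | IsLaminar L ∧ ∀ A ∈ L, IsTightCut r x A}).exists_maximal
    ⟨∅, by simp [IsLaminar]⟩
  refine ⟨L, hL, htight, fun S hS hno ↦ ?_⟩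
  have hinsert : ∀ A ∈ insert S L, IsTightCut r x A := by
    simpa using And.intro hS htight
  exact hmax ⟨hL.insert_of_not_overlaps hno, hinsert⟩ (Finset.subset_insert S L)
    (Finset.mem_insert_self S L)

theorem IsCutCover.exists_sparse (hx : IsCutCover r x) :
    ∃ y, IsCutCover r y ∧ ∑ e, y e ≤ ∑ e, x e ∧ (∀ e, x e = 0 → y e = 0) ∧
      {e | y e ≠ 0}.ncard ≤ 2 * (Fintype.card V - 1) := by
  classical
  let form : Sym2 V ⊕ {S : Finset V // S.Nonempty ∧ r ∉ S} → (Sym2 V → ℝ) →ₗ[ℝ] ℝ :=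
    Sum.elim LinearMap.proj fun S ↦ cutWeight S.1
  let bound : Sym2 V ⊕ {S : Finset V // S.Nonempty ∧ r ∉ S} → ℝ := Sum.elim 0 2
  let total : (Sym2 V → ℝ) →ₗ[ℝ] ℝ := ∑ e, LinearMap.proj e
  have htotal (z : Sym2 V → ℝ) : total z = ∑ e, z e := by simp [total]
  have hbounded (z : Sym2 V → ℝ) (hz : ∀ k, 0 ≤ form k z) (hle : total z ≤ 0) : z = 0 := by
    have hz₀ : 0 ≤ z := fun e ↦ hz (.inl e)
    exact (Fintype.sum_eq_zero_iff_of_nonneg hz₀).mp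
      (le_antisymm (htotal z ▸ hle) (Finset.sum_nonneg fun e _ ↦ hz₀ e))
  have hfeas : ∀ k, bound k ≤ form k x := by
    rintro (e | ⟨S, hS, hr⟩)
    · exact hx.nonneg e
    · exact hx.two_le_cutWeight S hS hr
  obtain ⟨y, ⟨hy, hbasic⟩, hcost, htight⟩ := exists_isBasicSolution_le total hbounded hfeas
  have hcover : IsCutCover r y :=
    ⟨fun e ↦ hy (.inl e), fun S hS hr ↦ hy (.inr ⟨S, hS, hr⟩)⟩
  refine ⟨y, hcover, by rwa [htotal, htotal] at hcost, fun e ↦ htight (.inl e), ?_⟩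
  obtain ⟨L, hL, hLtight, hLmax⟩ := exists_maximal_laminar_tightCuts r y
  have hLcard : L.card ≤ 2 * (Fintype.card V - 1) := by
    have hsub (A : Finset V) (hA : A ∈ L) : A ⊆ Finset.univ.erase r :=
      Finset.subset_erase.mpr ⟨Finset.subset_univ A, (hLtight A hA).2.1⟩
    simpa [Finset.card_erase_of_mem] using hL.card_le (fun A hA ↦ (hLtight A hA).1) hsub
  rw [Set.ncard_eq_toFinset_card']
  refine (card_support_le_card_forms _ L cutWeight fun z hz hzL ↦ hbasic z ?_).trans hLcard
  have hzy (e : Sym2 V) (he : y e = 0) : z e = 0 := hz e (by simp [he])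
  rintro (e | ⟨S, hS, hr⟩) hk
  · exact hzy e hk
  · exact IsTightCut.cutWeight_eq_zero hcover hL hLtight hLmax hzy hzL ⟨hS, hr, hk⟩

end CutForms

section Joins

variable {V W E : Type*}

lemma zmod_two_eq_zero_or_one (x : ZMod 2) : x = 0 ∨ x = 1 := by
  revert x; decide

/-- The endpoints of an edge, counted modulo two; a loop contributes zero. -/
noncomputable def endpointParity : Sym2 V → V →₀ ZMod 2 :=
  Sym2.lift ⟨fun a b ↦ .single a 1 + .single b 1, fun _ _ ↦ add_comm _ _⟩

lemma endpointParity_mk (a b : V) :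
    endpointParity s(a, b) = .single a 1 + .single b 1 := rfl

lemma endpointParity_diag (a : V) : endpointParity s(a, a) = 0 :=
  ZModModule.add_self _

lemma endpointParity_apply_left {a b : V} (h : a ≠ b) : endpointParity s(a, b) a = 1 := by
  simp [endpointParity_mk, Finsupp.single_eq_of_ne h]

lemma endpointParity_apply_of_ne {a b v : V} (ha : v ≠ a) (hb : v ≠ b) :
    endpointParity s(a, b) v = 0 := by
  simp [endpointParity_mk, Finsupp.single_eq_of_ne ha, Finsupp.single_eq_of_ne hb]

lemma endpointParity_add (a b c : V) :
    endpointParity s(a, b) + endpointParity s(b, c) = endpointParity s(a, c) :=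
  ZModModule.add_add_add_cancel _ _ _

lemma endpointParity_map (φ : V → W) (e : Sym2 V) :
    endpointParity (e.map φ) = (endpointParity e).mapDomain φ := by
  induction e with | _ a b => simp [endpointParity_mk, Finsupp.mapDomain_add]

open Classical in
lemma sum_endpointParity (U : Finset V) (e : Sym2 V) :
    ∑ v ∈ U, endpointParity e v = if Crosses U e then 1 else 0 := by
  induction e with | _ a b =>
  simp only [endpointParity_mk, Finsupp.add_apply, Finset.sum_add_distrib, Finsupp.single_apply,
    Finset.sum_ite_eq, crosses_mk]
  by_cases ha : a ∈ U <;> by_cases hb : b ∈ U <;> simp [ha, hb, ZModModule.add_self]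

lemma crosses_singleton {b : V} {e : Sym2 V} :
    Crosses {b} e ↔ ∃ c, c ≠ b ∧ e = s(b, c) := by
  simp only [Crosses, Finset.mem_singleton]
  exact ⟨fun ⟨_, c, he, ha, hc⟩ ↦ ⟨c, hc, ha ▸ he⟩, fun ⟨c, hc, he⟩ ↦ ⟨b, c, he, rfl, hc⟩⟩

lemma not_isDiag_of_crosses {U : Finset V} {e : Sym2 V} (h : Crosses U e) : ¬ e.IsDiag := by
  obtain ⟨a, b, rfl, ha, hb⟩ := h
  exact fun hdiag : a = b ↦ hb (hdiag ▸ ha)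

lemma not_crosses_singleton {a b v : V} (ha : a ≠ v) (hb : b ≠ v) :
    ¬ Crosses {v} s(a, b) := by
  simp [crosses_mk, ha, hb]

/-- The mod-two boundary of a set of edges of the multigraph with edge type `E` and endpoint map
`ends`: the set of vertices of odd degree, as a vector over `ZMod 2`. -/
noncomputable def boundary (ends : E → Sym2 V) (X : Finset E) : V →₀ ZMod 2 :=
  ∑ e ∈ X, endpointParity (ends e)

/-- `X` is an `a`-`b` join: `a` and `b` are its only vertices of odd degree. A join with `a = b`
is an even set of edges. -/
def IsJoin (ends : E → Sym2 V) (X : Finset E) (a b : V) : Prop :=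
  boundary ends X = endpointParity s(a, b)

open Classical in
/-- The edges of `X` in the cut `δ(U)`. -/
noncomputable def cutEdges (ends : E → Sym2 V) (X : Finset E) (U : Finset V) : Finset E :=
  X.filter fun e ↦ Crosses U (ends e)

/-- A circuit: an inclusion-minimal nonempty even set of edges. -/
structure IsCircuit (ends : E → Sym2 V) (Z : Finset E) : Prop where
  nonempty : Z.Nonempty
  boundary_eq_zero : boundary ends Z = 0
  eq_of_subset : ∀ Y ⊆ Z, Y.Nonempty → boundary ends Y = 0 → Y = Z

variable {ends : E → Sym2 V} {X Y Z : Finset E} {a b c u v : V} {e : E}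

lemma mem_cutEdges {U : Finset V} :
    e ∈ cutEdges ends X U ↔ e ∈ X ∧ Crosses U (ends e) := by
  simp [cutEdges]

lemma cutEdges_subset (U : Finset V) : cutEdges ends X U ⊆ X :=
  fun _ he ↦ (mem_cutEdges.mp he).1

lemma cutEdges_mono (h : Y ⊆ X) (U : Finset V) : cutEdges ends Y U ⊆ cutEdges ends X U :=
  fun _ he ↦ mem_cutEdges.mpr ((mem_cutEdges.mp he).imp_left (@h _))

lemma exists_ends_eq_of_mem_cutEdges (h : e ∈ cutEdges ends X {b}) :
    ∃ c, c ≠ b ∧ ends e = s(b, c) :=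
  crosses_singleton.mp (mem_cutEdges.mp h).2

lemma sum_boundary (ends : E → Sym2 V) (X : Finset E) (U : Finset V) :
    ∑ v ∈ U, boundary ends X v = (cutEdges ends X U).card := by
  simp only [boundary, Finsupp.finsetSum_apply]
  rw [Finset.sum_comm]
  simp [sum_endpointParity, cutEdges]

lemma boundary_apply (ends : E → Sym2 V) (X : Finset E) (v : V) :
    boundary ends X v = (cutEdges ends X {v}).card := by
  simpa using sum_boundary ends X {v}

lemma even_card_cutEdges (h : boundary ends X = 0) (v : V) :
    Even (cutEdges ends X {v}).card := by
  rw [← ZMod.natCast_eq_zero_iff_even, ← boundary_apply, h, Finsupp.zero_apply]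

lemma exists_mem_of_boundary_apply_ne_zero (h : boundary ends X v ≠ 0) :
    ∃ e ∈ X, ∃ c, c ≠ v ∧ ends e = s(v, c) := by
  rw [boundary_apply] at h
  obtain ⟨e, he⟩ := Finset.card_ne_zero.mp
    fun h0 : (cutEdges ends X {v}).card = 0 ↦ h (by rw [h0, Nat.cast_zero])
  exact ⟨e, cutEdges_subset _ he, exists_ends_eq_of_mem_cutEdges he⟩

lemma boundary_empty : boundary ends ∅ = 0 := rfl

lemma boundary_singleton (ends : E → Sym2 V) (e : E) :
    boundary ends {e} = endpointParity (ends e) :=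
  Finset.sum_singleton _ _

lemma boundary_map (φ : V → W) (ends : E → Sym2 V) (X : Finset E) :
    boundary (Sym2.map φ ∘ ends) X = (boundary ends X).mapDomain φ := by
  simp only [boundary, Function.comp_apply, endpointParity_map, Finsupp.mapDomain_finsetSum]

lemma isJoin_self : IsJoin ends X a a ↔ boundary ends X = 0 := by
  rw [IsJoin, endpointParity_diag]

lemma IsJoin.symm (h : IsJoin ends X a b) : IsJoin ends X b a := by
  rwa [IsJoin, Sym2.eq_swap]

lemma isJoin_singleton (h : ends e = s(a, b)) : IsJoin ends {e} a b := by
  rw [IsJoin, boundary_singleton, h]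

lemma IsJoin.exists_mem (h : IsJoin ends X a b) (hab : a ≠ b) :
    ∃ e ∈ X, ∃ c, c ≠ a ∧ ends e = s(a, c) :=
  exists_mem_of_boundary_apply_ne_zero (by rw [h, endpointParity_apply_left hab]; exact one_ne_zero)

section DecidableEq

variable [DecidableEq E]

lemma boundary_union (h : Disjoint X Y) :
    boundary ends (X ∪ Y) = boundary ends X + boundary ends Y :=
  Finset.sum_union h

lemma boundary_sdiff (h : Y ⊆ X) :
    boundary ends (X \ Y) = boundary ends X + boundary ends Y := by
  rw [← ZModModule.sub_eq_add, eq_sub_iff_add_eq]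
  exact Finset.sum_sdiff h

lemma boundary_symmDiff (X Y : Finset E) :
    boundary ends (symmDiff X Y) = boundary ends X + boundary ends Y := by
  have hX : boundary ends X = _ := (Finset.sum_inter_add_sum_sdiff X Y _).symm
  have hY : boundary ends Y = _ := (Finset.sum_inter_add_sum_sdiff Y X _).symm
  rw [hX, hY, Finset.inter_comm Y X, add_comm (∑ e ∈ X ∩ Y, _), ZModModule.add_add_add_cancel]
  exact Finset.sum_union disjoint_sdiff_sdiff

lemma IsJoin.union (hX : IsJoin ends X a b) (hY : IsJoin ends Y b c) (h : Disjoint X Y) :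
    IsJoin ends (X ∪ Y) a c := by
  rw [IsJoin, boundary_union h, hX, hY, endpointParity_add]

lemma IsJoin.sdiff (hX : IsJoin ends X a b) (hY : IsJoin ends Y b c) (h : Y ⊆ X) :
    IsJoin ends (X \ Y) a c := by
  rw [IsJoin, boundary_sdiff h, hX, hY, endpointParity_add]

lemma IsJoin.insert (h : IsJoin ends Y b c) (he : e ∉ Y) (hends : ends e = s(a, b)) :
    IsJoin ends (insert e Y) a c :=
  Finset.insert_eq e Y ▸ (isJoin_singleton hends).union h (Finset.disjoint_singleton_left.mpr he)

lemma IsJoin.erase (h : IsJoin ends X a b) (he : e ∈ X) (hends : ends e = s(b, c)) :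
    IsJoin ends (X.erase e) a c :=
  Finset.sdiff_singleton_eq_erase e X ▸
    h.sdiff (isJoin_singleton hends) (Finset.singleton_subset_iff.mpr he)

lemma card_cutEdges_insert {U : Finset V} (he : e ∉ X) (hcross : Crosses U (ends e)) :
    (cutEdges ends (insert e X) U).card = (cutEdges ends X U).card + 1 := by
  classical
  rw [cutEdges, Finset.filter_insert, if_pos hcross,
    Finset.card_insert_of_notMem fun h ↦ he (Finset.mem_filter.mp h).1]
  congr!

lemma cutEdges_insert_of_not_crosses {U : Finset V} (hcross : ¬ Crosses U (ends e)) :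
    cutEdges ends (insert e X) U = cutEdges ends X U := by
  rw [cutEdges, Finset.filter_insert, if_neg hcross, cutEdges]

end DecidableEq

open scoped Classical in
/-- Walk along `X` from `a` until `B` is first reached. -/
theorem exists_subset_isJoin_of_forall_notMem {B : Set V} (ha : a ∉ B)
    (hX : boundary ends X a = 1) (hB : ∀ v, v ≠ a → v ∉ B → boundary ends X v = 0) :
    ∃ b ∈ B, ∃ Y ⊆ X, IsJoin ends Y a b ∧
      ∀ v ∈ B, (cutEdges ends Y {v}).card = if v = b then 1 else 0 := by
  classical
  induction X using Finset.strongInduction generalizing a with | _ X ih =>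
  obtain ⟨e, he, c, hca, hends⟩ := exists_mem_of_boundary_apply_ne_zero (hX.trans_ne one_ne_zero)
  by_cases hcB : c ∈ B
  · refine ⟨c, hcB, {e}, Finset.singleton_subset_iff.mpr he, isJoin_singleton hends, ?_⟩
    intro v hv
    simp only [cutEdges, Finset.filter_singleton, hends]
    split_ifs with hcross hvc hvc
    · rfl
    · exact absurd hcross (not_crosses_singleton (ne_of_mem_of_not_mem hv ha).symm (Ne.symm hvc))
    · exact absurd (crosses_singleton.mpr ⟨a, hvc ▸ hca.symm, hvc ▸ Sym2.eq_swap⟩) hcross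
    · rfl
  have herase : boundary ends (X.erase e) = boundary ends X + endpointParity s(c, a) := by
    rw [← Finset.sdiff_singleton_eq_erase, boundary_sdiff (Finset.singleton_subset_iff.mpr he),
      boundary_singleton, hends, Sym2.eq_swap]
  obtain ⟨b, hb, Y, hYX, hY, hcard⟩ := ih (X.erase e) (Finset.erase_ssubset he) hcB
    (by rw [herase, Finsupp.add_apply, hB c hca hcB, endpointParity_apply_left hca, zero_add])
    (fun v hvc hvB ↦ by
      rw [herase, Finsupp.add_apply]
      obtain rfl | hva := eq_or_ne v a
      · rw [hX, Sym2.eq_swap, endpointParity_apply_left hvc, ZModModule.add_self]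
      · rw [hB v hva hvB, endpointParity_apply_of_ne hvc hva, zero_add])
  have heY : e ∉ Y := fun h ↦ Finset.notMem_erase e X (hYX h)
  refine ⟨b, hb, insert e Y, Finset.insert_subset he (hYX.trans (Finset.erase_subset _ _)),
    hY.insert heY hends, fun v hv ↦ ?_⟩
  rw [cutEdges_insert_of_not_crosses, hcard v hv]
  rw [hends]
  exact not_crosses_singleton (ne_of_mem_of_not_mem hv ha).symm (ne_of_mem_of_not_mem hv hcB).symm

lemma IsJoin.exists_subset_card_cutEdges_eq_one (h : IsJoin ends X a b) (hab : a ≠ b) :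
    ∃ Y ⊆ X, IsJoin ends Y a b ∧ (cutEdges ends Y {b}).card = 1 := by
  obtain ⟨_, rfl, Y, hYX, hY, hcard⟩ := exists_subset_isJoin_of_forall_notMem (B := {b}) hab
    (by rw [h, endpointParity_apply_left hab])
    (fun v hva hvb ↦ by rw [h, endpointParity_apply_of_ne hva hvb])
  exact ⟨Y, hYX, hY, by simpa using hcard⟩

lemma exists_subset_isJoin_of_boundary_apply (h : boundary ends X b = 1) :
    ∃ u, u ≠ b ∧ boundary ends X u = 1 ∧ ∃ Y ⊆ X, IsJoin ends Y b u := by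
  obtain ⟨u, ⟨hub, hu⟩, Y, hYX, hY, -⟩ := exists_subset_isJoin_of_forall_notMem
    (B := {u | u ≠ b ∧ boundary ends X u = 1}) (fun hb ↦ hb.1 rfl) h
    (fun v hvb hv ↦ (zmod_two_eq_zero_or_one _).resolve_right fun h1 ↦ hv ⟨hvb, h1⟩)
  exact ⟨u, hub, hu, Y, hYX, hY⟩

lemma IsJoin.exists_subset_isJoin_or (h : IsJoin ends X u v) (huv : u ≠ v) (hub : u ≠ b) :
    ∃ Y ⊆ X, IsJoin ends Y u b ∨ (IsJoin ends Y u v ∧ cutEdges ends Y {b} = ∅) := by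
  classical
  obtain ⟨d, hd, Y, hYX, hY, hcard⟩ := exists_subset_isJoin_of_forall_notMem (B := {b, v})
    (a := u) (by simp [hub, huv]) (by rw [h, endpointParity_apply_left huv])
    (fun w hw hwB ↦ by
      rw [h, endpointParity_apply_of_ne hw fun hwv ↦ hwB (by simp [hwv])])
  obtain rfl | hne := eq_or_ne d b
  · exact ⟨Y, hYX, .inl hY⟩
  · obtain rfl : d = v := (Set.mem_insert_iff.mp hd).resolve_left hne
    refine ⟨Y, hYX, .inr ⟨hY, ?_⟩⟩
    simpa [hne.symm] using hcard b (by simp)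

lemma IsCircuit.card_cutEdges_eq_two (hZ : IsCircuit ends Z)
    (hne : (cutEdges ends Z {b}).Nonempty) : (cutEdges ends Z {b}).card = 2 := by
  classical
  obtain ⟨e, he⟩ := hne
  have heZ := cutEdges_subset _ he
  obtain ⟨c, hcb, hends⟩ := exists_ends_eq_of_mem_cutEdges he
  have hjoin : IsJoin ends (Z.erase e) b c :=
    (isJoin_self.mpr hZ.boundary_eq_zero).erase heZ hends
  obtain ⟨Y, hYZ, hY, hcard⟩ := hjoin.symm.exists_subset_card_cutEdges_eq_one hcb
  have heY : e ∉ Y := fun h ↦ Finset.notMem_erase e Z (hYZ h)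
  have hinsert : insert e Y = Z := hZ.eq_of_subset _
    (Finset.insert_subset heZ (hYZ.trans (Finset.erase_subset _ _))) (Finset.insert_nonempty _ _)
    (isJoin_self.mp (hY.insert heY hends))
  rw [← hinsert, card_cutEdges_insert heY (mem_cutEdges.mp he).2, hcard]

lemma IsCircuit.exists_subset_isJoin (hZ : IsCircuit ends Z) (hub : u ≠ b)
    (hu : (cutEdges ends Z {u}).Nonempty) (hb : (cutEdges ends Z {b}).Nonempty) :
    ∃ C ⊆ Z, IsJoin ends C u b := by
  classical
  obtain ⟨e, he⟩ := hu
  have heZ := cutEdges_subset _ he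
  obtain ⟨v, hvu, hends⟩ := exists_ends_eq_of_mem_cutEdges he
  obtain rfl | hvb := eq_or_ne v b
  · exact ⟨{e}, Finset.singleton_subset_iff.mpr heZ, isJoin_singleton hends⟩
  have hjoin : IsJoin ends (Z.erase e) u v :=
    (isJoin_self.mpr hZ.boundary_eq_zero).erase heZ hends
  obtain ⟨C, hCZ, hC | ⟨hC, hCb⟩⟩ := hjoin.exists_subset_isJoin_or hvu.symm hub
  · exact ⟨C, hCZ.trans (Finset.erase_subset _ _), hC⟩
  have heC : e ∉ C := fun h ↦ Finset.notMem_erase e Z (hCZ h)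
  have hinsert : insert e C = Z := hZ.eq_of_subset _
    (Finset.insert_subset heZ (hCZ.trans (Finset.erase_subset _ _))) (Finset.insert_nonempty _ _)
    (isJoin_self.mp (hC.symm.insert heC hends))
  obtain ⟨f, hf⟩ := hb
  obtain ⟨hfZ, hfcross⟩ := mem_cutEdges.mp hf
  obtain rfl | hfC := Finset.mem_insert.mp (hinsert ▸ hfZ)
  · exact absurd (hends ▸ hfcross) (not_crosses_singleton hub hvb)
  · exact absurd (mem_cutEdges.mpr ⟨hfC, hfcross⟩) (hCb ▸ Finset.notMem_empty f)

end Joins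

section Conservative

variable {V E : Type*} {ends : E → Sym2 V} {c : E → ℤ} {P X Y Z : Finset E} {a b u v : V} {e : E}

/-- A weighting is conservative when no even set of edges has negative weight. -/
def IsConservative (ends : E → Sym2 V) (c : E → ℤ) : Prop :=
  ∀ Z, boundary ends Z = 0 → 0 ≤ ∑ e ∈ Z, c e

open Classical in
/-- The weighting obtained from `c` by moving the weights of the nonloops at `b` one step towards
zero. -/
noncomputable def shiftAt (ends : E → Sym2 V) (c : E → ℤ) (b : V) (e : E) : ℤ :=
  c e - if Crosses {b} (ends e) then (c e).sign else 0

/-- An `a`-`b` join of least weight among all joins between two vertices, and among those with the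
fewest edges. -/
structure IsShortestJoin (ends : E → Sym2 V) (c : E → ℤ) (P : Finset E) (a b : V) : Prop where
  isJoin : IsJoin ends P a b
  le : ∀ u v Q, IsJoin ends Q u v →
    toLex (∑ e ∈ P, c e, P.card) ≤ toLex (∑ e ∈ Q, c e, Q.card)

lemma exists_isShortestJoin [Finite E] [Nonempty V] (ends : E → Sym2 V) (c : E → ℤ) :
    ∃ P a b, IsShortestJoin ends c P a b := by
  have a := Classical.arbitrary V
  obtain ⟨P, ⟨⟨a, b⟩, hP⟩, hmin⟩ := (Set.toFinite
    {P : Finset E | ∃ q : V × V, IsJoin ends P q.1 q.2}).exists_minimalFor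
    (fun P ↦ toLex (∑ e ∈ P, c e, P.card)) _ ⟨∅, (a, a), isJoin_self.mpr boundary_empty⟩
  exact ⟨P, a, b, hP, fun u v Q hQ ↦ (le_total _ _).elim id fun h ↦ hmin ⟨(u, v), hQ⟩ h⟩

namespace IsShortestJoin

lemma sum_le (hP : IsShortestJoin ends c P a b) (hX : IsJoin ends X u v) :
    ∑ e ∈ P, c e ≤ ∑ e ∈ X, c e :=
  Prod.Lex.monotone_fst _ _ (hP.le u v X hX)

lemma card_le (hP : IsShortestJoin ends c P a b) (hX : IsJoin ends X u v)
    (h : ∑ e ∈ X, c e ≤ ∑ e ∈ P, c e) : P.card ≤ X.card := by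
  rcases Prod.Lex.le_iff.mp (hP.le u v X hX) with h' | h'
  · exact absurd h h'.not_ge
  · exact h'.2

lemma sum_neg (hP : IsShortestJoin ends c P a b) (he : c e < 0) : ∑ e ∈ P, c e < 0 := by
  obtain ⟨⟨u, v⟩, huv⟩ := Sym2.mk_surjective (ends e)
  have := hP.sum_le (isJoin_singleton huv.symm)
  rw [Finset.sum_singleton] at this
  lia

lemma ne (hP : IsShortestJoin ends c P a b) (hc : IsConservative ends c)
    (hneg : ∑ e ∈ P, c e < 0) : a ≠ b := by
  rintro rfl
  exact hneg.not_ge (hc P (isJoin_self.mp hP.isJoin))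

lemma eq_of_subset (hP : IsShortestJoin ends c P a b) (hc : IsConservative ends c) (hYP : Y ⊆ P)
    (hY : IsJoin ends Y a b) : Y = P := by
  classical
  have hdiff := hc (P \ Y) (isJoin_self.mp (hP.isJoin.sdiff hY.symm hYP))
  have hsum := Finset.sum_sdiff (f := c) hYP
  exact Finset.eq_of_subset_of_card_le hYP (hP.card_le hY (by lia))

lemma mem_of_neg (hP : IsShortestJoin ends c P a b) (he : Crosses {b} (ends e)) (hneg : c e < 0) :
    e ∈ P := by
  classical
  by_contra heP
  obtain ⟨d, -, hends⟩ := crosses_singleton.mp he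
  have := hP.sum_le (hP.isJoin.symm.insert heP (hends.trans Sym2.eq_swap))
  rw [Finset.sum_insert heP] at this
  lia

lemma nonpos_of_mem (hP : IsShortestJoin ends c P a b) (he : e ∈ cutEdges ends P {b}) :
    c e ≤ 0 := by
  classical
  obtain ⟨d, -, hends⟩ := exists_ends_eq_of_mem_cutEdges he
  have heP := cutEdges_subset _ he
  have := hP.sum_le (hP.isJoin.erase heP hends)
  have := Finset.add_sum_erase P c heP
  lia

lemma card_cutEdges (hP : IsShortestJoin ends c P a b) (hc : IsConservative ends c) (hab : a ≠ b) :
    (cutEdges ends P {b}).card = 1 := by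
  obtain ⟨Y, hYP, hY, hcard⟩ := hP.isJoin.exists_subset_card_cutEdges_eq_one hab
  rwa [hP.eq_of_subset hc hYP hY] at hcard

lemma sum_neg_of_subset (hP : IsShortestJoin ends c P a b) (hYP : Y ⊆ P)
    (hY : IsJoin ends Y b u) (hub : u ≠ b) : ∑ e ∈ Y, c e < 0 := by
  classical
  obtain ⟨e, he, -⟩ := hY.exists_mem hub.symm
  have hjoin : IsJoin ends (P \ Y) a u := hP.isJoin.sdiff hY hYP
  have hsum := Finset.sum_sdiff (f := c) hYP
  by_contra! hnonneg
  have := hP.card_le hjoin (by lia)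
  have := Finset.card_lt_card (Finset.sdiff_ssubset hYP ⟨e, he⟩)
  lia

/-- Otherwise extending the join by an edge of the circuit at `b`, or closing up a part of the join
through the circuit, would give a shorter join or a negative even set. -/
theorem exists_mem_cutEdges_nonpos (hP : IsShortestJoin ends c P a b) (hc : IsConservative ends c)
    (hab : a ≠ b) (hZ : IsCircuit ends Z) (hZ0 : ∑ e ∈ Z, c e = 0)
    (hne : (cutEdges ends Z {b}).Nonempty) : ∃ e ∈ cutEdges ends Z {b}, c e ≤ 0 := by
  classical
  by_contra! hpos
  have hcut : cutEdges ends (P \ Z) {b} = cutEdges ends P {b} := by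
    refine (cutEdges_mono Finset.sdiff_subset _).antisymm fun f hf ↦ ?_
    obtain ⟨hfP, hcross⟩ := mem_cutEdges.mp hf
    exact mem_cutEdges.mpr ⟨Finset.mem_sdiff.mpr ⟨hfP, fun hfZ ↦
      (hP.nonpos_of_mem hf).not_gt (hpos f (mem_cutEdges.mpr ⟨hfZ, hcross⟩))⟩, hcross⟩
  obtain ⟨u, hub, hu, Y, hYPZ, hY⟩ := exists_subset_isJoin_of_boundary_apply
    (show boundary ends (P \ Z) b = 1 by
      rw [boundary_apply, hcut, hP.card_cutEdges hc hab, Nat.cast_one])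
  have hYP : Y ⊆ P := hYPZ.trans Finset.sdiff_subset
  have hYZ : Disjoint Y Z := Finset.disjoint_of_subset_left hYPZ Finset.sdiff_disjoint
  obtain rfl | hua := eq_or_ne u a
  · obtain rfl : Y = P := hP.eq_of_subset hc hYP hY.symm
    obtain ⟨e, he⟩ := hne
    obtain ⟨d, -, hends⟩ := exists_ends_eq_of_mem_cutEdges he
    have heZ : e ∈ Y ∪ Z := Finset.mem_union_right _ (cutEdges_subset _ he)
    have hle := hP.sum_le
      ((hP.isJoin.union (isJoin_self.mpr hZ.boundary_eq_zero) hYZ).erase heZ hends)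
    have hsum := Finset.add_sum_erase _ c heZ
    rw [Finset.sum_union hYZ] at hsum
    have := hpos e he
    lia
  · have hPZu : (cutEdges ends (P ∩ Z) {u}).Nonempty := by
      have hsplit : boundary ends (P ∩ Z) + boundary ends (P \ Z) = boundary ends P :=
        Finset.sum_inter_add_sum_sdiff P Z _
      have hodd := DFunLike.congr_fun hsplit u
      rw [Finsupp.add_apply, hu, hP.isJoin, endpointParity_apply_of_ne hua hub, boundary_apply]
        at hodd
      exact Finset.card_ne_zero.mp fun h0 ↦ by simp [h0] at hodd
    obtain ⟨C, hCZ, hC⟩ :=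
      hZ.exists_subset_isJoin hub (hPZu.mono (cutEdges_mono Finset.inter_subset_right _)) hne
    have hZC : IsJoin ends (Z \ C) u b :=
      ((isJoin_self.mpr hZ.boundary_eq_zero).sdiff hC.symm hCZ).symm
    have hYC : Disjoint Y C := Finset.disjoint_of_subset_right hCZ hYZ
    have hYZC : Disjoint Y (Z \ C) := Finset.disjoint_of_subset_right Finset.sdiff_subset hYZ
    have h₁ := hc (Y ∪ C) (isJoin_self.mp (hY.union hC hYC))
    have h₂ := hc (Y ∪ Z \ C) (isJoin_self.mp (hY.union hZC hYZC))
    rw [Finset.sum_union hYC] at h₁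
    rw [Finset.sum_union hYZC] at h₂
    have hneg := hP.sum_neg_of_subset hYP hY hub
    have hsum := Finset.sum_sdiff (f := c) hCZ
    lia

end IsShortestJoin

lemma sum_shiftAt (ends : E → Sym2 V) (c : E → ℤ) (b : V) (X : Finset E) :
    ∑ e ∈ X, shiftAt ends c b e = ∑ e ∈ X, c e - ∑ e ∈ cutEdges ends X {b}, (c e).sign := by
  simp [shiftAt, cutEdges, Finset.sum_sub_distrib, Finset.sum_filter]

lemma exists_isCircuit_of_not_isConservative [Finite E] (h : ¬ IsConservative ends c) :
    ∃ Z, IsCircuit ends Z ∧ ∑ e ∈ Z, c e < 0 := by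
  classical
  simp only [IsConservative, not_forall, not_le] at h
  obtain ⟨Z₀, hZ₀, hneg₀⟩ := h
  obtain ⟨Z, ⟨hZ, hneg⟩, hmin⟩ := (Set.toFinite
    {Z : Finset E | boundary ends Z = 0 ∧ ∑ e ∈ Z, c e < 0}).exists_minimal ⟨Z₀, hZ₀, hneg₀⟩
  have hsub : ∀ Y ⊆ Z, boundary ends Y = 0 → ∑ e ∈ Y, c e < 0 → Y = Z :=
    fun Y hYZ hY hYneg ↦ hYZ.antisymm (hmin ⟨hY, hYneg⟩ hYZ)
  refine ⟨Z, ⟨Finset.nonempty_iff_ne_empty.mpr ?_, hZ, fun Y hYZ hYne hY ↦ ?_⟩, hneg⟩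
  · rintro rfl
    simp at hneg
  · by_contra hne
    have hY0 : 0 ≤ ∑ e ∈ Y, c e := not_lt.mp fun h ↦ hne (hsub Y hYZ hY h)
    have hZY0 : 0 ≤ ∑ e ∈ Z \ Y, c e := not_lt.mp fun h ↦
      (Finset.sdiff_ssubset hYZ hYne).ne
        (hsub _ Finset.sdiff_subset (by rw [boundary_sdiff hYZ, hZ, hY, add_zero]) h)
    have hsum := Finset.sum_sdiff (f := c) hYZ
    lia

/-- The shift lowers the weight of a circuit by at most two, and this weight is even. -/
lemma IsCircuit.sum_eq_zero_of_sum_shiftAt_neg (hZ : IsCircuit ends Z)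
    (hc : 0 ≤ ∑ e ∈ Z, c e) (heven : Even (∑ e ∈ Z, c e))
    (hneg : ∑ e ∈ Z, shiftAt ends c b e < 0) :
    ∑ e ∈ Z, c e = 0 ∧ (cutEdges ends Z {b}).Nonempty ∧
      ∀ e ∈ cutEdges ends Z {b}, c e ≠ 0 → 0 < c e := by
  classical
  rw [sum_shiftAt] at hneg
  have hne : (cutEdges ends Z {b}).Nonempty := by
    refine Finset.nonempty_iff_ne_empty.mpr fun h ↦ ?_
    rw [h, Finset.sum_empty] at hneg
    lia
  obtain ⟨e, f, hef, hpair⟩ := Finset.card_eq_two.mp (hZ.card_cutEdges_eq_two hne)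
  rw [hpair, Finset.sum_pair hef] at hneg
  obtain ⟨k, hk⟩ := heven
  have hsign : ∀ n : ℤ, n.sign = 1 ∧ 0 < n ∨ n.sign = 0 ∧ n = 0 ∨ n.sign = -1 ∧ n < 0 := by
    intro n
    rcases lt_trichotomy n 0 with h | h | h
    · exact .inr (.inr ⟨Int.sign_eq_neg_one_of_neg h, h⟩)
    · exact .inr (.inl ⟨by rw [h, Int.sign_zero], h⟩)
    · exact .inl ⟨Int.sign_eq_one_of_pos h, h⟩
  have he := hsign (c e)
  have hf := hsign (c f)
  refine ⟨by lia, hne, ?_⟩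
  simp only [hpair, Finset.mem_insert, Finset.mem_singleton, forall_eq_or_imp, forall_eq]
  lia

/-- Sebő's lemma on conservative weightings. -/
theorem IsConservative.exists_shiftAt [Fintype E] (hc : IsConservative ends c)
    (heven : ∀ Z, boundary ends Z = 0 → Even (∑ e ∈ Z, c e))
    (hc0 : ∀ e, ¬ (ends e).IsDiag → c e ≠ 0) (hneg : ∃ e, c e < 0) :
    ∃ b, ((cutEdges ends Finset.univ {b}).filter (c · < 0)).card = 1 ∧
      IsConservative ends (shiftAt ends c b) := by
  obtain ⟨e₀, he₀⟩ := hneg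
  have : Nonempty V := ⟨(ends e₀).out.1⟩
  obtain ⟨P, a, b, hP⟩ := exists_isShortestJoin ends c
  have hab : a ≠ b := hP.ne hc (hP.sum_neg he₀)
  have hne0 : ∀ X, ∀ e ∈ cutEdges ends X {b}, c e ≠ 0 := fun X e he ↦ by
    obtain ⟨d, hd, hends⟩ := exists_ends_eq_of_mem_cutEdges he
    exact hc0 e (by rwa [hends, Sym2.mk_isDiag_iff, eq_comm])
  refine ⟨b, ?_, by_contra fun h ↦ ?_⟩
  · rw [← hP.card_cutEdges hc hab]
    congr 1
    ext f
    rw [Finset.mem_filter]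
    refine ⟨fun ⟨hf, hf0⟩ ↦ ?_, fun hf ↦ ⟨cutEdges_mono (Finset.subset_univ P) _ hf,
      (hP.nonpos_of_mem hf).lt_of_ne (hne0 P f hf)⟩⟩
    have hcross := (mem_cutEdges.mp hf).2
    exact mem_cutEdges.mpr ⟨hP.mem_of_neg hcross hf0, hcross⟩
  · obtain ⟨Z, hZ, hZneg⟩ := exists_isCircuit_of_not_isConservative h
    obtain ⟨hZ0, hne, hpos⟩ := hZ.sum_eq_zero_of_sum_shiftAt_neg (hc Z hZ.boundary_eq_zero)
      (heven Z hZ.boundary_eq_zero) hZneg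
    obtain ⟨e, he, hle⟩ := hP.exists_mem_cutEdges_nonpos hc hab hZ hZ0 hne
    exact hle.not_gt (hpos e he (hne0 Z e he))

end Conservative

section TJoin

variable {V E : Type*} {ends : E → Sym2 V} {J : Finset E} {p q : V} {f : E}

lemma sum_mapDomain_apply [Fintype V] [DecidableEq V] (φ : V → V) (T : V →₀ ZMod 2)
    (U : Finset V) :
    ∑ v ∈ U, T.mapDomain φ v = ∑ v with φ v ∈ U, T v := by
  induction T using Finsupp.induction_linear with
  | zero => simp
  | add S T hS hT => simp [Finsupp.mapDomain_add, Finset.sum_add_distrib, hS, hT]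
  | single v x => simp [Finsupp.mapDomain_single, Finsupp.single_apply]

lemma crosses_map [Fintype V] [DecidableEq V] (φ : V → V) (U : Finset V) (e : Sym2 V) :
    Crosses U (e.map φ) ↔ Crosses {v | φ v ∈ U} e := by
  induction e with | _ a b => simp [Sym2.map_mk, crosses_mk]

lemma cutEdges_map [Fintype V] [DecidableEq V] (φ : V → V) (ends : E → Sym2 V) (X : Finset E)
    (U : Finset V) :
    cutEdges (Sym2.map φ ∘ ends) X U = cutEdges ends X {v | φ v ∈ U} := by
  ext e
  simp [mem_cutEdges, crosses_map]

lemma eq_zero_or_eq_endpointParity_of_mapDomain_update [DecidableEq V] {T : V →₀ ZMod 2}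
    (h : T.mapDomain (Function.update id q p) = 0) : T = 0 ∨ T = endpointParity s(p, q) := by
  obtain rfl | hpq := eq_or_ne p q
  · have hid : Function.update id p p = (id : V → V) := Function.update_eq_self p id
    exact .inl (by rwa [hid, Finsupp.mapDomain_id] at h)
  have hfix : ∀ S : V →₀ ZMod 2, S q = 0 → S.mapDomain (Function.update id q p) = S := by
    intro S hS
    rw [Finsupp.mapDomain_congr (g := id), Finsupp.mapDomain_id]
    intro v hv
    refine Function.update_of_ne ?_ _ _
    rintro rfl
    exact Finsupp.mem_support_iff.mp hv hS
  have hpair : (endpointParity s(p, q)).mapDomain (Function.update id q p) = 0 := by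
    rw [← endpointParity_map, Sym2.map_mk, Function.update_self, Function.update_of_ne hpq]
    exact endpointParity_diag p
  have hq : endpointParity s(p, q) q = 1 := by
    rw [Sym2.eq_swap, endpointParity_apply_left hpq.symm]
  rcases zmod_two_eq_zero_or_one (T q) with hT | hT
  · exact .inl (by rw [← hfix T hT, h])
  · have hsum := hfix (T + endpointParity s(p, q))
      (by rw [Finsupp.add_apply, hT, hq, ZModModule.add_self])
    rw [Finsupp.mapDomain_add, h, hpair, add_zero, ← ZModModule.sub_eq_add] at hsum
    exact .inr (sub_eq_zero.mp hsum.symm)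

lemma sum_symmDiff_singleton_of_eq_zero [DecidableEq E] {M : Type*} [AddCommMonoid M] {w : E → M}
    (hf : w f = 0) (X : Finset E) : ∑ e ∈ symmDiff X {f}, w e = ∑ e ∈ X, w e := by
  by_cases hfX : f ∈ X
  · rw [symmDiff_of_ge (Finset.singleton_subset_iff.mpr hfX), Finset.sdiff_singleton_eq_erase,
      Finset.sum_erase _ hf]
  · rw [(Finset.disjoint_singleton_right.mpr hfX).symmDiff_eq_sup, Finset.sup_eq_union,
      Finset.union_comm, ← Finset.insert_eq, Finset.sum_insert hfX, hf, zero_add]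

lemma exists_boundary_eq_of_contract [DecidableEq V] {M : Type*} [AddCommMonoid M] {w : E → M}
    (hends : ends f = s(p, q)) (hf : w f = 0) {X : Finset E} {T : V →₀ ZMod 2}
    (hX : boundary (Sym2.map (Function.update id q p) ∘ ends) X =
      T.mapDomain (Function.update id q p)) :
    ∃ Y, boundary ends Y = T ∧ ∑ e ∈ Y, w e = ∑ e ∈ X, w e := by
  classical
  rw [boundary_map] at hX
  rcases eq_zero_or_eq_endpointParity_of_mapDomain_update (q := q) (p := p)
    (T := boundary ends X - T) (by
      rw [ZModModule.sub_eq_add, Finsupp.mapDomain_add, hX, ZModModule.add_self]) with h | h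
  · exact ⟨X, sub_eq_zero.mp h, rfl⟩
  · refine ⟨symmDiff X {f}, ?_, sum_symmDiff_singleton_of_eq_zero hf X⟩
    rw [boundary_symmDiff, boundary_singleton, hends, ← h, ← ZModModule.sub_eq_add, sub_sub_cancel]

/-- The weighting `w` with its sign changed on `J`. -/
def flipOn [DecidableEq E] (J : Finset E) (w : E → ℕ) (e : E) : ℤ :=
  if e ∈ J then -w e else w e

lemma sum_flipOn [DecidableEq E] (J : Finset E) (w : E → ℕ) (X : Finset E) :
    ∑ e ∈ X, flipOn J w e = ∑ e ∈ symmDiff J X, (w e : ℤ) - ∑ e ∈ J, (w e : ℤ) := by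
  have hX := Finset.sum_inter_add_sum_sdiff X J (flipOn J w)
  have hJ := Finset.sum_inter_add_sum_sdiff J X fun e ↦ (w e : ℤ)
  have hsymm : ∑ e ∈ symmDiff J X, (w e : ℤ) = _ := Finset.sum_union disjoint_sdiff_sdiff
  have hinter : ∑ e ∈ X ∩ J, flipOn J w e = ∑ e ∈ X ∩ J, -(w e : ℤ) :=
    Finset.sum_congr rfl fun e he ↦ if_pos (Finset.mem_inter.mp he).2
  have hdiff : ∑ e ∈ X \ J, flipOn J w e = ∑ e ∈ X \ J, (w e : ℤ) :=
    Finset.sum_congr rfl fun e he ↦ if_neg (Finset.mem_sdiff.mp he).2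
  rw [Finset.sum_neg_distrib, Finset.inter_comm] at hinter
  rw [Finset.inter_comm] at hX
  lia

lemma even_sum_flipOn [DecidableEq E] {w : E → ℕ} {X : Finset E} (h : Even (∑ e ∈ X, w e)) :
    Even (∑ e ∈ X, flipOn J w e) := by
  have hcongr : ∑ e ∈ X, flipOn J w e ≡ ∑ e ∈ X, (w e : ℤ) [ZMOD 2] := by
    refine Int.ModEq.sum fun e _ ↦ ?_
    unfold flipOn
    split_ifs
    · exact (Int.modEq_iff_dvd.mpr ⟨w e, by ring⟩)
    · rfl
  rw [Int.even_iff, hcongr, ← Nat.cast_sum]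
  exact_mod_cast Nat.even_iff.mp h

open Classical in
/-- The weighting obtained from `w` by lowering the weights of the nonloops at `b` by one. -/
noncomputable def decreaseAt (ends : E → Sym2 V) (w : E → ℕ) (b : V) (e : E) : ℕ :=
  if Crosses {b} (ends e) then w e - 1 else w e

lemma sum_decreaseAt_add {w : E → ℕ} (hw : ∀ e, ¬ (ends e).IsDiag → w e ≠ 0) (b : V)
    (g : E → ℕ) (X : Finset E) :
    ∑ e ∈ X, g e * decreaseAt ends w b e + ∑ e ∈ cutEdges ends X {b}, g e = ∑ e ∈ X, g e * w e := by
  classical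
  rw [cutEdges, Finset.sum_filter, ← Finset.sum_add_distrib]
  refine Finset.sum_congr rfl fun e _ ↦ ?_
  unfold decreaseAt
  split_ifs with h
  · have := hw e (not_isDiag_of_crosses h)
    rw [← Nat.mul_succ, Nat.succ_eq_add_one, Nat.sub_add_cancel (Nat.pos_of_ne_zero this)]
  · rfl

lemma shiftAt_flipOn [DecidableEq E] {w : E → ℕ} (hw : ∀ e, ¬ (ends e).IsDiag → w e ≠ 0)
    (J : Finset E) (b : V) :
    shiftAt ends (flipOn J w) b = flipOn J (decreaseAt ends w b) := by
  ext e
  by_cases hb : Crosses {b} (ends e)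
  · obtain ⟨n, hn⟩ := Nat.exists_eq_succ_of_ne_zero (hw e (not_isDiag_of_crosses hb))
    by_cases heJ : e ∈ J
    · have hsign : (-((n.succ : ℕ) : ℤ)).sign = -1 := rfl
      simp only [shiftAt, flipOn, decreaseAt, hb, heJ, if_true, hn, hsign]
      lia
    · have hsign : ((n.succ : ℕ) : ℤ).sign = 1 := rfl
      simp only [shiftAt, flipOn, decreaseAt, hb, heJ, if_true, if_false, hn, hsign]
      lia
  · simp [shiftAt, flipOn, decreaseAt, hb]

/-- Sebő's lemma, applied to the conservative weighting that arises from `w` by changing its sign on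
the cheapest join `J`. -/
lemma exists_decreaseAt [Finite E] {w : E → ℕ}
    (hJ : ∀ K, boundary ends K = boundary ends J → ∑ e ∈ J, w e ≤ ∑ e ∈ K, w e)
    (heven : ∀ Z, boundary ends Z = 0 → Even (∑ e ∈ Z, w e))
    (hw : ∀ e, ¬ (ends e).IsDiag → w e ≠ 0) (hJ0 : ∑ e ∈ J, w e ≠ 0) :
    ∃ b, (cutEdges ends J {b}).card = 1 ∧ ∀ K, boundary ends K = boundary ends J →
      ∑ e ∈ J, decreaseAt ends w b e ≤ ∑ e ∈ K, decreaseAt ends w b e := by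
  classical
  cases nonempty_fintype E
  have hc : IsConservative ends (flipOn J w) := by
    intro Z hZ
    have h := hJ (symmDiff J Z) (by rw [boundary_symmDiff, hZ, add_zero])
    rw [sum_flipOn, sub_nonneg]
    exact_mod_cast h
  obtain ⟨e, he, hwe⟩ := Finset.exists_ne_zero_of_sum_ne_zero hJ0
  have hflip : ∀ e, ¬ (ends e).IsDiag → (flipOn J w e ≠ 0 ∧ (flipOn J w e < 0 ↔ e ∈ J)) := by
    intro e h
    have := hw e h
    unfold flipOn
    split_ifs with heJ <;> simp only [heJ, iff_true, iff_false] <;> lia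
  obtain ⟨b, hcard, hb⟩ := hc.exists_shiftAt (fun Z hZ ↦ even_sum_flipOn (heven Z hZ))
    (fun e h ↦ (hflip e h).1) ⟨e, by simp only [flipOn, he, if_true]; lia⟩
  refine ⟨b, ?_, fun K hK ↦ ?_⟩
  · rw [← hcard]
    congr 1
    ext f
    simp only [mem_cutEdges, Finset.mem_filter, Finset.mem_univ, true_and]
    rw [and_comm]
    exact and_congr_right fun h ↦ (hflip f (not_isDiag_of_crosses h)).2.symm
  · have h := hb (symmDiff J K) (by rw [boundary_symmDiff, hK, ZModModule.add_self])
    rw [shiftAt_flipOn hw, sum_flipOn, symmDiff_symmDiff_cancel_left, sub_nonneg] at h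
    exact_mod_cast h

open Classical in
lemma card_nonloops_contract_lt [Fintype E] (hends : ends f = s(p, q)) (hpq : p ≠ q) :
    (Finset.univ.filter fun e ↦
      ¬ ((Sym2.map (Function.update id q p) ∘ ends) e).IsDiag).card <
      (Finset.univ.filter fun e ↦ ¬ (ends e).IsDiag).card := by
  refine Finset.card_lt_card (Finset.ssubset_iff_subset_ne.mpr ⟨fun e he ↦ ?_, fun h ↦ ?_⟩)
  · simp only [Finset.mem_filter, Finset.mem_univ, true_and, Function.comp_apply] at he ⊢
    exact fun hdiag ↦ he hdiag.map
  · have hf : f ∈ Finset.univ.filter fun e ↦ ¬ (ends e).IsDiag := by simp [hends, hpq]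
    rw [← h] at hf
    simp [hends, hpq] at hf

theorem mul_sum_le_of_forall_cut [Finite V] [Fintype E] {k : ℕ} {w y : E → ℕ}
    (hJ : ∀ K, boundary ends K = boundary ends J → ∑ e ∈ J, w e ≤ ∑ e ∈ K, w e)
    (heven : ∀ Z, boundary ends Z = 0 → Even (∑ e ∈ Z, w e))
    (hcut : ∀ U : Finset V, ∑ v ∈ U, boundary ends J v = 1 →
      k ≤ ∑ e ∈ cutEdges ends Finset.univ U, y e) :
    k * ∑ e ∈ J, w e ≤ ∑ e, y e * w e := by
  classical
  cases nonempty_fintype V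
  induction hm : ∑ e, w e + (Finset.univ.filter fun e ↦ ¬ (ends e).IsDiag).card
    using Nat.strong_induction_on generalizing ends w with | _ m ih =>
  by_cases hJ0 : ∑ e ∈ J, w e = 0
  · simp [hJ0]
  by_cases hw : ∃ f, ¬ (ends f).IsDiag ∧ w f = 0
  · obtain ⟨f, hdiag, hwf⟩ := hw
    obtain ⟨p, q, hends⟩ : ∃ p q, ends f = s(p, q) :=
      (ends f).ind fun p q ↦ ⟨p, q, rfl⟩
    have hpq : p ≠ q := fun h ↦ hdiag (hends ▸ h)
    have hlt := card_nonloops_contract_lt hends hpq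
    refine ih _ ((Nat.add_lt_add_left hlt _).trans_eq hm)
      (fun K hK ↦ ?_) (fun Z hZ ↦ ?_) (fun U hU ↦ ?_) rfl
    · obtain ⟨K', hK', hwK⟩ :=
        exists_boundary_eq_of_contract hends hwf (hK.trans (boundary_map _ _ _))
      exact (hJ K' hK').trans_eq hwK
    · obtain ⟨Z', hZ', hwZ⟩ :=
        exists_boundary_eq_of_contract hends hwf (hZ.trans Finsupp.mapDomain_zero.symm)
      exact hwZ ▸ heven Z' hZ'
    · rw [boundary_map, sum_mapDomain_apply] at hU
      rw [cutEdges_map]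
      exact hcut _ hU
  · push Not at hw
    obtain ⟨b, hb, hmin⟩ := exists_decreaseAt hJ heven hw hJ0
    have hsum := fun X ↦ by simpa using sum_decreaseAt_add hw b 1 X
    have hpos : (cutEdges ends J {b}).card ≤ (cutEdges ends Finset.univ {b}).card :=
      Finset.card_le_card (cutEdges_mono (Finset.subset_univ J) _)
    have hy := sum_decreaseAt_add hw b y Finset.univ
    have hcutb := hcut {b} (by rw [Finset.sum_singleton, boundary_apply, hb, Nat.cast_one])
    have hind := ih _ (by have := hsum Finset.univ; lia) hmin (fun Z hZ ↦ ?_) hcut rfl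
    · rw [← hsum J, hb, mul_add, mul_one, ← hy]
      exact add_le_add hind hcutb
    · exact (Nat.even_add.mp (hsum Z ▸ heven Z hZ)).mpr (even_card_cutEdges hZ b)

theorem exists_tJoin_mul_sum_le [Finite V] [Fintype E] {k : ℕ} {y : E → ℕ} (w : E → ℕ)
    {N : Finset E} (hcut : ∀ U : Finset V, ∑ v ∈ U, boundary ends N v = 1 →
      k ≤ ∑ e ∈ cutEdges ends Finset.univ U, y e) :
    ∃ J, boundary ends J = boundary ends N ∧ k * ∑ e ∈ J, w e ≤ ∑ e, y e * w e := by
  obtain ⟨J, hJ, hmin⟩ := (Set.toFinite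
    {J : Finset E | boundary ends J = boundary ends N}).exists_minimalFor
    (fun J ↦ ∑ e ∈ J, w e) _ ⟨N, rfl⟩
  replace hJ : boundary ends J = boundary ends N := hJ
  have hmin' : ∀ K, boundary ends K = boundary ends J → ∑ e ∈ J, w e ≤ ∑ e ∈ K, w e :=
    fun K hK ↦ (le_total _ _).elim id fun h ↦ hmin (hK.trans hJ) h
  have h := mul_sum_le_of_forall_cut (w := fun e ↦ 2 * w e)
    (fun K hK ↦ by simpa only [← Finset.mul_sum] using Nat.mul_le_mul_left 2 (hmin' K hK))
    (fun Z _ ↦ by rw [← Finset.mul_sum]; exact even_two_mul _) (hJ ▸ hcut)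
  refine ⟨J, hJ, ?_⟩
  simp only [← Finset.mul_sum, mul_left_comm _ 2] at h
  lia

end TJoin

section Euler

variable {V E : Type*} {G : SimpleGraph V} {ends : E → Sym2 V}

/-- The walk `p` traverses the edges in `Y` once each. Loops of the multigraph may not be part of
`Y`, since `G` has none. -/
structure Traces (ends : E → Sym2 V) (Y : Finset E) {a b : V} (p : G.Walk a b) : Prop where
  isJoin : IsJoin ends Y a b
  length_eq : p.length = Y.card
  mem_support : ∀ e ∈ Y, ∀ v ∈ ends e, v ∈ p.support

variable {F X Y : Finset E} {a b c : V} {e : E}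

lemma traces_nil : Traces ends ∅ (.nil : G.Walk a a) :=
  ⟨isJoin_self.mpr boundary_empty, rfl, fun _ he ↦ absurd he (Finset.notMem_empty _)⟩

lemma Traces.cons [DecidableEq E] {p : G.Walk b c} (hp : Traces ends Y p) (he : e ∉ Y)
    (hends : ends e = s(a, b)) (hab : G.Adj a b) : Traces ends (insert e Y) (.cons hab p) where
  isJoin := hp.isJoin.insert he hends
  length_eq := by
    rw [SimpleGraph.Walk.length_cons, hp.length_eq, Finset.card_insert_of_notMem he]
  mem_support f hf v hv := by
    rw [SimpleGraph.Walk.support_cons, List.mem_cons]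
    rcases Finset.mem_insert.mp hf with rfl | hf
    · rw [hends, Sym2.mem_iff] at hv
      exact hv.imp id fun h : v = b ↦ by rw [h]; exact p.start_mem_support
    · exact .inr (hp.mem_support f hf v hv)

lemma Traces.exists_splice [DecidableEq E] {W : G.Walk a a} {p : G.Walk b b} (hW : Traces ends X W)
    (hp : Traces ends Y p) (hb : b ∈ W.support) (hXY : Disjoint X Y) :
    ∃ W' : G.Walk a a, Traces ends (X ∪ Y) W' := by
  classical
  have hspec := W.take_spec hb
  refine ⟨(W.takeUntil b hb).append (p.append (W.dropUntil b hb)), ⟨?_, ?_, fun e he v hv ↦ ?_⟩⟩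
  · rw [isJoin_self, boundary_union hXY, isJoin_self.mp hW.isJoin, isJoin_self.mp hp.isJoin,
      add_zero]
  · have hlen := congrArg SimpleGraph.Walk.length hspec
    rw [SimpleGraph.Walk.length_append, hW.length_eq] at hlen
    simp only [SimpleGraph.Walk.length_append, hp.length_eq, Finset.card_union_of_disjoint hXY]
    lia
  · simp only [SimpleGraph.Walk.mem_support_append_iff]
    rcases Finset.mem_union.mp he with he | he
    · have hvW := hW.mem_support e he v hv
      rw [← hspec, SimpleGraph.Walk.mem_support_append_iff] at hvW
      exact hvW.imp_right .inr
    · exact .inr (.inl (hp.mem_support e he v hv))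

lemma IsJoin.exists_traces (hX : IsJoin ends X a b)
    (hG : ∀ e ∈ X, ¬ (ends e).IsDiag → ends e ∈ G.edgeSet) :
    ∃ Y ⊆ X, ∃ p : G.Walk a b, Traces ends Y p := by
  classical
  induction X using Finset.strongInduction generalizing a with | _ X ih =>
  obtain rfl | hab := eq_or_ne a b
  · exact ⟨∅, Finset.empty_subset X, .nil, traces_nil⟩
  obtain ⟨e, he, c, hca, hends⟩ := hX.exists_mem hab
  obtain ⟨Y, hYX, p, hp⟩ := ih (X.erase e) (Finset.erase_ssubset he)
    (hX.symm.erase he hends).symm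
    fun f hf ↦ hG f (Finset.mem_of_mem_erase hf)
  have hadj : G.Adj a c := by
    have := hG e he (by simpa [hends] using hca.symm)
    rwa [hends] at this
  exact ⟨Insert.insert e Y, Finset.insert_subset he (hYX.trans (Finset.erase_subset _ _)),
    .cons hadj p, hp.cons (fun h ↦ Finset.notMem_erase e X (hYX h)) hends hadj⟩

lemma Traces.exists_ssubset {W : G.Walk a a} (hX : Traces ends X W) (hXF : X ⊆ F)
    (hG : ∀ e ∈ F, ¬ (ends e).IsDiag → ends e ∈ G.edgeSet) (hF : boundary ends F = 0)
    (heF : e ∈ F) (hends : ends e = s(b, c)) (hb : b ∈ W.support) (hc : c ∉ W.support) :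
    ∃ Y ⊆ F, X ⊂ Y ∧ ∃ W' : G.Walk a a, Traces ends Y W' := by
  classical
  have heX : e ∉ X := fun h ↦ hc (hX.mem_support e h c (hends ▸ Sym2.mem_mk_right b c))
  have heFX : e ∈ F \ X := Finset.mem_sdiff.mpr ⟨heF, heX⟩
  have hbc : b ≠ c := fun h ↦ hc (h ▸ hb)
  have hjoin : IsJoin ends (F \ X) b b := by
    rw [isJoin_self, boundary_sdiff hXF, hF, isJoin_self.mp hX.isJoin, add_zero]
  obtain ⟨Y, hYF, p, hp⟩ := (hjoin.erase heFX hends).symm.exists_traces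
    fun f hf ↦ hG f (Finset.mem_sdiff.mp (Finset.mem_of_mem_erase hf)).1
  have hadj : G.Adj b c := by
    have := hG e heF (by simpa [hends] using hbc)
    rwa [hends] at this
  have hsub : insert e Y ⊆ F \ X :=
    Finset.insert_subset heFX (hYF.trans (Finset.erase_subset _ _))
  have hdisj : Disjoint X (insert e Y) := Finset.disjoint_of_subset_right hsub Finset.disjoint_sdiff
  refine ⟨X ∪ insert e Y, Finset.union_subset hXF (hsub.trans Finset.sdiff_subset),
    Finset.ssubset_iff.mpr ⟨e, heX, Finset.insert_subset (by simp) Finset.subset_union_left⟩,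
    hX.exists_splice (hp.cons (fun h ↦ Finset.notMem_erase e _ (hYF h)) hends hadj) hb hdisj⟩

/-- Euler's theorem. -/
theorem exists_spanning_closed_walk_of_boundary_eq_zero
    (hG : ∀ e ∈ F, ¬ (ends e).IsDiag → ends e ∈ G.edgeSet) (hF : boundary ends F = 0)
    (hconn : ∀ S : Set V, a ∈ S → (∀ e ∈ F, ∀ b c, ends e = s(b, c) → b ∈ S → c ∈ S) →
      S = Set.univ) :
    ∃ W : G.Walk a a, (∀ v, v ∈ W.support) ∧ W.length ≤ F.card := by
  have hfin : {X : Finset E | X ⊆ F ∧ ∃ W : G.Walk a a, Traces ends X W}.Finite :=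
    F.powerset.finite_toSet.subset fun X hX ↦ Finset.mem_coe.mpr (Finset.mem_powerset.mpr hX.1)
  obtain ⟨X, ⟨hXF, W, hX⟩, hmax⟩ :=
    hfin.exists_maximal ⟨∅, Finset.empty_subset F, .nil, traces_nil⟩
  refine ⟨W, ?_, hX.length_eq ▸ Finset.card_le_card hXF⟩
  refine Set.eq_univ_iff_forall.mp (hconn {v | v ∈ W.support} W.start_mem_support ?_)
  intro e he b c hends hb
  by_contra hc
  obtain ⟨Y, hYF, hXY, hY⟩ := hX.exists_ssubset hXF hG hF he hends hb hc
  exact hXY.not_subset (hmax ⟨hYF, hY⟩ hXY.subset)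

end Euler

section DepthFirstSearch

open Relation

variable {V 𝕜 : Type*} [LinearOrder 𝕜] [Zero 𝕜] {z : V → V → 𝕜}

/-- A depth-first search tree, encoded by its ancestor order (`Order.pred` is the parent of a
vertex and `⊥` the root), of the graph of the pairs of positive weight `z`, which always continues
along a heaviest edge to an unvisited vertex. -/
structure IsGreedyDFSOrder [PartialOrder V] [OrderBot V] [PredOrder V] (z : V → V → 𝕜) :
    Prop where
  pred_pos {w : V} : w ≠ ⊥ → 0 < z (Order.pred w) w
  le_or_le {u v : V} : 0 < z u v → u ≤ v ∨ v ≤ u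
  le_pred {w u : V} : w ≠ ⊥ → w ≤ u → z u (Order.pred w) ≤ z w (Order.pred w)

/-- A rooted tree on `S`: the vertices of the tree path from the root `r` to `v` are listed by
`path v`, so that the ancestor order is the prefix order, and `par v` is the parent of `v`. -/
structure IsRootedTree (S : Finset V) (r : V) (path : V → List V) (par : V → V) : Prop where
  path_root : path r = [r]
  path_eq {v : V} : v ∈ S → v ≠ r → path v = path (par v) ++ [v]
  par_mem {v : V} : v ∈ S → v ≠ r → par v ∈ S
  mem_of_mem_path {u v : V} : v ∈ S → u ∈ path v → u ∈ S

/-- The analogue of `IsGreedyDFSOrder` for a search restricted to `S`, in a form suited to the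
recursive construction. -/
structure IsGreedyDFS (z : V → V → 𝕜) (S : Finset V) (r : V) (path : V → List V) (par : V → V) :
    Prop extends IsRootedTree S r path par where
  pos {v : V} : v ∈ S → v ≠ r → 0 < z (par v) v
  prefix_or_prefix {u v : V} : u ∈ S → v ∈ S → 0 < z u v → path u <+: path v ∨ path v <+: path u
  le_par {w u : V} : w ∈ S → w ≠ r → u ∈ S → path w <+: path u → z u (par w) ≤ z w (par w)

variable {S C : Finset V} {r w : V} {path path' : V → List V} {par par' : V → V}

namespace IsRootedTree

lemma getLast?_path (h : IsRootedTree S r path par) {v : V} (hv : v ∈ S) :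
    (path v).getLast? = some v := by
  obtain rfl | hvr := eq_or_ne v r
  · rw [h.path_root, List.getLast?_singleton]
  · rw [h.path_eq hv hvr, List.getLast?_concat]

lemma mem_path (h : IsRootedTree S r path par) {v : V} (hv : v ∈ S) : v ∈ path v :=
  List.mem_of_getLast? (h.getLast?_path hv)

lemma root_prefix (h : IsRootedTree S r path par) {v : V} (hv : v ∈ S) : [r] <+: path v := by
  induction hm : (path v).length using Nat.strong_induction_on generalizing v with | _ m ih =>
  obtain rfl | hvr := eq_or_ne v r
  · rw [h.path_root]
  · have hpath := h.path_eq hv hvr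
    have hlt : (path (par v)).length < m := by
      rw [← hm, hpath, List.length_append, List.length_singleton]
      exact Nat.lt_succ_self _
    rw [hpath]
    exact (ih _ hlt (h.par_mem hv hvr) rfl).trans (List.prefix_append _ _)

lemma attach [DecidableEq V] (hr : r ∈ S) (hC : C ⊆ S.erase r)
    (h : IsRootedTree C w path par) (h' : IsRootedTree (S \ C) r path' par') :
    IsRootedTree S r (fun v ↦ if v ∈ C then r :: path v else path' v)
      (fun v ↦ if v ∈ C then if v = w then r else par v else par' v) := by
  have hrC : r ∉ C := fun hrC ↦ Finset.notMem_erase r S (hC hrC)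
  have hCS : C ⊆ S := hC.trans (Finset.erase_subset r S)
  have hsdiff {v : V} (hv : v ∈ S) (hvC : v ∉ C) : v ∈ S \ C := Finset.mem_sdiff.mpr ⟨hv, hvC⟩
  have hsdiffS {v : V} (hv : v ∈ S \ C) : v ∈ S := (Finset.mem_sdiff.mp hv).1
  have hsdiffC {v : V} (hv : v ∈ S \ C) : v ∉ C := (Finset.mem_sdiff.mp hv).2
  refine ⟨?_, fun {v} hv hvr ↦ ?_, fun {v} hv hvr ↦ ?_, fun {u v} hv hu ↦ ?_⟩
  · rw [if_neg hrC, h'.path_root]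
  · by_cases hvC : v ∈ C
    · obtain rfl | hvw := eq_or_ne v w
      · simp [hvC, hrC, h.path_root, h'.path_root]
      · simp [hvC, hvw, h.par_mem hvC hvw, h.path_eq hvC hvw]
    · simpa [hvC, hsdiffC (h'.par_mem (hsdiff hv hvC) hvr)] using
        h'.path_eq (hsdiff hv hvC) hvr
  · by_cases hvC : v ∈ C
    · obtain rfl | hvw := eq_or_ne v w
      · simpa [hvC] using hr
      · simpa [hvC, hvw] using hCS (h.par_mem hvC hvw)
    · simpa [hvC] using hsdiffS (h'.par_mem (hsdiff hv hvC) hvr)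
  · by_cases hvC : v ∈ C
    · rw [if_pos hvC, List.mem_cons] at hu
      exact hu.elim (fun hur ↦ hur ▸ hr) fun hu ↦ hCS (h.mem_of_mem_path hvC hu)
    · rw [if_neg hvC] at hu
      exact hsdiffS (h'.mem_of_mem_path (hsdiff hv hvC) hu)

end IsRootedTree

namespace IsGreedyDFS

lemma singleton (z : V → V → 𝕜) (r : V) :
    IsGreedyDFS z {r} r (fun _ ↦ [r]) id where
  path_root := rfl
  path_eq hv hvr := absurd (Finset.mem_singleton.mp hv) hvr
  par_mem hv _ := hv
  mem_of_mem_path _ hu := Finset.mem_singleton.mpr (List.mem_singleton.mp hu)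
  pos hv hvr := absurd (Finset.mem_singleton.mp hv) hvr
  prefix_or_prefix _ _ _ := .inl (List.prefix_rfl)
  le_par hw hwr := absurd (Finset.mem_singleton.mp hw) hwr

/-- The search visits the connected component `C` of the heaviest neighbour `w` of `r` first, and
then continues from `r` outside `C`. -/
lemma attach [DecidableEq V] (hsymm : ∀ u v, z u v = z v u) (hr : r ∈ S) (hC : C ⊆ S.erase r)
    (hpos : 0 < z r w) (hmax : ∀ u ∈ C, z u r ≤ z w r)
    (hclosed : ∀ u ∈ C, ∀ v ∈ S \ C, v ≠ r → ¬ 0 < z u v)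
    (h : IsGreedyDFS z C w path par) (h' : IsGreedyDFS z (S \ C) r path' par') :
    IsGreedyDFS z S r (fun v ↦ if v ∈ C then r :: path v else path' v)
      (fun v ↦ if v ∈ C then if v = w then r else par v else par' v) := by
  have hrC : r ∉ C := fun hrC ↦ Finset.notMem_erase r S (hC hrC)
  have hsdiff {v : V} (hv : v ∈ S) (hvC : v ∉ C) : v ∈ S \ C := Finset.mem_sdiff.mpr ⟨hv, hvC⟩
  have hsdiffC {v : V} (hv : v ∈ S \ C) : v ∉ C := (Finset.mem_sdiff.mp hv).2
  have hcross {u v : V} (hu : u ∈ C) (hv : v ∈ S) (hvC : v ∉ C) (huv : 0 < z u v) : v = r := by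
    by_contra hvr
    exact hclosed u hu v (hsdiff hv hvC) hvr huv
  have hroot (u : V) : path' r <+: r :: path u := by
    rw [h'.path_root]
    exact List.cons_prefix_cons.mpr ⟨rfl, List.nil_prefix⟩
  refine ⟨.attach hr hC h.toIsRootedTree h'.toIsRootedTree,
    fun {v} hv hvr ↦ ?_, fun {u v} hu hv huv ↦ ?_, fun {v u} hv hvr hu huv ↦ ?_⟩
  · by_cases hvC : v ∈ C
    · obtain rfl | hvw := eq_or_ne v w
      · simpa [hvC] using hpos
      · simpa [hvC, hvw] using h.pos hvC hvw
    · simpa [hvC] using h'.pos (hsdiff hv hvC) hvr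
  · by_cases huC : u ∈ C <;> by_cases hvC : v ∈ C
    · simpa [huC, hvC] using h.prefix_or_prefix huC hvC huv
    · rw [hcross huC hv hvC huv, if_pos huC, if_neg hrC]
      exact .inr (hroot u)
    · rw [hcross hvC hu huC (hsymm u v ▸ huv), if_pos hvC, if_neg hrC]
      exact .inl (hroot v)
    · simpa [huC, hvC] using h'.prefix_or_prefix (hsdiff hu huC) (hsdiff hv hvC) huv
  · by_cases hvC : v ∈ C <;> by_cases huC : u ∈ C
    · obtain rfl | hvw := eq_or_ne v w
      · simpa [hvC] using hmax u huC
      · simpa [hvC, hvw] using h.le_par hvC hvw huC (by simpa [hvC, huC] using huv)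
    · rw [if_pos hvC, if_neg huC] at huv
      have hvu : v ∈ path' u := huv.subset (List.mem_cons_of_mem r (h.mem_path hvC))
      exact absurd hvC (hsdiffC (h'.mem_of_mem_path (hsdiff hu huC) hvu))
    · rw [if_neg hvC, if_pos huC] at huv
      have hvu := huv.subset (h'.mem_path (hsdiff hv hvC))
      rcases List.mem_cons.mp hvu with rfl | hvu
      · exact absurd rfl hvr
      · exact absurd (h.mem_of_mem_path huC hvu) hvC
    · simpa [hvC] using h'.le_par (hsdiff hv hvC) hvr (hsdiff hu huC)
        (by simpa [hvC, huC] using huv)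

end IsGreedyDFS

lemma reflTransGen_restrict {R : V → V → Prop} {p : V → Prop} {v : V} (hw : p w)
    (hclosed : ∀ a b, p a → R a b → p b) (h : ReflTransGen R w v) :
    ReflTransGen (fun a b ↦ p b ∧ R a b) w v := by
  suffices p v ∧ ReflTransGen (fun a b ↦ p b ∧ R a b) w v from this.2
  induction h with
  | refl => exact ⟨hw, .refl⟩
  | @tail a b _ hab ih =>
    have hb := hclosed a b ih.1 hab
    exact ⟨hb, ih.2.tail ⟨hb, hab⟩⟩

lemma reflTransGen_sdiff [DecidableEq V] {R : V → V → Prop} {v : V} (hr : r ∈ S)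
    (hclosed : ∀ a ∈ C, ∀ b ∈ S.erase r, R a b → b ∈ C)
    (h : ReflTransGen (fun a b ↦ b ∈ S ∧ R a b) r v) (hv : v ∈ S \ C) :
    ReflTransGen (fun a b ↦ b ∈ S \ C ∧ R a b) r v := by
  induction h with
  | refl => exact .refl
  | @tail a b hra hab ih =>
    obtain rfl | hbr := eq_or_ne b r
    · exact .refl
    have haS : a ∈ S := by
      cases hra with
      | refl => exact hr
      | tail _ h => exact h.1
    have haC : a ∉ C := fun haC ↦ (Finset.mem_sdiff.mp hv).2
      (hclosed a haC b (Finset.mem_erase.mpr ⟨hbr, hab.1⟩) hab.2)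
    exact (ih (Finset.mem_sdiff.mpr ⟨haS, haC⟩)).tail ⟨hv, hab.2⟩

lemma pos_of_forall_le_of_reflTransGen (hsymm : ∀ u v, z u v = z v u) (hwr : w ≠ r)
    (hmax : ∀ u ∈ S, u ≠ r → z u r ≤ z w r)
    (h : ReflTransGen (fun a b ↦ b ∈ S ∧ 0 < z a b) r w) : 0 < z r w := by
  by_contra hrw
  suffices hreach : ∀ v, ReflTransGen (fun a b ↦ b ∈ S ∧ 0 < z a b) r v → v = r from
    hwr (hreach w h)
  intro v hv
  induction hv with
  | refl => rfl
  | @tail a b _ hab ih =>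
    by_contra hbr
    have hle := hmax b hab.1 hbr
    rw [hsymm b, hsymm w] at hle
    exact hrw ((ih ▸ hab.2).trans_le hle)

lemma exists_isGreedyDFS (hsymm : ∀ u v, z u v = z v u) (hr : r ∈ S)
    (hconn : ∀ v ∈ S, ReflTransGen (fun a b ↦ b ∈ S ∧ 0 < z a b) r v) :
    ∃ path par, IsGreedyDFS z S r path par := by
  classical
  induction S using Finset.strongInduction generalizing r with | _ S ih =>
  obtain hS | hne := (S.erase r).eq_empty_or_nonempty
  · have hSr : S = {r} :=
      ((Finset.erase_eq_empty_iff S r).mp hS).resolve_left (Finset.ne_empty_of_mem hr)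
    exact ⟨_, _, hSr ▸ IsGreedyDFS.singleton z r⟩
  obtain ⟨w, hwS, hmax⟩ := (S.erase r).exists_max_image (z · r) hne
  set C := {v ∈ S.erase r | ReflTransGen (fun a b ↦ b ∈ S.erase r ∧ 0 < z a b) w v}
  have hCS : C ⊆ S.erase r := Finset.filter_subset _ _
  have hrC : r ∉ C := fun hrC ↦ Finset.notMem_erase r S (hCS hrC)
  have hwC : w ∈ C := Finset.mem_filter.mpr ⟨hwS, .refl⟩
  have hclosed (a : V) (ha : a ∈ C) (b : V) (hb : b ∈ S.erase r) (hab : 0 < z a b) : b ∈ C :=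
    Finset.mem_filter.mpr ⟨hb, (Finset.mem_filter.mp ha).2.tail ⟨hb, hab⟩⟩
  have hpos : 0 < z r w := pos_of_forall_le_of_reflTransGen hsymm (Finset.ne_of_mem_erase hwS)
    (fun u hu hur ↦ hmax u (Finset.mem_erase.mpr ⟨hur, hu⟩))
    (hconn w (Finset.mem_of_mem_erase hwS))
  have hconnC (v : V) (hv : v ∈ C) : ReflTransGen (fun a b ↦ b ∈ C ∧ 0 < z a b) w v :=
    ReflTransGen.mono (fun _ _ hab ↦ ⟨hab.1, hab.2.2⟩) _ _ <| reflTransGen_restrict hwC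
      (fun a b ha hab ↦ hclosed a ha b hab.1 hab.2) (Finset.mem_filter.mp hv).2
  have hconnD (v : V) (hv : v ∈ S \ C) :
      ReflTransGen (fun a b ↦ b ∈ S \ C ∧ 0 < z a b) r v :=
    reflTransGen_sdiff hr hclosed (hconn v (Finset.mem_sdiff.mp hv).1) hv
  obtain ⟨path, par, h⟩ := ih C (Finset.ssubset_of_subset_of_ssubset hCS (Finset.erase_ssubset hr))
    hwC hconnC
  obtain ⟨path', par', h'⟩ := ih (S \ C)
    (Finset.sdiff_ssubset (hCS.trans (Finset.erase_subset r S)) ⟨w, hwC⟩)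
    (Finset.mem_sdiff.mpr ⟨hr, hrC⟩) hconnD
  exact ⟨_, _, .attach hsymm hr hCS hpos (fun u hu ↦ hmax u (hCS hu))
    (fun u hu v hv hvr huv ↦ (Finset.mem_sdiff.mp hv).2
      (hclosed u hu v (Finset.mem_erase.mpr ⟨hvr, (Finset.mem_sdiff.mp hv).1⟩) huv)) h h'⟩

lemma IsGreedyDFS.exists_isGreedyDFSOrder [Fintype V]
    (h : IsGreedyDFS z Finset.univ r path par) :
    ∃ (_ : PartialOrder V) (_ : OrderBot V) (_ : PredOrder V), ⊥ = r ∧ IsGreedyDFSOrder z := by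
  classical
  have hlast (v : V) : (path v).getLast? = some v := h.getLast?_path (Finset.mem_univ v)
  have hpath {v : V} (hv : v ≠ r) : path v = path (par v) ++ [v] :=
    h.path_eq (Finset.mem_univ v) hv
  let _ : PartialOrder V :=
    { le := fun u v ↦ path u <+: path v
      le_refl := fun u ↦ List.prefix_rfl
      le_trans := fun _ _ _ ↦ List.IsPrefix.trans
      le_antisymm := fun u v huv hvu ↦ Option.some_injective V <| by
        rw [← hlast u, ← hlast v, huv.eq_of_length (huv.length_le.antisymm hvu.length_le)] }
  let _ : OrderBot V :=
    { bot := r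
      bot_le := fun v ↦ by
        change path r <+: path v
        exact h.path_root ▸ h.root_prefix (Finset.mem_univ v) }
  have hpar {v : V} (hv : v ≠ r) : par v < v := by
    refine lt_of_le_of_ne ?_ fun hvv ↦ ?_
    · exact ⟨[v], (hpath hv).symm⟩
    · simpa [hvv] using congrArg List.length (hpath hv)
  let _ : PredOrder V :=
    { pred := fun v ↦ if v = r then r else par v
      pred_le := fun v ↦ by
        split_ifs with hv
        · exact hv.ge
        · exact (hpar hv).le
      min_of_le_pred := fun {v} hv ↦ by
        split_ifs at hv with hvr
        · exact hvr ▸ isMin_bot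
        · exact absurd hv (hpar hvr).not_ge
      le_pred_of_lt := fun {u v} huv ↦ by
        have hvr : v ≠ r := huv.ne_bot
        have hle : path u <+: path (par v) ++ [v] := hpath hvr ▸ huv.le
        rw [if_neg hvr]
        refine (List.prefix_concat_iff.mp hle).resolve_left fun heq ↦ huv.not_ge ?_
        exact (hpath hvr ▸ heq ▸ List.prefix_rfl : path v <+: path u) }
  have hpred {v : V} (hv : v ≠ r) : Order.pred v = par v := if_neg hv
  exact ⟨inferInstance, inferInstance, inferInstance, rfl,
    { pred_pos := fun {w} hw ↦ (hpred hw).symm ▸ h.pos (Finset.mem_univ w) hw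
      le_or_le := fun {u v} ↦ h.prefix_or_prefix (Finset.mem_univ u) (Finset.mem_univ v)
      le_pred := fun {w u} hw hwu ↦ by
        rw [hpred hw]
        exact h.le_par (Finset.mem_univ w) hw (Finset.mem_univ u) hwu }⟩

lemma exists_isGreedyDFSOrder [Finite V] (hsymm : ∀ u v, z u v = z v u) (r : V)
    (hconn : ∀ v, ReflTransGen (fun a b ↦ 0 < z a b) r v) :
    ∃ (_ : PartialOrder V) (_ : OrderBot V) (_ : PredOrder V), ⊥ = r ∧ IsGreedyDFSOrder z := by
  cases nonempty_fintype V
  obtain ⟨path, par, h⟩ := exists_isGreedyDFS hsymm (Finset.mem_univ r) fun v _ ↦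
    ReflTransGen.mono (fun a b hab ↦ ⟨Finset.mem_univ b, hab⟩) _ _ (hconn v)
  exact h.exists_isGreedyDFSOrder

end DepthFirstSearch

section RemovableEdges

variable {V E : Type*} {ends : E → Sym2 V} {y : E → ℕ} {J N R : Finset E} {U : Finset V}

lemma not_crosses_mk {a b : V} : ¬ Crosses U s(a, b) ↔ (a ∈ U ↔ b ∈ U) := by
  rw [crosses_mk]
  tauto

/-- The parity condition rules out a cut of two edges of weight one. -/
lemma three_le_sum_cutEdges [Fintype E] (hy : ∀ e, y e = 1 ∨ y e = 2)
    (hodd : ∑ v ∈ U, boundary ends {e | y e = 1} v = 1)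
    (hbridge : ∀ f, Crosses U (ends f) → ∃ e ≠ f, Crosses U (ends e)) :
    3 ≤ ∑ e ∈ cutEdges ends Finset.univ U, y e := by
  classical
  set M := cutEdges ends {e | y e = 1} U
  have hMsub : M ⊆ cutEdges ends Finset.univ U := cutEdges_mono (Finset.subset_univ _) U
  have hyM (e : E) (he : e ∈ M) : y e = 1 := by simpa using cutEdges_subset U he
  have hModd : Odd M.card := by
    rw [← ZMod.natCast_eq_one_iff_odd, ← hodd, sum_boundary]
  obtain ⟨f, hf⟩ := Finset.card_pos.mp hModd.pos
  obtain ⟨e, hef, he⟩ := hbridge f (mem_cutEdges.mp hf).2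
  obtain hye | hye := hy e
  · have heM : e ∈ M := mem_cutEdges.mpr ⟨by simpa using hye, he⟩
    have htwo : 2 ≤ M.card := by
      rw [← Finset.card_pair hef]
      exact Finset.card_le_card (Finset.insert_subset heM (Finset.singleton_subset_iff.mpr hf))
    calc 3 ≤ M.card := by obtain ⟨k, hk⟩ := hModd; lia
      _ = ∑ e ∈ M, y e := by rw [Finset.sum_congr rfl hyM, Finset.card_eq_sum_ones]
      _ ≤ _ := Finset.sum_le_sum_of_subset hMsub
  · calc 3 = ∑ e ∈ {e, f}, y e := by rw [Finset.sum_pair hef, hye, hyM f hf]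
      _ ≤ _ := Finset.sum_le_sum_of_subset <| Finset.insert_subset
        (mem_cutEdges.mpr ⟨Finset.mem_univ e, he⟩) (Finset.singleton_subset_iff.mpr (hMsub hf))

open Classical in
lemma sum_mul_card_filter_crosses (X : Finset E) (I : Finset V) (w : E → ℕ) :
    ∑ e ∈ X, w e * (I.filter fun v ↦ Crosses {v} (ends e)).card =
      ∑ v ∈ I, ∑ e ∈ cutEdges ends X {v}, w e := by
  simp only [cutEdges, Finset.sum_filter, Finset.card_filter, Finset.mul_sum, mul_ite, mul_one,
    mul_zero]
  exact Finset.sum_comm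

/-- Charging every edge for the prescribed vertices that it meets forces a cheap `T`-join to have
degree one there. -/
theorem exists_tJoin_card_cutEdges_eq_one [Finite V] [Fintype E] {k : ℕ} (hk : 0 < k)
    (cost : E → ℕ) {I : Finset V} (hI : ∀ v ∈ I, boundary ends N v = 1)
    (hy : ∀ v ∈ I, ∑ e ∈ cutEdges ends Finset.univ {v}, y e ≤ k)
    (hcut : ∀ U : Finset V, ∑ v ∈ U, boundary ends N v = 1 →
      k ≤ ∑ e ∈ cutEdges ends Finset.univ U, y e) :
    ∃ J, boundary ends J = boundary ends N ∧ (∀ v ∈ I, (cutEdges ends J {v}).card = 1) ∧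
      k * ∑ e ∈ J, cost e ≤ ∑ e, y e * cost e := by
  classical
  set K := ∑ e, y e * cost e + 1
  set D : E → ℕ := fun e ↦ (I.filter fun v ↦ Crosses {v} (ends e)).card
  obtain ⟨J, hJ, hle⟩ := exists_tJoin_mul_sum_le (fun e ↦ K * D e + cost e) hcut
  have hone (v : V) (hv : v ∈ I) : 1 ≤ (cutEdges ends J {v}).card := by
    refine Nat.one_le_iff_ne_zero.mpr fun h0 ↦ ?_
    simpa [h0, hJ, hI v hv] using boundary_apply ends J v
  have hDJ : ∑ e ∈ J, D e = ∑ v ∈ I, (cutEdges ends J {v}).card := by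
    simpa using sum_mul_card_filter_crosses (ends := ends) J I 1
  have hDy : ∑ e, y e * D e ≤ k * I.card := by
    rw [sum_mul_card_filter_crosses, mul_comm, ← smul_eq_mul]
    exact Finset.sum_le_card_nsmul I _ k hy
  simp only [Finset.sum_add_distrib, mul_add, ← Finset.mul_sum, mul_left_comm _ K] at hle
  have hcard : I.card ≤ ∑ e ∈ J, D e := by
    simpa [hDJ] using Finset.card_nsmul_le_sum I _ 1 hone
  have hcard' : ∑ e ∈ J, D e ≤ I.card := by
    by_contra! hlt
    have h₁ : K * (k * (I.card + 1)) ≤ K * (k * ∑ e ∈ J, D e) := by gcongr; exact hlt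
    have h₂ : K * (∑ e, y e * D e) ≤ K * (k * I.card) := by gcongr
    have h₃ : K ≤ K * k := Nat.le_mul_of_pos_right K hk
    rw [mul_add, mul_add, mul_one] at h₁
    lia
  refine ⟨J, hJ, fun v hv ↦ ?_, ?_⟩
  · refine ((Finset.sum_eq_sum_iff_of_le hone).mp ?_ v hv).symm
    rw [← hDJ, ← Finset.card_eq_sum_ones]
    exact hcard.antisymm hcard'
  · have h₁ : K * (k * I.card) ≤ K * (k * ∑ e ∈ J, D e) := by gcongr
    have h₂ : K * (∑ e, y e * D e) ≤ K * (k * I.card) := by gcongr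
    lia

lemma boundary_filter_not_isDiag (X : Finset E) [DecidablePred fun e ↦ ¬ (ends e).IsDiag] :
    boundary ends (X.filter fun e ↦ ¬ (ends e).IsDiag) = boundary ends X := by
  refine Finset.sum_filter_of_ne fun e _ he hdiag ↦ he ?_
  induction h : ends e with | _ a b =>
  rw [h, Sym2.mk_isDiag_iff] at hdiag
  rw [hdiag, endpointParity_diag]

variable {G : SimpleGraph V} {a : V}

/-- A Mömke–Svensson tour: the edges of a `T`-join for the odd vertices `T` of `N` are removed
from `N` if removable and doubled or added otherwise. -/
lemma exists_spanning_closed_walk_of_removable [DecidableEq V] [DecidableEq E]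
    (hG : ∀ e, ¬ (ends e).IsDiag → ends e ∈ G.edgeSet)
    (hR : R ⊆ N) (hJ : boundary ends J = boundary ends N)
    (hconn : ∀ S : Set V, a ∈ S →
      (∀ e ∈ N \ (J ∩ R), ∀ b c, ends e = s(b, c) → b ∈ S → c ∈ S) → S = Set.univ) :
    ∃ W : G.Walk a a, (∀ v, v ∈ W.support) ∧
      W.length ≤ ((N \ (J ∩ R)).filter fun e ↦ ¬ (ends e).IsDiag).card +
        ((J \ R).filter fun e ↦ ¬ (ends e).IsDiag).card := by
  set X := (N \ (J ∩ R)).filter fun e ↦ ¬ (ends e).IsDiag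
  set Y := (J \ R).filter fun e ↦ ¬ (ends e).IsDiag
  have hXY : boundary (Sum.elim ends ends) (X.disjSum Y) = 0 := by
    have hsplit : boundary (Sum.elim ends ends) (X.disjSum Y) = boundary ends X + boundary ends Y :=
      Finset.sum_disjSum ..
    rw [hsplit, boundary_filter_not_isDiag, boundary_filter_not_isDiag,
      ← Finset.sdiff_inter_self_left J R, boundary_sdiff (Finset.inter_subset_left),
      boundary_sdiff (Finset.inter_subset_right.trans hR), hJ]
    exact ZModModule.add_self _
  have hXconn (S : Set V) (ha : a ∈ S) (hS : ∀ e ∈ X.disjSum Y, ∀ b c,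
      Sum.elim ends ends e = s(b, c) → b ∈ S → c ∈ S) : S = Set.univ := by
    refine hconn S ha fun e he b c hends hb ↦ ?_
    by_cases hdiag : (ends e).IsDiag
    · rw [hends, Sym2.mk_isDiag_iff] at hdiag
      exact hdiag ▸ hb
    · exact hS (.inl e) (Finset.inl_mem_disjSum.mpr (Finset.mem_filter.mpr ⟨he, hdiag⟩)) b c
        hends hb
  obtain ⟨W, hW, hlen⟩ := exists_spanning_closed_walk_of_boundary_eq_zero (G := G)
    (by rintro (e | e) - <;> exact hG e) hXY hXconn
  exact ⟨W, hW, hlen.trans_eq (Finset.card_disjSum X Y)⟩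

end RemovableEdges

section TreePath

variable {V : Type*} [PartialOrder V] [PredOrder V] [WellFoundedLT V] {p : V → Prop} {a c u y : V}

lemma iff_of_le_of_iff_pred (hay : a ≤ y)
    (h : ∀ w, a < w → w ≤ y → (p w ↔ p (Order.pred w))) : p y ↔ p a := by
  induction y using WellFoundedLT.induction with | _ y ih =>
  obtain rfl | hlt := hay.eq_or_lt
  · rfl
  · have hpred : Order.pred y < y := Order.pred_lt_of_not_isMin hlt.not_isMin
    rw [h y hlt le_rfl]
    exact ih _ hpred (Order.le_pred_of_lt hlt) fun w haw hwy ↦ h w haw (hwy.trans hpred.le)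

lemma iff_pred_of_le_of_le [OrderBot V] (hc : c ≠ ⊥)
    (hp : ∀ w, w ≠ ⊥ → w ≠ c → (p w ↔ p (Order.pred w))) (huc : u ≤ c) (hcy : c ≤ y)
    (huy : p y ↔ p (Order.pred u)) : p c ↔ p (Order.pred c) := by
  have hup : p y ↔ p c := iff_of_le_of_iff_pred hcy fun w hcw _ ↦ hp w hcw.ne_bot hcw.ne'
  have hdown : p (Order.pred c) ↔ p (Order.pred u) :=
    iff_of_le_of_iff_pred (Order.pred_le_pred huc) fun w huw hwc ↦
      hp w huw.ne_bot (hwc.trans_lt (Order.pred_lt_of_not_isMin hc.bot_lt.not_isMin)).ne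
  rw [← hup, huy, hdown]

end TreePath

section Gadget

variable {V : Type*} {P : Finset V} {F : Finset (V × V)}

/-- The edges of the gadget graph of an `IsBackCover`: the tree edges, the gadget edge and the
removable back edge of each `w ∈ P`, and the free back edges. -/
abbrev GadgetEdge (P : Finset V) (F : Finset (V × V)) : Type _ := V ⊕ P ⊕ P ⊕ F

/-- The fractional join in the gadget graph, multiplied by three. -/
def gadgetWeight : GadgetEdge P F → ℕ
  | .inr (.inr (.inr _)) => 2
  | _ => 1

lemma gadgetWeight_eq_one_or_two (e : GadgetEdge P F) :
    gadgetWeight e = 1 ∨ gadgetWeight e = 2 := by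
  obtain _ | _ | _ | _ := e <;> simp [gadgetWeight]

/-- The edges of weight one of the gadget graph. -/
def unitEdges (P : Finset V) (F : Finset (V × V)) [Fintype V] : Finset (GadgetEdge P F) :=
  {e | gadgetWeight e = 1}

lemma mem_unitEdges [Fintype V] {e : GadgetEdge P F} : e ∈ unitEdges P F ↔ gadgetWeight e = 1 :=
  Finset.mem_filter_univ e

variable [PartialOrder V] [DecidableEq V]

section IsRemovable

variable [OrderBot V]

/-- Whether a gadget edge may be removed from the gadget graph by a join containing it. -/
def isRemovable : GadgetEdge P F → Bool
  | .inl w => w = ⊥ ∨ w ∈ P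
  | .inr (.inr (.inl _)) => true
  | _ => false

/-- The removable edges of the gadget graph. -/
def removableEdges (P : Finset V) (F : Finset (V × V)) [Fintype V] : Finset (GadgetEdge P F) :=
  {e | isRemovable e}

lemma mem_removableEdges [Fintype V] {e : GadgetEdge P F} :
    e ∈ removableEdges P F ↔ isRemovable e :=
  Finset.mem_filter_univ e

lemma removableEdges_subset_unitEdges [Fintype V] : removableEdges P F ⊆ unitEdges P F := by
  intro e he
  rw [mem_removableEdges] at he
  rw [mem_unitEdges]
  obtain w | w | w | q := e <;> simp_all [isRemovable, gadgetWeight]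

lemma sum_gadgetWeight_mul_cost [Fintype V] (hP : ⊥ ∉ P) :
    ∑ e : GadgetEdge P F, gadgetWeight e * (if isRemovable e then 0 else 1) + 1 =
      Fintype.card V + 2 * F.card := by
  have htree : ∑ w : V, (if w = ⊥ ∨ w ∈ P then 0 else 1) + (P.card + 1) = Fintype.card V := by
    rw [← Finset.card_insert_of_notMem hP, ← Finset.card_compl_add_card (insert ⊥ P),
      Finset.sum_ite, Finset.sum_const_zero, zero_add, ← Finset.card_eq_sum_ones]
    congr 2
    ext w
    simp
  simp only [Fintype.sum_sum_type, gadgetWeight, isRemovable, decide_eq_true_eq, if_true, mul_zero,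
    one_mul, Bool.false_eq_true, if_false, mul_one, Finset.sum_const_zero, zero_add,
    Finset.sum_const, Finset.card_univ, Fintype.card_coe, smul_eq_mul]
  lia

end IsRemovable

variable [PredOrder V] {b : V → V} {U : Finset (V ⊕ V)}

/-- The Mömke–Svensson gadget graph: every `w ∈ P` gets a new vertex `Sum.inr w` of degree three,
through which the tree edge above `w` and its partner are attached to the parent of `w`. -/
def gadgetEnds (P : Finset V) (b : V → V) (F : Finset (V × V)) : GadgetEdge P F → Sym2 (V ⊕ V)
  | .inl w => s(if w ∈ P then .inr w else .inl (Order.pred w), .inl w)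
  | .inr (.inl w) => s(.inl (Order.pred w), .inr w)
  | .inr (.inr (.inl w)) => s(.inl (b w), .inr w)
  | .inr (.inr (.inr q)) => s(.inl q.1.1, .inl (Order.pred q.1.2))

lemma gadgetEnds_tree_of_mem {w : V} (hwP : w ∈ P) :
    gadgetEnds P b F (.inl w) = s(.inr w, .inl w) := by
  simp [gadgetEnds, hwP]

lemma gadgetEnds_tree_of_notMem {w : V} (hwP : w ∉ P) :
    gadgetEnds P b F (.inl w) = s(.inl (Order.pred w), .inl w) := by
  simp [gadgetEnds, hwP]

lemma inl_mem_iff_pred_of_not_crosses {w : V}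
    (htree : ¬ Crosses U (gadgetEnds P b F (.inl w)))
    (hgadget : ∀ hwP, ¬ Crosses U (gadgetEnds P b F (.inr (.inl ⟨w, hwP⟩)))) :
    .inl w ∈ U ↔ .inl (Order.pred w) ∈ U := by
  by_cases hwP : w ∈ P
  · rw [gadgetEnds_tree_of_mem hwP, not_crosses_mk] at htree
    rw [← htree, ← not_crosses_mk.mp (hgadget hwP)]
  · rwa [gadgetEnds_tree_of_notMem hwP, not_crosses_mk, iff_comm] at htree

lemma cutEdges_gadgetEnds_inr [Fintype V] {w : V} (hwP : w ∈ P) :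
    cutEdges (gadgetEnds P b F) Finset.univ {.inr w} =
      {.inl w, .inr (.inl ⟨w, hwP⟩), .inr (.inr (.inl ⟨w, hwP⟩))} := by
  ext e
  simp only [mem_cutEdges, Finset.mem_univ, true_and, Finset.mem_insert, Finset.mem_singleton]
  obtain c | c | c | q := e
  · by_cases hcP : c ∈ P
    · simp [gadgetEnds_tree_of_mem hcP, crosses_mk]
    · simp [gadgetEnds_tree_of_notMem hcP, crosses_mk, (ne_of_mem_of_not_mem hwP hcP).symm]
  · simp [gadgetEnds, crosses_mk, Subtype.ext_iff]
  · simp [gadgetEnds, crosses_mk, Subtype.ext_iff]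
  · simp [gadgetEnds, crosses_mk]

lemma sum_cutEdges_gadgetEnds_inr [Fintype V] {w : V} (hwP : w ∈ P) (g : GadgetEdge P F → ℕ) :
    ∑ e ∈ cutEdges (gadgetEnds P b F) Finset.univ {.inr w}, g e =
      g (.inl w) + g (.inr (.inl ⟨w, hwP⟩)) + g (.inr (.inr (.inl ⟨w, hwP⟩))) := by
  rw [cutEdges_gadgetEnds_inr hwP, Finset.sum_insert (by simp), Finset.sum_pair (by simp),
    add_assoc]

lemma card_cutEdges_gadgetEnds_inr [Finite V] {w : V} (hwP : w ∈ P)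
    {J : Finset (GadgetEdge P F)} :
    (cutEdges (gadgetEnds P b F) J {.inr w}).card = (if .inl w ∈ J then 1 else 0) +
      (if .inr (.inl ⟨w, hwP⟩) ∈ J then 1 else 0) +
      (if .inr (.inr (.inl ⟨w, hwP⟩)) ∈ J then 1 else 0) := by
  cases nonempty_fintype V
  rw [← sum_cutEdges_gadgetEnds_inr (b := b) hwP fun e ↦ if e ∈ J then 1 else 0,
    ← Finset.card_filter, cutEdges, cutEdges, Finset.filter_comm, Finset.filter_univ_mem]

lemma boundary_gadgetEnds_inr [Fintype V] {w : V} (hwP : w ∈ P) :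
    boundary (gadgetEnds P b F) (unitEdges P F) (.inr w) = 1 := by
  have hcard : (cutEdges (gadgetEnds P b F) (unitEdges P F) {.inr w}).card = 3 := by
    rw [cutEdges, unitEdges, Finset.filter_comm, Finset.card_filter]
    exact sum_cutEdges_gadgetEnds_inr hwP fun e ↦ if gadgetWeight e = 1 then 1 else 0
  rw [boundary_apply, hcard]
  rfl

/-- The gadget graph with its new vertices identified with the parents they hang from. -/
def contractedEnds (P : Finset V) (b : V → V) (F : Finset (V × V)) : GadgetEdge P F → Sym2 V :=
  Sym2.map (Sum.elim id Order.pred) ∘ gadgetEnds P b F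

lemma contractedEnds_tree (w : V) : contractedEnds P b F (.inl w) = s(Order.pred w, w) := by
  by_cases hw : w ∈ P <;> simp [contractedEnds, gadgetEnds, hw]

variable [OrderBot V] {G : SimpleGraph V}

/-- A choice of edges of `G` between vertices and ancestors of theirs such that, with these edges
added, no edge of the tree is a bridge. The edge from `b w` to the parent of `w`, for `w ∈ P`, will
be a removable partner of the tree edge above `w`, and it does not count as covering that tree edge;
a pair `(y, w) ∈ F` stands for the edge from `y` to the parent of `w`. -/
structure IsBackCover (G : SimpleGraph V) (P : Finset V) (b : V → V) (F : Finset (V × V)) :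
    Prop where
  ne_bot {w : V} : w ∈ P → w ≠ ⊥
  adj {w : V} : w ∈ P → G.Adj (b w) (Order.pred w)
  le {w : V} : w ∈ P → w ≤ b w
  free_adj {q : V × V} : q ∈ F → G.Adj q.1 (Order.pred q.2)
  cover {c : V} : c ≠ ⊥ → (∃ w ∈ P, w < c ∧ c ≤ b w) ∨ ∃ q ∈ F, q.2 ≤ c ∧ c ≤ q.1

namespace IsBackCover

lemma inl_mem_iff_pred [WellFoundedLT V] (h : IsBackCover G P b F) {c : V} (hc : c ≠ ⊥)
    (htree : ∀ w ≠ c, ¬ Crosses U (gadgetEnds P b F (.inl w)))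
    (hgadget : ∀ w : P, w.1 ≠ c → ¬ Crosses U (gadgetEnds P b F (.inr (.inl w))))
    (hback : ∀ e, ¬ Crosses U (gadgetEnds P b F (.inr (.inr e)))) :
    .inl c ∈ U ↔ .inl (Order.pred c) ∈ U := by
  have hpred (w : V) (hwc : w ≠ c) : .inl w ∈ U ↔ .inl (Order.pred w) ∈ U :=
    inl_mem_iff_pred_of_not_crosses (htree w hwc) fun hwP ↦ hgadget ⟨w, hwP⟩ hwc
  obtain ⟨w, hwP, hwc, hcw⟩ | ⟨q, hqF, hqc, hcq⟩ := h.cover hc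
  · refine iff_pred_of_le_of_le (p := fun v ↦ .inl v ∈ U) hc (fun w _ ↦ hpred w) hwc.le hcw ?_
    rw [not_crosses_mk.mp (hgadget ⟨w, hwP⟩ hwc.ne)]
    exact not_crosses_mk.mp (hback (.inl ⟨w, hwP⟩))
  · refine iff_pred_of_le_of_le (p := fun v ↦ .inl v ∈ U) hc (fun w _ ↦ hpred w) hqc hcq ?_
    exact not_crosses_mk.mp (hback (.inr ⟨q, hqF⟩))

lemma not_crosses_of_forall_ne [WellFoundedLT V] (h : IsBackCover G P b F) {f : GadgetEdge P F}
    (hf : ∀ e ≠ f, ¬ Crosses U (gadgetEnds P b F e)) : ¬ Crosses U (gadgetEnds P b F f) := by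
  obtain c | c | f := f
  · obtain rfl | hc := eq_or_ne c ⊥
    · rw [gadgetEnds_tree_of_notMem fun hP ↦ h.ne_bot hP rfl, not_crosses_mk, Order.pred_bot]
    have hpred := h.inl_mem_iff_pred hc (fun w hwc ↦ hf _ (by simp [hwc]))
      (fun w _ ↦ hf _ (by simp)) (fun e ↦ hf _ (by simp))
    by_cases hcP : c ∈ P
    · have h₁ := not_crosses_mk.mp (hf (.inr (.inl ⟨c, hcP⟩)) (by simp))
      rw [gadgetEnds_tree_of_mem hcP, not_crosses_mk, ← h₁, hpred]
    · rw [gadgetEnds_tree_of_notMem hcP, not_crosses_mk, hpred]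
  · have hc := h.ne_bot c.2
    have hpred := h.inl_mem_iff_pred hc (fun w _ ↦ hf _ (by simp))
      (fun w hwc ↦ hf _ (by simp [Subtype.ext_iff, hwc])) (fun e ↦ hf _ (by simp))
    have h₁ := hf (.inl c) (by simp)
    rw [gadgetEnds_tree_of_mem c.2, not_crosses_mk] at h₁
    exact not_crosses_mk.mpr (hpred.symm.trans h₁.symm)
  · have hpred (w : V) : .inl w ∈ U ↔ .inl (Order.pred w) ∈ U :=
      inl_mem_iff_pred_of_not_crosses (hf _ (by simp)) fun _ ↦ hf _ (by simp)
    have hbot (v : V) : .inl v ∈ U ↔ .inl ⊥ ∈ U :=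
      iff_of_le_of_iff_pred (p := fun v ↦ .inl v ∈ U) bot_le fun w _ _ ↦ hpred w
    obtain w | q := f
    · refine not_crosses_mk.mpr ?_
      rw [hbot, ← hbot (Order.pred w.1)]
      exact not_crosses_mk.mp (hf (.inr (.inl w)) (by simp))
    · exact not_crosses_mk.mpr ((hbot _).trans (hbot _).symm)

lemma eq_univ_of_closed [Finite V] {J : Finset (GadgetEdge P F)}
    (h : IsBackCover G P b F)
    (hone : ∀ w ∈ P, (cutEdges (gadgetEnds P b F) J {.inr w}).card = 1) {S : Set V} (hbot : ⊥ ∈ S)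
    (hS : ∀ e, gadgetWeight e = 1 → ¬ (e ∈ J ∧ isRemovable e) →
      ∀ u v, contractedEnds P b F e = s(u, v) → u ∈ S → v ∈ S) : S = Set.univ := by
  have hiff {e} (he : gadgetWeight e = 1) (heJ : ¬ (e ∈ J ∧ isRemovable e)) {u v : V}
      (huv : contractedEnds P b F e = s(u, v)) : u ∈ S ↔ v ∈ S :=
    ⟨hS e he heJ u v huv, hS e he heJ v u (huv.trans Sym2.eq_swap)⟩
  have hpred (c : V) : c ∈ S ↔ Order.pred c ∈ S := by
    induction c using WellFoundedGT.induction with | _ c ih =>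
    by_cases hc : .inl c ∈ J ∧ isRemovable (.inl c : GadgetEdge P F)
    · obtain rfl | hcP : c = ⊥ ∨ c ∈ P := by simpa [isRemovable] using hc.2
      · rw [Order.pred_bot]
      have hback : .inr (.inr (.inl ⟨c, hcP⟩)) ∉ J := fun hJ ↦ by
        simpa [hc.1, hJ] using (card_cutEdges_gadgetEnds_inr hcP).symm.trans (hone c hcP)
      rw [← iff_of_le_of_iff_pred (h.le hcP) fun w hcw _ ↦ ih w hcw]
      exact hiff (e := .inr (.inr (.inl ⟨c, hcP⟩))) rfl (fun hJ ↦ hback hJ.1) rfl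
    · exact (hiff rfl hc (contractedEnds_tree c)).symm
  refine Set.eq_univ_of_forall fun v ↦ ?_
  exact (iff_of_le_of_iff_pred bot_le fun w _ _ ↦ hpred w).mpr hbot

end IsBackCover

variable [Fintype V]

lemma IsBackCover.exists_gadget_join (h : IsBackCover G P b F) :
    ∃ J : Finset (GadgetEdge P F),
      boundary (gadgetEnds P b F) J = boundary (gadgetEnds P b F) (unitEdges P F) ∧
      (∀ w ∈ P, (cutEdges (gadgetEnds P b F) J {.inr w}).card = 1) ∧
      3 * (J \ removableEdges P F).card + 1 ≤ Fintype.card V + 2 * F.card := by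
  have hI : ∀ v ∈ P.map ⟨Sum.inr, Sum.inr_injective⟩,
      boundary (gadgetEnds P b F) (unitEdges P F) v = 1 := by
    simpa [Finset.mem_map] using fun _ ↦ boundary_gadgetEnds_inr
  have hdeg : ∀ v ∈ P.map ⟨Sum.inr, Sum.inr_injective⟩,
      ∑ e ∈ cutEdges (gadgetEnds P b F) Finset.univ {v}, gadgetWeight e ≤ 3 := by
    simp only [Finset.mem_map, forall_exists_index, and_imp, forall_apply_eq_imp_iff₂]
    exact fun w hw ↦ (sum_cutEdges_gadgetEnds_inr hw gadgetWeight).le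
  obtain ⟨J, hJ, hone, hle⟩ := exists_tJoin_card_cutEdges_eq_one three_pos
    (fun e : GadgetEdge P F ↦ if isRemovable e then 0 else 1) hI hdeg fun U hU ↦
      three_le_sum_cutEdges gadgetWeight_eq_one_or_two hU fun f hf ↦ by
        contrapose! hf
        exact h.not_crosses_of_forall_ne hf
  refine ⟨J, hJ, fun w hw ↦ hone _ (Finset.mem_map_of_mem _ hw), ?_⟩
  rw [← sum_gadgetWeight_mul_cost fun hP ↦ h.ne_bot hP rfl, Finset.sdiff_eq_filter,
    Finset.card_filter]
  simpa only [mem_removableEdges, ite_not] using Nat.succ_le_succ hle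

lemma IsBackCover.card_tour_add_one_le (h : IsBackCover G P b F) {J : Finset (GadgetEdge P F)}
    (hone : ∀ w ∈ P, (cutEdges (gadgetEnds P b F) J {.inr w}).card = 1) :
    ((unitEdges P F \ (J ∩ removableEdges P F)).filter
        fun e ↦ ¬ (contractedEnds P b F e).IsDiag).card +
      ((J \ removableEdges P F).filter fun e ↦ ¬ (contractedEnds P b F e).IsDiag).card + 1 ≤
      (J \ removableEdges P F).card + Fintype.card V := by
  set X := (unitEdges P F \ (J ∩ removableEdges P F)).filter
    fun e ↦ ¬ (contractedEnds P b F e).IsDiag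
  set Y := (J \ removableEdges P F).filter fun e ↦ ¬ (contractedEnds P b F e).IsDiag
  let j (e : GadgetEdge P F) : ℕ := if e ∈ J then 1 else 0
  let met : GadgetEdge P F → ℕ := Sum.elim (fun w ↦ if w ∈ P then j (.inl w) else 0) <|
    Sum.elim (fun w ↦ j (.inr (.inl w))) <| Sum.elim (fun w ↦ j (.inr (.inr (.inl w)))) 0
  let kept : GadgetEdge P F → ℕ := Sum.elim (fun w ↦ if w = ⊥ then 0 else 1) <|
    Sum.elim 0 <| Sum.elim 1 0
  have hpointwise (e : GadgetEdge P F) :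
      (if e ∈ X then 1 else 0) + (if e ∈ Y then 1 else 0) + met e ≤
        (if e ∈ J \ removableEdges P F then 1 else 0) + kept e := by
    have hloop : ⊥ ∉ P := fun hP ↦ h.ne_bot hP rfl
    simp only [X, Y, Finset.mem_filter, Finset.mem_sdiff, Finset.mem_inter, mem_unitEdges,
      mem_removableEdges]
    obtain w | w | w | q := e
    · by_cases hw : w = ⊥
      · simp [hw, hloop, met, contractedEnds_tree]
      · by_cases w ∈ P <;> by_cases .inl w ∈ J <;>
          simp_all [met, kept, j, gadgetWeight, isRemovable] <;> grind
    · simp [met, kept, j, contractedEnds, gadgetEnds, isRemovable]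
    · by_cases .inr (.inr (.inl w)) ∈ J <;>
        simp_all [met, kept, j, gadgetWeight, isRemovable]
      grind
    · by_cases .inr (.inr (.inr q)) ∈ J <;>
        simp_all [met, kept, j, gadgetWeight, isRemovable]
      grind
  have hmet : ∑ e, met e = P.card := by
    have hw (w : P) : j (.inl w.1) + j (.inr (.inl w)) + j (.inr (.inr (.inl w))) = 1 :=
      (card_cutEdges_gadgetEnds_inr w.2).symm.trans (hone w.1 w.2)
    simp only [Fintype.sum_sum_type, met, Sum.elim_inl, Sum.elim_inr]
    rw [Finset.sum_ite_mem, Finset.univ_inter, ← Finset.sum_coe_sort]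
    simp only [Pi.zero_apply, Finset.sum_const_zero, add_zero, ← add_assoc]
    simp [← Finset.sum_add_distrib, hw]
  have hkept : ∑ e, kept e + 1 = Fintype.card V + P.card := by
    have hpos : 0 < Fintype.card V := Fintype.card_pos_iff.mpr ⟨⊥⟩
    simp [kept, Finset.sum_ite, Finset.filter_ne']
    lia
  have hsum := Finset.sum_le_sum fun e (_ : e ∈ Finset.univ) ↦ hpointwise e
  simp only [Finset.sum_add_distrib, Finset.sum_boole, Finset.filter_univ_mem, Nat.cast_id] at hsum
  lia

end Gadget

theorem IsBackCover.exists_spanning_closed_walk {V : Type*} [PartialOrder V] [OrderBot V]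
    [PredOrder V] [Fintype V] {G : SimpleGraph V} {P : Finset V} {b : V → V} {F : Finset (V × V)}
    (h : IsBackCover G P b F) (hadj : ∀ w ≠ ⊥, G.Adj (Order.pred w) w) :
    ∃ W : G.Walk ⊥ ⊥, (∀ v, v ∈ W.support) ∧
      3 * W.length + 4 ≤ 4 * Fintype.card V + 2 * F.card := by
  classical
  obtain ⟨J, hJ, hone, hcard⟩ := h.exists_gadget_join
  have hJ' : boundary (contractedEnds P b F) J =
      boundary (contractedEnds P b F) (unitEdges P F) := by
    rw [contractedEnds, boundary_map, boundary_map, hJ]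
  have hG (e : GadgetEdge P F) (he : ¬ (contractedEnds P b F e).IsDiag) :
      contractedEnds P b F e ∈ G.edgeSet := by
    obtain w | w | w | q := e
    · rw [contractedEnds_tree] at he ⊢
      refine hadj w ?_
      rintro rfl
      exact he (by simp)
    · exact (he rfl).elim
    · exact h.adj w.2
    · exact h.free_adj q.2
  obtain ⟨W, hW, hlen⟩ := exists_spanning_closed_walk_of_removable hG
    removableEdges_subset_unitEdges hJ' fun S hbot hS ↦
      h.eq_univ_of_closed hone hbot fun e he heJ ↦ hS e <| by
        simpa [mem_unitEdges, mem_removableEdges, he] using heJ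
  have htour := h.card_tour_add_one_le hone
  exact ⟨W, hW, by lia⟩

section Rounding

section Telescoping

variable {V : Type*} [PartialOrder V] [PredOrder V] [Fintype V]

open Classical in
/-- In a tree order the vertices `w` with `a < w ≤ y` form the path from `a` to `y`. -/
lemma sum_path_sub_pred {M : Type*} [AddCommGroup M] (φ : V → M) {a y : V} (hay : a ≤ y) :
    ∑ w with a < w ∧ w ≤ y, (φ w - φ (Order.pred w)) = φ y - φ a := by
  induction y using WellFoundedLT.induction with | _ y ih =>
  obtain rfl | hlt := hay.eq_or_lt
  · rw [Finset.filter_false_of_mem fun w _ h ↦ (h.1.trans_le h.2).false, Finset.sum_empty, sub_self]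
  have hpred : Order.pred y < y := Order.pred_lt_of_not_isMin hlt.not_isMin
  have hpath : ({w | a < w ∧ w ≤ y} : Finset V) =
      insert y ({w | a < w ∧ w ≤ Order.pred y} : Finset V) := by
    ext w
    simp only [Finset.mem_filter_univ, Finset.mem_insert, Order.le_iff_eq_or_le_pred (a := y)]
    grind
  rw [hpath, Finset.sum_insert (by simp [hpred.not_ge]), ih _ hpred (Order.le_pred_of_lt hlt),
    sub_add_sub_cancel]

end Telescoping

lemma sum_mul_netInflow {N A 𝕜 : Type*} [DecidableEq N] [Fintype N] [Fintype A] [Field 𝕜]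
    (s t : A → N) (φ : N → 𝕜) (f : A → 𝕜) :
    ∑ n, φ n * netInflow s t n f = ∑ a, (φ (t a) - φ (s a)) * f a := by
  simp only [netInflow_apply, Finset.mul_sum]
  rw [Finset.sum_comm]
  refine Finset.sum_congr rfl fun a _ ↦ ?_
  simp [incidence, ← mul_assoc, ← Finset.sum_mul, mul_sub, Finset.sum_sub_distrib]

lemma forall_netInflow_eq_zero_iff {N A 𝕜 : Type*} [DecidableEq N] [Finite N] [Fintype A]
    [Field 𝕜] {s t : A → N} {f : A → 𝕜} :
    (∀ n, netInflow s t n f = 0) ↔ ∀ φ : N → 𝕜, ∑ a, (φ (t a) - φ (s a)) * f a = 0 := by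
  cases nonempty_fintype N
  simp only [← sum_mul_netInflow]
  exact ⟨fun h φ ↦ by simp [h], fun h n ↦ by simpa [Pi.single_apply] using h (Pi.single n 1)⟩

section Excess

variable {V 𝕜 : Type*} [Ring 𝕜] [LinearOrder 𝕜]

/-- The number of back edges towards the parent of `w` that have to be paid for when their total
weight is `x`: for `w ∈ N`, one of them is free of charge. -/
noncomputable def excess (N : Set V) (w : V) (x : 𝕜) : 𝕜 :=
  open Classical in if w ∈ N then max 0 (x - 1) else x

variable [IsStrictOrderedRing 𝕜] {N : Set V} {w : V}

open Classical in
lemma excess_eq_add (x : 𝕜) :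
    excess N w x = (if w ∈ N then 0 else 1) * min 1 x + max 0 (x - 1) := by
  unfold excess
  grind

open Classical in
lemma excess_add_le {x y : 𝕜} (hx : x ≤ 1) (hy : 0 ≤ y) :
    excess N w (x + y) ≤ (if w ∈ N then 0 else 1) * x + y := by
  unfold excess
  grind

lemma excess_intCast (x : ℤ) : excess N w (x : 𝕜) = (excess N w x : ℤ) := by
  simp only [excess]
  split_ifs <;> push_cast <;> rfl

end Excess

variable {V 𝕜 : Type*} [Fintype V]

/-- The total weight of the pairs `(y, w)` with a given second component `w`. In the tour
construction, such a pair stands for an edge from `y` to the parent of `w`. -/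
def inflow [AddCommMonoid 𝕜] (f : V × V → 𝕜) (w : V) : 𝕜 := ∑ y, f (y, w)

open Classical in
/-- The total weight of the pairs `(y, u)` whose tree path from `u` to `y` contains the tree edge
above `c`. -/
noncomputable def treeLoad [Preorder V] [AddCommMonoid 𝕜] (f : V × V → 𝕜) (c : V) : 𝕜 :=
  ∑ p with p.2 < c ∧ c ≤ p.1, f p

lemma sum_mul_inflow [CommSemiring 𝕜] (φ : V → 𝕜) (f : V × V → 𝕜) :
    ∑ w, φ w * inflow f w = ∑ p : V × V, φ p.2 * f p := by
  simp only [inflow, Finset.mul_sum, Fintype.sum_prod_type_right]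

section Network

/-- The tail of an arc of the rounding network. The network has two nodes for each `w : V`, an inner
one `inl w` and a port `inr w`. Its arcs are the tree arcs from the parent of `w` to `w`, the back
arcs from `y` to the port of `w`, and for each `w` two arcs from the port of `w` to `w`: the first
one has capacity one and is free of charge for `w ∈ N`. -/
def networkTail [Preorder V] [PredOrder V] : V ⊕ (V × V) ⊕ V ⊕ V → V ⊕ V :=
  Sum.elim (fun w ↦ .inl (Order.pred w)) <| Sum.elim (fun p ↦ .inl p.1) <| Sum.elim .inr .inr

/-- The head of an arc of the rounding network, see `networkTail`. -/
def networkHead : V ⊕ (V × V) ⊕ V ⊕ V → V ⊕ V :=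
  Sum.elim .inl <| Sum.elim (fun p ↦ .inr p.2) <| Sum.elim .inl .inl

open Classical in
/-- The costs of the arcs of the rounding network, see `networkTail`. -/
noncomputable def networkCost [Semiring 𝕜] (N : Set V) : V ⊕ (V × V) ⊕ V ⊕ V → 𝕜 :=
  Sum.elim 0 <| Sum.elim 0 <| Sum.elim (fun w ↦ if w ∈ N then 0 else 1) 1

open Classical in
lemma sum_networkCost_mul [Semiring 𝕜] (N : Set V) (x : V ⊕ (V × V) ⊕ V ⊕ V → 𝕜) :
    ∑ a, networkCost N a * x a = ∑ w, ((if w ∈ N then 0 else 1) * x (.inr (.inr (.inl w))) +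
      x (.inr (.inr (.inr w)))) := by
  simp [networkCost, Fintype.sum_sum_type, Finset.sum_add_distrib]

variable [PartialOrder V] [PredOrder V]

lemma sum_network_eq [CommRing 𝕜] (φ : V ⊕ V → 𝕜) (x : V ⊕ (V × V) ⊕ V ⊕ V → 𝕜) :
    ∑ a, (φ (networkHead a) - φ (networkTail a)) * x a =
      ∑ w, (φ (.inl w) - φ (.inl (Order.pred w))) * x (.inl w) +
      ∑ p : V × V, (φ (.inr p.2) - φ (.inl p.1)) * x (.inr (.inl p)) +
      ∑ w, (φ (.inl w) - φ (.inr w)) *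
        (x (.inr (.inr (.inl w))) + x (.inr (.inr (.inr w)))) := by
  simp only [Fintype.sum_sum_type, networkHead, networkTail, Sum.elim_inl, Sum.elim_inr, mul_add,
    Finset.sum_add_distrib]
  ring

lemma sum_sub_pred_mul_treeLoad [CommRing 𝕜] (φ : V → 𝕜) {f : V × V → 𝕜}
    (hf : ∀ p, f p ≠ 0 → p.2 ≤ p.1) :
    ∑ w, (φ w - φ (Order.pred w)) * treeLoad f w = ∑ p : V × V, (φ p.1 - φ p.2) * f p := by
  classical
  simp only [treeLoad, Finset.sum_filter, Finset.mul_sum]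
  rw [Finset.sum_comm]
  refine Finset.sum_congr rfl fun p _ ↦ ?_
  obtain hp | hp := eq_or_ne (f p) 0
  · simp [hp]
  rw [← sum_path_sub_pred φ (hf p hp), Finset.sum_filter, Finset.sum_mul]
  simp only [ite_mul, zero_mul, mul_ite, mul_zero]

lemma sum_network_eq_zero [CommRing 𝕜] (φ : V ⊕ V → 𝕜) {f : V × V → 𝕜} {h k : V → 𝕜}
    (hf : ∀ p, f p ≠ 0 → p.2 ≤ p.1) (hhk : ∀ w, h w + k w = inflow f w) :
    ∑ a, (φ (networkHead a) - φ (networkTail a)) *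
      Sum.elim (treeLoad f) (Sum.elim f (Sum.elim h k)) a = 0 := by
  simp only [sum_network_eq, Sum.elim_inl, Sum.elim_inr, hhk, sum_mul_inflow (fun _ ↦ _ - _),
    sum_sub_pred_mul_treeLoad (fun w ↦ φ (.inl w)) hf, ← Finset.sum_add_distrib]
  refine Finset.sum_eq_zero fun p _ ↦ ?_
  ring

section Circulation

variable [CommRing 𝕜] {x : V ⊕ (V × V) ⊕ V ⊕ V → 𝕜}

lemma inflow_eq_of_circulation
    (hx : ∀ φ : V ⊕ V → 𝕜, ∑ a, (φ (networkHead a) - φ (networkTail a)) * x a = 0) (w : V) :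
    inflow (fun p ↦ x (.inr (.inl p))) w =
      x (.inr (.inr (.inl w))) + x (.inr (.inr (.inr w))) := by
  classical
  have h := hx (Sum.elim 0 (Pi.single w 1))
  rw [sum_network_eq] at h
  simp [Pi.single_apply, Fintype.sum_prod_type] at h
  rw [inflow]
  linear_combination h

/-- Only the tree arc above `c` enters the subtree of `c`, and only the back arcs counted by
`treeLoad` leave it. -/
lemma treeLoad_eq_of_circulation [OrderBot V]
    (hx : ∀ φ : V ⊕ V → 𝕜, ∑ a, (φ (networkHead a) - φ (networkTail a)) * x a = 0)
    (hsupp : ∀ p, x (.inr (.inl p)) ≠ 0 → p.2 ≤ p.1) {c : V} (hc : c ≠ ⊥) :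
    treeLoad (fun p ↦ x (.inr (.inl p))) c = x (.inl c) := by
  classical
  set φ : V → 𝕜 := fun v ↦ if c ≤ v then 1 else 0
  have h := hx (Sum.elim φ φ)
  have htree (w : V) : φ w - φ (Order.pred w) = if w = c then 1 else 0 := by
    have hle := Order.le_iff_eq_or_le_pred (b := c) (a := w)
    have hnot : ¬ c ≤ Order.pred c := (Order.pred_lt_of_not_isMin hc.bot_lt.not_isMin).not_ge
    grind
  have hback (p : V × V) : (φ p.2 - φ p.1) * x (.inr (.inl p)) =
      if p.2 < c ∧ c ≤ p.1 then - x (.inr (.inl p)) else 0 := by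
    obtain hp | hp := eq_or_ne (x (.inr (.inl p))) 0
    · simp [hp]
    have hle : p.2 ≤ p.1 := hsupp p hp
    have hlt (hcp : c ≤ p.1) (hc : ¬ c ≤ p.2) : p.2 < c :=
      ((le_total_of_directed hcp hle).resolve_right hc).lt_of_not_ge hc
    grind
  rw [sum_network_eq] at h
  simp only [Sum.elim_inl, Sum.elim_inr, htree, hback, sub_self, zero_mul, Finset.sum_const_zero,
    add_zero, ite_mul, one_mul, Finset.sum_ite_eq', Finset.mem_univ, if_true, ← Finset.sum_filter,
    Finset.sum_neg_distrib, ← sub_eq_add_neg, sub_eq_zero] at h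
  exact h.symm

end Circulation

variable [Field 𝕜] [LinearOrder 𝕜] [IsStrictOrderedRing 𝕜] [FloorRing 𝕜]

theorem exists_integral_back_arcs [OrderBot V] {f : V × V → 𝕜} (hf : ∀ p, 0 ≤ f p)
    (hsupp : ∀ p, f p ≠ 0 → p.2 ≤ p.1) (N : Set V) :
    ∃ g : V × V → ℤ, (∀ p, 0 ≤ g p) ∧ (∀ p, g p ≠ 0 → f p ≠ 0) ∧
      (∀ c ≠ ⊥, 1 ≤ treeLoad f c → 1 ≤ treeLoad g c) ∧
      (∀ w, 1 ≤ inflow f w → 1 ≤ inflow g w) ∧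
      ∑ w, excess N w (↑(inflow g w) : 𝕜) ≤ ∑ w, excess N w (inflow f w) := by
  classical
  have hsplit (w : V) : min 1 (inflow f w) + max 0 (inflow f w - 1) = inflow f w := by grind
  have hinflow (w : V) : 0 ≤ inflow f w := Finset.sum_nonneg fun y _ ↦ hf _
  obtain ⟨x, hx, hround, hcost⟩ := exists_integral_circulation_le networkTail networkHead
    (networkCost N) (forall_netInflow_eq_zero_iff.mpr fun φ ↦ sum_network_eq_zero φ hsupp hsplit)
  replace hx (φ : V ⊕ V → ℤ) : ∑ a, (φ (networkHead a) - φ (networkTail a)) * x a = 0 := by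
    exact_mod_cast forall_netInflow_eq_zero_iff.mp hx fun n ↦ φ n
  have hxinflow := inflow_eq_of_circulation hx
  have hxnonneg (a) : 0 ≤ x a := (Int.floor_nonneg.mpr (by
    obtain w | p | w | w := a <;> simp [treeLoad, Finset.sum_nonneg, hf, hinflow])).trans
      (hround a).1
  have hxsupp (p : V × V) (hp : x (.inr (.inl p)) ≠ 0) : f p ≠ 0 := by
    rintro h₀
    have hp₀ := hround (.inr (.inl p))
    simp only [Sum.elim_inr, Sum.elim_inl, h₀, Int.floor_zero, Int.ceil_zero] at hp₀
    exact hp (le_antisymm hp₀.2 hp₀.1)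
  refine ⟨fun p ↦ x (.inr (.inl p)), fun p ↦ hxnonneg _, hxsupp, fun c hc hfc ↦ ?_,
    fun w hfw ↦ ?_, ?_⟩
  · rw [treeLoad_eq_of_circulation hx (fun p hp ↦ hsupp p (hxsupp p hp)) hc]
    exact (Int.le_floor.mpr (by simpa using hfc)).trans (hround (.inl c)).1
  · have hfloor := (hround (.inr (.inr (.inl w)))).1
    simp only [Sum.elim_inr, Sum.elim_inl, min_eq_left hfw, Int.floor_one] at hfloor
    linarith [hxinflow w, hxnonneg (.inr (.inr (.inr w)))]
  · simp only [sum_networkCost_mul, Sum.elim_inl, Sum.elim_inr, ← excess_eq_add] at hcost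
    refine (Finset.sum_le_sum fun w _ ↦ ?_).trans hcost
    have hcapacity : x (.inr (.inr (.inl w))) ≤ 1 :=
      (hround (.inr (.inr (.inl w)))).2.trans (Int.ceil_le.mpr (by simp))
    rw [hxinflow, Int.cast_add]
    exact excess_add_le (by exact_mod_cast hcapacity) (by exact_mod_cast hxnonneg _)

end Network

section BackFlow

open Classical in
lemma card_support_sub_card_le_sum_excess {V : Type*} [Fintype V] {N : Set V} {P : Finset V}
    {g : V × V → ℤ} (hg : ∀ p, 0 ≤ g p) (hP : ∀ w, w ∈ P ↔ w ∈ N ∧ ∃ y, g (y, w) ≠ 0) :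
    (({p | g p ≠ 0} : Finset (V × V)).card : ℤ) - P.card ≤ ∑ w, excess N w (inflow g w) := by
  calc (({p | g p ≠ 0} : Finset (V × V)).card : ℤ) - P.card
      ≤ ∑ p, g p - P.card := by
        rw [Finset.card_filter, Nat.cast_sum]
        exact sub_le_sub_right (Finset.sum_le_sum fun p _ ↦ by grind) _
    _ = ∑ w, (inflow g w - if w ∈ P then 1 else 0) := by
        simp [inflow, Finset.sum_sub_distrib, Fintype.sum_prod_type_right]
    _ ≤ ∑ w, excess N w (inflow g w) := Finset.sum_le_sum fun w _ ↦ ?_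
  have hzero (hwN : w ∈ N) (hwP : w ∉ P) : inflow g w = 0 :=
    Finset.sum_eq_zero fun y _ ↦ by grind
  unfold excess
  grind

variable [PartialOrder V] [OrderBot V] [PredOrder V] {G : SimpleGraph V} {N : Set V}

lemma exists_isBackCover_of_integral {g : V × V → ℤ} (hg : ∀ p, 0 ≤ g p)
    (hsupp : ∀ p, g p ≠ 0 → p.2 ≠ ⊥ ∧ p.2 ≤ p.1 ∧ G.Adj p.1 (Order.pred p.2))
    (hload : ∀ c ∈ N, c ≠ ⊥ → 1 ≤ treeLoad g c) (hinflow : ∀ c ∉ N, c ≠ ⊥ → 1 ≤ inflow g c) :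
    ∃ P b F, IsBackCover G P b F ∧ (F.card : ℤ) ≤ ∑ w, excess N w (inflow g w) := by
  classical
  let B : Finset (V × V) := {p | g p ≠ 0}
  let P : Finset V := {w | w ∈ N ∧ ∃ y, g (y, w) ≠ 0}
  have hB {p : V × V} : p ∈ B ↔ g p ≠ 0 := Finset.mem_filter_univ p
  have hP {w : V} : w ∈ P ↔ w ∈ N ∧ ∃ y, g (y, w) ≠ 0 := Finset.mem_filter_univ w
  have hb (w : V) (hw : w ∈ P) : ∃ y, g (y, w) ≠ 0 := (hP.mp hw).2
  choose! b hb using hb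
  let chosen : Finset (V × V) := P.image fun w ↦ (b w, w)
  have hchosen : chosen ⊆ B := Finset.image_subset_iff.mpr fun w hw ↦ hB.mpr (hb w hw)
  have hcard : chosen.card = P.card :=
    Finset.card_image_of_injective _ fun _ _ h ↦ (Prod.ext_iff.mp h).2
  have hF : ((B \ chosen).card : ℤ) ≤ ∑ w, excess N w (inflow g w) := by
    rw [Finset.cast_card_sdiff hchosen, hcard]
    exact card_support_sub_card_le_sum_excess hg fun _ ↦ hP
  refine ⟨P, b, B \ chosen, ⟨fun hw ↦ (hsupp _ (hb _ hw)).1, fun hw ↦ (hsupp _ (hb _ hw)).2.2,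
    fun hw ↦ (hsupp _ (hb _ hw)).2.1, fun hq ↦ (hsupp _ (hB.mp (Finset.sdiff_subset hq))).2.2,
    fun {c} hc ↦ ?_⟩, hF⟩
  by_cases hcN : c ∈ N
  · obtain ⟨q, hq, hgq⟩ := Finset.exists_ne_zero_of_sum_ne_zero
      (zero_lt_one.trans_le (hload c hcN hc)).ne'
    rw [Finset.mem_filter_univ] at hq
    by_cases hqc : q ∈ chosen
    · obtain ⟨w, hw, rfl⟩ := Finset.mem_image.mp hqc
      exact .inl ⟨w, hw, hq⟩
    · exact .inr ⟨q, Finset.mem_sdiff.mpr ⟨hB.mpr hgq, hqc⟩, hq.1.le, hq.2⟩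
  · obtain ⟨y, -, hgy⟩ := Finset.exists_ne_zero_of_sum_ne_zero
      (zero_lt_one.trans_le (hinflow c hcN hc)).ne'
    refine .inr ⟨(y, c), Finset.mem_sdiff.mpr ⟨hB.mpr hgy, fun hyc ↦ ?_⟩, le_rfl, (hsupp _ hgy).2.1⟩
    obtain ⟨w, hw, hwc⟩ := Finset.mem_image.mp hyc
    obtain rfl : w = c := (Prod.ext_iff.mp hwc).2
    exact hcN (hP.mp hw).1

theorem exists_spanning_closed_walk_of_back_flow {𝕜 : Type*} [Field 𝕜] [LinearOrder 𝕜]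
    [IsStrictOrderedRing 𝕜] [FloorRing 𝕜] (hadj : ∀ w ≠ ⊥, G.Adj (Order.pred w) w)
    {f : V × V → 𝕜} (hf : ∀ p, 0 ≤ f p)
    (hsupp : ∀ p, f p ≠ 0 → p.2 ≠ ⊥ ∧ p.2 ≤ p.1 ∧ G.Adj p.1 (Order.pred p.2))
    (hload : ∀ c ∈ N, c ≠ ⊥ → 1 ≤ treeLoad f c) (hinflow : ∀ c ∉ N, c ≠ ⊥ → 1 ≤ inflow f c) :
    ∃ W : G.Walk ⊥ ⊥, (∀ v, v ∈ W.support) ∧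
      3 * (W.length : 𝕜) + 4 ≤ 4 * Fintype.card V + 2 * ∑ w, excess N w (inflow f w) := by
  obtain ⟨g, hg, hgsupp, hgload, hginflow, hcost⟩ :=
    exists_integral_back_arcs hf (fun p hp ↦ (hsupp p hp).2.1) N
  obtain ⟨P, b, F, hcover, hF⟩ := exists_isBackCover_of_integral hg
    (fun p hp ↦ hsupp p (hgsupp p hp)) (fun c hcN hc ↦ hgload c hc (hload c hcN hc))
    fun c hcN hc ↦ hginflow c (hinflow c hcN hc)
  obtain ⟨W, hW, hlen⟩ := hcover.exists_spanning_closed_walk hadj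
  refine ⟨W, hW, ?_⟩
  have hF' : (F.card : 𝕜) ≤ ∑ w, excess N w (↑(inflow g w) : 𝕜) := by
    simp only [excess_intCast]
    exact_mod_cast hF
  have hlen' : 3 * (W.length : 𝕜) + 4 ≤ 4 * Fintype.card V + 2 * F.card := by exact_mod_cast hlen
  linarith

end BackFlow

end Rounding

section Surcharge

lemma excess_add_le_excess_add {V 𝕜 : Type*} [Ring 𝕜] [LinearOrder 𝕜] [IsStrictOrderedRing 𝕜]
    {N : Set V} {w : V} {x y : 𝕜} (hy : 0 ≤ y) : excess N w (x + y) ≤ excess N w x + y := by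
  unfold excess
  grind

variable {V 𝕜 : Type*} [Fintype V]

section Monoid

variable [AddCommMonoid 𝕜]

lemma inflow_add (f g : V × V → 𝕜) (w : V) : inflow (f + g) w = inflow f w + inflow g w :=
  Finset.sum_add_distrib

lemma sum_inflow (f : V × V → 𝕜) : ∑ w, inflow f w = ∑ p, f p :=
  (Fintype.sum_prod_type_right f).symm

lemma treeLoad_add [Preorder V] (f g : V × V → 𝕜) (c : V) :
    treeLoad (f + g) c = treeLoad f c + treeLoad g c :=
  Finset.sum_add_distrib

variable [PartialOrder 𝕜] [IsOrderedAddMonoid 𝕜] {f : V × V → 𝕜}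

lemma inflow_nonneg (hf : 0 ≤ f) (w : V) : 0 ≤ inflow f w :=
  Finset.sum_nonneg fun _ _ ↦ hf _

lemma treeLoad_nonneg [Preorder V] (hf : 0 ≤ f) (c : V) : 0 ≤ treeLoad f c :=
  Finset.sum_nonneg fun _ _ ↦ hf _

lemma le_inflow (hf : 0 ≤ f) (p : V × V) : f p ≤ inflow f p.2 :=
  Finset.single_le_sum (f := fun y ↦ f (y, p.2)) (fun _ _ ↦ hf _) (Finset.mem_univ p.1)

open Classical in
lemma le_treeLoad [Preorder V] (hf : 0 ≤ f) {p : V × V} {c : V} (hpc : p.2 < c) (hcp : c ≤ p.1) :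
    f p ≤ treeLoad f c :=
  Finset.single_le_sum (fun p _ ↦ hf p) (Finset.mem_filter.2 ⟨Finset.mem_univ p, hpc, hcp⟩)

end Monoid

variable [LinearOrder 𝕜]

section Definitions

variable [Ring 𝕜] [PartialOrder V] [OrderBot V]

/-- The flow that has to be added to `g` in order to give `w` the load (if there already is some)
or else the inflow `1`. -/
noncomputable def deficiency (g : V × V → 𝕜) (w : V) : 𝕜 :=
  open Classical in
  if w = ⊥ then 0 else max 0 (1 - if 0 < treeLoad g w then treeLoad g w else inflow g w)

/-- The share of `w` in the cost of turning the flow `g` on back arcs into a tour. -/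
noncomputable def surcharge (g : V × V → 𝕜) (w : V) : 𝕜 :=
  excess {v | 0 < treeLoad g v} w (inflow g w) + deficiency g w

lemma deficiency_nonneg (g : V × V → 𝕜) (w : V) : 0 ≤ deficiency g w := by
  unfold deficiency
  split_ifs <;> simp

end Definitions

variable [PartialOrder V] [OrderBot V] [PredOrder V] [Field 𝕜] {G : SimpleGraph V} {g : V × V → 𝕜}

open Classical in
lemma exists_back_arc_of_load (hadj : ∀ w ≠ ⊥, G.Adj (Order.pred w) w)
    (hsupp : ∀ p, g p ≠ 0 → p.2 ≠ ⊥ ∧ p.2 ≤ p.1 ∧ G.Adj p.1 (Order.pred p.2)) {c : V} (hc : c ≠ ⊥) :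
    ∃ p : V × V, (p.2 ≠ ⊥ ∧ p.2 ≤ p.1 ∧ G.Adj p.1 (Order.pred p.2)) ∧
      if 0 < treeLoad g c then p.2 < c ∧ c ≤ p.1 else p.2 = c := by
  split_ifs with hload
  · obtain ⟨p, hp, hgp⟩ := Finset.exists_ne_zero_of_sum_ne_zero hload.ne'
    exact ⟨p, hsupp p hgp, (Finset.mem_filter_univ p).1 hp⟩
  · exact ⟨(c, c), ⟨hc, le_rfl, (hadj c hc).symm⟩, rfl⟩

open Classical in
theorem exists_spanning_closed_walk_of_surcharge [IsStrictOrderedRing 𝕜]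
    [FloorRing 𝕜] (hadj : ∀ w ≠ ⊥, G.Adj (Order.pred w) w) (hg : 0 ≤ g)
    (hsupp : ∀ p, g p ≠ 0 → p.2 ≠ ⊥ ∧ p.2 ≤ p.1 ∧ G.Adj p.1 (Order.pred p.2)) :
    ∃ W : G.Walk ⊥ ⊥, (∀ v, v ∈ W.support) ∧
      3 * (W.length : 𝕜) + 4 ≤ 4 * Fintype.card V + 2 * ∑ w, surcharge g w := by
  choose! b hbsupp hb using fun c hc ↦ exists_back_arc_of_load hadj hsupp (c := c) hc
  let N : Set V := {v | 0 < treeLoad g v}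
  let h : V × V → 𝕜 := fun p ↦ ∑ c with b c = p, deficiency g c
  have hh : 0 ≤ h := fun p ↦ Finset.sum_nonneg fun c _ ↦ deficiency_nonneg g c
  have hdh (c : V) : deficiency g c ≤ h (b c) :=
    Finset.single_le_sum (fun c _ ↦ deficiency_nonneg g c) (by simp)
  obtain ⟨W, hW, hlen⟩ := exists_spanning_closed_walk_of_back_flow (N := N) (f := g + h) hadj
    (add_nonneg hg hh) (fun p hp ↦ by
      by_cases hgp : g p = 0
      · obtain ⟨c, hc, hdc⟩ := Finset.exists_ne_zero_of_sum_ne_zero (s := {c | b c = p})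
          (f := deficiency g) (by simpa [hgp] using hp)
        rw [← (Finset.mem_filter_univ c).1 hc]
        exact hbsupp c fun hbot ↦ hdc (if_pos hbot)
      · exact hsupp p hgp)
    (fun c (hload : 0 < treeLoad g c) hc ↦ by
      have hbc := hb c hc
      rw [if_pos hload] at hbc
      have hdef : 1 - treeLoad g c ≤ deficiency g c := by simp [deficiency, hc, hload]
      have := hdef.trans ((hdh c).trans (le_treeLoad hh hbc.1 hbc.2))
      rw [treeLoad_add]
      linarith)
    (fun c (hload : ¬ 0 < treeLoad g c) hc ↦ by
      have hbc := hb c hc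
      rw [if_neg hload] at hbc
      have hdef : 1 - inflow g c ≤ deficiency g c := by simp [deficiency, hc, hload]
      have := hdef.trans ((hdh c).trans (hbc ▸ le_inflow hh (b c)))
      rw [inflow_add]
      linarith)
  refine ⟨W, hW, hlen.trans ?_⟩
  have hsum : ∑ w, excess N w (inflow (g + h) w) ≤ ∑ w, surcharge g w := calc
    _ ≤ ∑ w, (excess N w (inflow g w) + inflow h w) :=
      Finset.sum_le_sum fun w _ ↦ inflow_add g h w ▸ excess_add_le_excess_add (inflow_nonneg hh w)
    _ = ∑ w, (excess N w (inflow g w) + deficiency g w) := by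
      rw [Finset.sum_add_distrib, sum_inflow, Finset.sum_fiberwise, Finset.sum_add_distrib]
  linarith

end Surcharge

section ChildCost

variable {𝕜 : Type*} [Field 𝕜] [LinearOrder 𝕜] [IsStrictOrderedRing 𝕜]

lemma max_sub_one_le {k : ℕ} {b s : 𝕜} (hb : b * (k + 1) ≤ k * s) :
    max 0 (b - 1) ≤ k / 6 + max 0 (s - 2) := by
  have hk : (0 : 𝕜) < k + 1 := by positivity
  have hquad : 6 * ((k : 𝕜) - 1) ≤ k * (k + 1) := by
    have : 6 * ((k : ℤ) - 1) ≤ k * (k + 1) := by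
      obtain h | h := le_or_gt (k : ℤ) 2 <;> nlinarith
    exact_mod_cast this
  have hs : (k : 𝕜) * (s - 2) ≤ (k + 1) * max 0 (s - 2) :=
    (mul_le_mul_of_nonneg_left (le_max_right 0 _) k.cast_nonneg).trans
      (mul_le_mul_of_nonneg_right (by linarith) (le_max_left _ _))
  refine max_le (by positivity) (le_of_mul_le_mul_right ?_ hk)
  linarith

open Finset in
lemma sum_add_le_sum_add_sub_two {ι : Type*} {C : Finset ι} {κ e s d : ι → 𝕜} {X : 𝕜}
    (hκ : ∀ i ∈ C, 0 ≤ κ i) (hs : ∀ i ∈ C, 0 ≤ s i) (he : ∀ i ∈ C, e i ≤ max 0 (s i - 1))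
    (heκ : ∀ i ∈ C, e i ≤ κ i + max 0 (s i - 2)) (hd : ∀ i ∈ C, d i ≤ min 1 (max 0 (s i - 1)))
    (hdX : ∀ i ∈ C, d i ≤ max 0 (X - s i - 1)) (hX : 2 ≤ X) (hsX : ∑ i ∈ C, s i ≤ X) :
    ∑ i ∈ C, (e i + d i) ≤ ∑ i ∈ C, κ i + X - 2 := by
  let A := C.filter (1 < s ·)
  have hAC : A ⊆ C := filter_subset _ _
  have hheavy {i : ι} (hi : i ∈ A) : 1 < s i := (mem_filter.1 hi).2
  have hκA : ∑ i ∈ A, κ i ≤ ∑ i ∈ C, κ i :=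
    sum_le_sum_of_subset_of_nonneg hAC fun i hi _ ↦ hκ i hi
  have hsA : ∑ i ∈ A, s i ≤ X :=
    (sum_le_sum_of_subset_of_nonneg hAC fun i hi _ ↦ hs i hi).trans hsX
  have hlight : ∑ i ∈ C with ¬ 1 < s i, (e i + d i) ≤ 0 := sum_nonpos fun i hi ↦ by
    obtain ⟨hiC, hi⟩ := mem_filter.1 hi
    grind
  suffices ∑ i ∈ A, (e i + d i) ≤ ∑ i ∈ A, κ i + X - 2 by
    rw [← sum_filter_add_sum_filter_not C (1 < s ·)]
    linarith
  obtain hA | ⟨i, hA⟩ | hA : A = ∅ ∨ (∃ i, A = {i}) ∨ 2 ≤ #A := by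
    rw [← card_eq_zero, ← card_eq_one]
    lia
  · simpa [hA] using hX
  · have hiA : i ∈ A := by simp [hA]
    have := hheavy hiA
    have := heκ i (hAC hiA)
    have := hdX i (hAC hiA)
    simp only [hA, sum_singleton] at hsA ⊢
    grind
  · have hcard : (2 : 𝕜) ≤ #A := by exact_mod_cast hA
    calc ∑ i ∈ A, (e i + d i)
        ≤ ∑ i ∈ A, (κ i + (s i - 1)) := sum_le_sum fun i hi ↦ by
          have := hheavy hi
          have := heκ i (hAC hi)
          have := hd i (hAC hi)
          grind
      _ = ∑ i ∈ A, κ i + (∑ i ∈ A, s i - #A) := by simp [sum_add_distrib, sum_sub_distrib]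
      _ ≤ ∑ i ∈ A, κ i + X - 2 := by linarith

end ChildCost

section TreeCuts

open Finset

section SymmetricSums

variable {V : Type*} [Fintype V] {x : Sym2 V → ℝ}

open Classical in
lemma sum_sym2_mk_eq (P : Finset (V × V)) (x : Sym2 V → ℝ) :
    ∑ p ∈ P, x s(p.1, p.2) = ∑ e, #{p ∈ P | s(p.1, p.2) = e} * x e := by
  rw [← sum_fiberwise P (fun p ↦ s(p.1, p.2))]
  refine sum_congr rfl fun e _ ↦ ?_
  rw [← nsmul_eq_mul, ← sum_const]
  exact sum_congr rfl fun p hp ↦ by rw [(mem_filter.1 hp).2]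

lemma cutWeight_le_sum_compl [DecidableEq V] (hx : ∀ e, 0 ≤ x e) (S : Finset V) :
    cutWeight S x ≤ ∑ u ∈ S, ∑ v ∈ Sᶜ, x s(u, v) := by
  classical
  rw [← sum_product' (f := fun u v ↦ x s(u, v)), sum_sym2_mk_eq, cutWeight_apply]
  refine sum_le_sum fun e _ ↦ mul_le_mul_of_nonneg_right ?_ (hx e)
  unfold cutIndicator
  split_ifs with h
  · obtain ⟨a, b, rfl, ha, hb⟩ := h
    exact_mod_cast card_pos.2 ⟨(a, b), by simp [ha, hb]⟩
  · positivity

lemma sum_sum_sym2_mk_le (hx : ∀ e, 0 ≤ x e) : ∑ u, ∑ v, x s(u, v) ≤ 2 * ∑ e, x e := by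
  classical
  rw [← Fintype.sum_prod_type' (f := fun u v ↦ x s(u, v)), sum_sym2_mk_eq, mul_sum]
  refine sum_le_sum fun e _ ↦ mul_le_mul_of_nonneg_right ?_ (hx e)
  induction e with | _ a b =>
  have hsub : ({p | s(p.1, p.2) = s(a, b)} : Finset (V × V)) ⊆ {(a, b), (b, a)} := by
    rintro ⟨u, v⟩ huv
    simpa [Sym2.eq_iff] using huv
  exact_mod_cast (card_le_card hsub).trans card_le_two

end SymmetricSums

section PathSum

variable {V M : Type*} [Fintype V] [PartialOrder V] [OrderBot V] [PredOrder V] [AddCommMonoid M]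

open Classical in
lemma filter_lt_eq_insert_pred {w : V} (hw : w ≠ ⊥) :
    ({a | a < w} : Finset V) = insert (Order.pred w) ({a | a < Order.pred w} : Finset V) := by
  ext a
  simp only [mem_filter_univ, mem_insert, ← le_iff_eq_or_lt]
  exact ⟨Order.le_pred_of_lt, fun h ↦ h.trans_lt (Order.pred_lt_of_not_isMin hw.bot_lt.not_isMin)⟩

open Classical in
lemma sum_pred_eq_sum_lt (φ : V → M) (w : V) :
    ∑ c with c ≠ ⊥ ∧ c ≤ w, φ (Order.pred c) = ∑ a with a < w, φ a := by
  induction w using WellFoundedLT.induction with | _ w ih =>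
  obtain rfl | hw := eq_or_ne w ⊥
  · rw [filter_false_of_mem fun c _ h ↦ h.1 (le_bot_iff.1 h.2),
      filter_false_of_mem fun a _ ↦ not_lt_bot, sum_empty, sum_empty]
  have hpred : Order.pred w < w := Order.pred_lt_of_not_isMin hw.bot_lt.not_isMin
  have hpath : ({c | c ≠ ⊥ ∧ c ≤ w} : Finset V) =
      insert w ({c | c ≠ ⊥ ∧ c ≤ Order.pred w} : Finset V) := by
    ext c
    simp only [mem_filter_univ, mem_insert, Order.le_iff_eq_or_le_pred (a := w)]
    grind
  rw [hpath, filter_lt_eq_insert_pred hw, sum_insert (by simp [hpred.not_ge]), ih _ hpred,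
    sum_insert (by simp)]

end PathSum

variable {V : Type*} [PartialOrder V] [PredOrder V] {x : Sym2 V → ℝ} {u v w : V}

lemma sum_leaving_subtree_le [Finite V] [OrderBot V] (hx : ∀ e, 0 ≤ x e)
    (hT : IsGreedyDFSOrder fun u v ↦ x s(u, v)) {T A : Finset V} (hwu : w ≤ u)
    (hTw : ∀ v ∈ T, ¬ w ≤ v) (hTA : ∀ v ∈ T, v < w → v ∈ A) :
    ∑ v ∈ T, x s(u, v) ≤ ∑ v ∈ A, x s(u, v) := by
  classical
  rw [← sum_filter_ne_zero]
  refine sum_le_sum_of_subset_of_nonneg (fun v hv ↦ ?_) fun _ _ _ ↦ hx _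
  obtain ⟨hvT, hxv⟩ := mem_filter.1 hv
  have hvu : v ≤ u := (hT.le_or_le ((hx _).lt_of_ne' hxv)).resolve_left fun huv ↦
    hTw v hvT (hwu.trans huv)
  have hvw : v ≤ w := (le_total_of_directed hwu hvu).resolve_right (hTw v hvT)
  exact hTA v hvT (hvw.lt_of_not_ge (hTw v hvT))

variable [Fintype V]

open Classical in
/-- The weight of the edges between the subtree at `w` and the parent of `w`. -/
noncomputable def subtreeWeight (x : Sym2 V → ℝ) (w : V) : ℝ :=
  ∑ y with w ≤ y, x s(y, Order.pred w)

open Classical in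
/-- The number of edges between the proper descendants of `w` and the parent of `w`. -/
noncomputable def backDegree (x : Sym2 V → ℝ) (w : V) : ℕ :=
  #{y | w < y ∧ x s(y, Order.pred w) ≠ 0}

lemma subtreeWeight_nonneg (hx : ∀ e, 0 ≤ x e) (w : V) : 0 ≤ subtreeWeight x w :=
  sum_nonneg fun _ _ ↦ hx _

variable [OrderBot V]

open Classical in
/-- The children of a vertex of the tree. -/
noncomputable def children (v : V) : Finset V := {c | c ≠ ⊥ ∧ Order.pred c = v}

open Classical in
/-- The weight `x` of the edges between a vertex `y` and an ancestor of it other than its parent,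
as a flow on the pairs `(y, w)` where `w` is the child of that ancestor on the tree path to `y`. -/
noncomputable def backFlow (x : Sym2 V → ℝ) (p : V × V) : ℝ :=
  if p.2 ≠ ⊥ ∧ p.2 < p.1 then x s(p.1, Order.pred p.2) else 0

lemma mem_children {c : V} : c ∈ children v ↔ c ≠ ⊥ ∧ Order.pred c = v := by
  simp [children]

open Classical in
lemma treeLoad_backFlow (w : V) :
    treeLoad (backFlow x) w = ∑ y with w ≤ y, ∑ a with a < Order.pred w, x s(y, a) := by
  rw [treeLoad, sum_filter, Fintype.sum_prod_type, sum_filter]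
  refine sum_congr rfl fun y _ ↦ ?_
  split_ifs with hwy
  · rw [← sum_pred_eq_sum_lt fun a ↦ x s(y, a), sum_filter]
    refine sum_congr rfl fun c _ ↦ ?_
    have hc : c ≠ ⊥ → (c ≤ Order.pred w ↔ c < w) := fun hc ↦
      ⟨fun h ↦ h.trans_lt (Order.pred_lt_of_not_isMin fun hw ↦ hc (by
        simpa [hw.eq_bot] using h)), Order.le_pred_of_lt⟩
    unfold backFlow
    grind
  · simp [hwy]

lemma subtreeWeight_eq (hw : w ≠ ⊥) :
    subtreeWeight x w = x s(w, Order.pred w) + inflow (backFlow x) w := by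
  classical
  have hsubtree : ({y | w ≤ y} : Finset V) = insert w ({y | w < y} : Finset V) := by
    ext y
    simp [le_iff_eq_or_lt, eq_comm]
  rw [subtreeWeight, hsubtree, sum_insert (by simp)]
  simp [inflow, backFlow, hw, sum_filter]

lemma inflow_backFlow_le (hT : IsGreedyDFSOrder fun u v ↦ x s(u, v)) (hw : w ≠ ⊥) :
    inflow (backFlow x) w ≤ backDegree x w * x s(w, Order.pred w) := by
  classical
  calc inflow (backFlow x) w
      = ∑ y with w < y, x s(y, Order.pred w) := by simp [inflow, backFlow, hw, sum_filter]
    _ = ∑ y with w < y ∧ x s(y, Order.pred w) ≠ 0, x s(y, Order.pred w) := by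
        rw [← filter_filter, sum_filter_ne_zero]
    _ ≤ backDegree x w * x s(w, Order.pred w) := by
        rw [← nsmul_eq_mul]
        exact sum_le_card_nsmul _ _ _ fun y hy ↦ hT.le_pred hw ((mem_filter_univ y).1 hy).1.le

lemma two_le_subtreeWeight_add_treeLoad (hx : IsCutCover ⊥ x)
    (hT : IsGreedyDFSOrder fun u v ↦ x s(u, v)) (hw : w ≠ ⊥) :
    2 ≤ subtreeWeight x w + treeLoad (backFlow x) w := by
  classical
  let S : Finset V := {y | w ≤ y}
  calc 2 ≤ cutWeight S x := hx.two_le_cutWeight S ⟨w, by simp [S]⟩ (by simp [S, hw])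
    _ ≤ ∑ u ∈ S, ∑ v ∈ Sᶜ, x s(u, v) := cutWeight_le_sum_compl hx.nonneg S
    _ ≤ ∑ u ∈ S, ∑ v with v < w, x s(u, v) := sum_le_sum fun u hu ↦
        sum_leaving_subtree_le hx.nonneg hT ((mem_filter_univ u).1 hu) (by simp [S]) (by simp)
    _ = subtreeWeight x w + treeLoad (backFlow x) w := by
        rw [treeLoad_backFlow, subtreeWeight, ← sum_add_distrib]
        exact sum_congr rfl fun u _ ↦ by rw [filter_lt_eq_insert_pred hw, sum_insert (by simp)]

lemma eq_of_mem_children_of_le {c d y : V} (hc : c ∈ children v) (hd : d ∈ children v) (hcy : c ≤ y)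
    (hdy : d ≤ y) : c = d := by
  have key {c d : V} (hc : c ∈ children v) (hd : d ∈ children v) (hcd : c ≤ d) : c = d := by
    by_contra hne
    obtain ⟨hcbot, rfl⟩ := mem_children.1 hc
    refine (Order.pred_lt_of_not_isMin hcbot.bot_lt.not_isMin).not_ge ?_
    exact (mem_children.1 hd).2 ▸ Order.le_pred_of_lt (hcd.lt_of_ne hne)
  obtain hcd | hdc := le_total_of_directed hcy hdy
  · exact (key hd hc hcd).symm
  · exact key hc hd hdc

open Classical in
lemma sum_biUnion_subtree {M : Type*} [AddCommMonoid M] {C : Finset V} (hC : C ⊆ children v)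
    (φ : V → M) :
    ∑ y ∈ C.biUnion fun c ↦ {y | c ≤ y}, φ y = ∑ c ∈ C, ∑ y with c ≤ y, φ y := by
  refine sum_biUnion fun c hc d hd hcd ↦ disjoint_left.2 fun y hcy hdy ↦ hcd ?_
  exact eq_of_mem_children_of_le (hC hc) (hC hd) ((mem_filter_univ y).1 hcy)
    ((mem_filter_univ y).1 hdy)

open Classical in
lemma sum_star_biUnion_subtree {C : Finset V} (hC : C ⊆ children v) :
    ∑ y ∈ C.biUnion fun c ↦ {y | c ≤ y}, x s(v, y) = ∑ c ∈ C, subtreeWeight x c := by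
  rw [sum_biUnion_subtree hC]
  refine sum_congr rfl fun c hc ↦ sum_congr rfl fun y _ ↦ ?_
  rw [Sym2.eq_swap, (mem_children.1 (hC hc)).2]

lemma sum_subtreeWeight_le (hx : ∀ e, 0 ≤ x e) {C : Finset V} (hC : C ⊆ children v) :
    ∑ c ∈ C, subtreeWeight x c ≤ ∑ y, x s(v, y) := by
  classical
  rw [← sum_star_biUnion_subtree hC]
  exact sum_le_sum_of_subset_of_nonneg (subset_univ _) fun _ _ _ ↦ hx _

lemma two_add_sum_subtreeWeight_le (hx : IsCutCover ⊥ x)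
    (hT : IsGreedyDFSOrder fun u v ↦ x s(u, v)) (hv : v ≠ ⊥) {C : Finset V} (hC : C ⊆ children v) :
    2 + ∑ c ∈ C, subtreeWeight x c ≤ ∑ y, x s(v, y) + ∑ c ∈ C, treeLoad (backFlow x) c := by
  classical
  let D : Finset V := C.biUnion fun c ↦ {y | c ≤ y}
  have hD {y : V} : y ∈ D ↔ ∃ c ∈ C, c ≤ y := by simp [D]
  have hpred {c : V} (hc : c ∈ C) : Order.pred c < c :=
    Order.pred_lt_of_not_isMin (mem_children.1 (hC hc)).1.bot_lt.not_isMin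
  have hvD : v ∉ D := fun h ↦ by
    obtain ⟨c, hc, hcv⟩ := hD.1 h
    exact (hpred hc).not_ge ((mem_children.1 (hC hc)).2 ▸ hcv)
  have hbot : ⊥ ∉ insert v D := fun h ↦ by
    obtain h | h := mem_insert.1 h
    · exact hv h.symm
    · obtain ⟨c, hc, hcbot⟩ := hD.1 h
      exact (mem_children.1 (hC hc)).1 (le_bot_iff.1 hcbot)
  have hstar : ∑ z ∈ (insert v D)ᶜ, x s(v, z) ≤ ∑ z ∈ Dᶜ, x s(v, z) :=
    sum_le_sum_of_subset_of_nonneg (compl_subset_compl.2 (subset_insert v D)) fun _ _ _ ↦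
      hx.nonneg _
  have hleave : ∑ y ∈ D, ∑ z ∈ (insert v D)ᶜ, x s(y, z) ≤ ∑ c ∈ C, treeLoad (backFlow x) c := by
    rw [sum_biUnion_subtree hC]
    refine sum_le_sum fun c hc ↦ (treeLoad_backFlow (x := x) c).symm ▸ sum_le_sum fun y hy ↦ ?_
    refine sum_leaving_subtree_le hx.nonneg hT ((mem_filter_univ y).1 hy) (fun z hz hcz ↦
      mem_compl.1 hz (mem_insert_of_mem (hD.2 ⟨c, hc, hcz⟩))) fun z hz hzc ↦ ?_
    refine (mem_filter_univ z).2 ((Order.le_pred_of_lt hzc).lt_of_ne fun hzv ↦ ?_)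
    rw [(mem_children.1 (hC hc)).2] at hzv
    exact mem_compl.1 hz (hzv ▸ mem_insert_self v D)
  have hcut := (hx.two_le_cutWeight _ (insert_nonempty v D) hbot).trans
    (cutWeight_le_sum_compl hx.nonneg _)
  rw [sum_insert hvD] at hcut
  have hsplit := sum_add_sum_compl D fun z ↦ x s(v, z)
  rw [sum_star_biUnion_subtree hC] at hsplit
  linarith

end TreeCuts

section SurchargeBound

open Finset

variable {V : Type*} [PartialOrder V] [OrderBot V]

lemma surcharge_of_pos_treeLoad [Fintype V] {g : V × V → ℝ} {w : V} (hw : w ≠ ⊥)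
    (hload : 0 < treeLoad g w) :
    surcharge g w = max 0 (inflow g w - 1) + max 0 (1 - treeLoad g w) := by
  simp [surcharge, excess, deficiency, hw, hload]

lemma surcharge_of_treeLoad_eq_zero [Fintype V] {g : V × V → ℝ} {w : V} (hw : w ≠ ⊥)
    (hload : treeLoad g w = 0) :
    surcharge g w = max (inflow g w) 1 := by
  simp only [surcharge, excess, deficiency, Set.mem_ofPred_eq, hload, lt_irrefl, hw, if_false]
  rw [← max_add_add_left, add_zero, add_sub_cancel]

variable [PredOrder V] {x : Sym2 V → ℝ} {v w : V}

lemma backFlow_nonneg (hx : ∀ e, 0 ≤ x e) : 0 ≤ backFlow x := fun p ↦ by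
  unfold backFlow
  split_ifs
  · exact hx _
  · exact le_rfl

lemma injOn_sym2_mk_pred [Finite V] : Set.InjOn (fun p : V × V ↦ s(p.1, Order.pred p.2))
    {p | p.2 ≠ ⊥ ∧ p.2 ≤ p.1} := by
  cases nonempty_fintype V
  rintro ⟨y, w⟩ ⟨hw : w ≠ ⊥, hwy : w ≤ y⟩ ⟨z, c⟩ ⟨hc : c ≠ ⊥, hcz : c ≤ z⟩ h
  have hlt {w y : V} (hw : w ≠ ⊥) (hwy : w ≤ y) : Order.pred w < y :=
    (Order.pred_lt_of_not_isMin hw.bot_lt.not_isMin).trans_le hwy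
  obtain ⟨rfl : y = z, hpred⟩ | ⟨hy : y = _, hz : _ = z⟩ := Sym2.eq_iff.1 h
  · rw [eq_of_mem_children_of_le (mem_children.2 ⟨hw, hpred⟩) (mem_children.2 ⟨hc, rfl⟩) hwy hcz]
  · exact absurd (hy ▸ hlt hc hcz : y < z) (hz ▸ hlt hw hwy : z < y).not_gt

variable [Fintype V]

open Classical in
lemma sum_sum_children {M : Type*} [AddCommMonoid M] (φ : V → M) :
    ∑ v, ∑ c ∈ children v, φ c = ∑ c with c ≠ ⊥, φ c := by
  rw [← sum_fiberwise (univ.filter (· ≠ ⊥)) Order.pred]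
  exact sum_congr rfl fun v _ ↦ sum_congr (by ext; simp [mem_children]) fun _ _ ↦ rfl

lemma inflow_backFlow_le_subtreeWeight (hx : ∀ e, 0 ≤ x e) (hw : w ≠ ⊥) :
    inflow (backFlow x) w ≤ subtreeWeight x w := by
  have := hx s(w, Order.pred w)
  linarith [subtreeWeight_eq (x := x) hw]

lemma inflow_backFlow_mul_le (hT : IsGreedyDFSOrder fun u v ↦ x s(u, v)) (hw : w ≠ ⊥) :
    inflow (backFlow x) w * (backDegree x w + 1) ≤ backDegree x w * subtreeWeight x w := by
  have := inflow_backFlow_le hT hw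
  rw [subtreeWeight_eq hw]
  linarith

lemma surcharge_backFlow_bot : surcharge (backFlow x) ⊥ = 0 := by
  have hload : treeLoad (backFlow x) ⊥ = 0 := by simp [treeLoad]
  have hinflow : inflow (backFlow x) ⊥ = 0 := by simp [inflow, backFlow]
  simp [surcharge, excess, deficiency, hload, hinflow]

lemma surcharge_backFlow_le_subtreeWeight (hx : IsCutCover ⊥ x)
    (hT : IsGreedyDFSOrder fun u v ↦ x s(u, v)) (hw : w ≠ ⊥) (hload : treeLoad (backFlow x) w = 0) :
    surcharge (backFlow x) w ≤ subtreeWeight x w := by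
  rw [surcharge_of_treeLoad_eq_zero hw hload]
  have := two_le_subtreeWeight_add_treeLoad hx hT hw
  exact max_le (inflow_backFlow_le_subtreeWeight hx.nonneg hw) (by linarith)

lemma sum_surcharge_children_bot_le (hx : IsCutCover ⊥ x)
    (hT : IsGreedyDFSOrder fun u v ↦ x s(u, v)) :
    ∑ c ∈ children (⊥ : V), surcharge (backFlow x) c ≤ ∑ y, x s(⊥, y) := by
  refine (sum_le_sum fun c hc ↦ ?_).trans (sum_subtreeWeight_le hx.nonneg Subset.rfl)
  obtain ⟨hcbot, hc⟩ := mem_children.1 hc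
  exact surcharge_backFlow_le_subtreeWeight hx hT hcbot (by simp [treeLoad_backFlow, hc])

lemma one_sub_treeLoad_le (hx : IsCutCover ⊥ x) (hT : IsGreedyDFSOrder fun u v ↦ x s(u, v))
    (hv : v ≠ ⊥) {K : Finset V} (hK : K ⊆ children v) (hload : ∀ c ∈ K, treeLoad (backFlow x) c = 0)
    {c : V} (hc : c ∈ children v) (hcK : c ∉ K) :
    1 - treeLoad (backFlow x) c ≤
      ∑ y, x s(v, y) - ∑ c ∈ K, subtreeWeight x c - subtreeWeight x c - 1 := by
  classical
  have hcut := two_add_sum_subtreeWeight_le hx hT hv (insert_subset hc hK)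
  rw [sum_insert hcK, sum_insert hcK, sum_eq_zero hload, add_zero] at hcut
  linarith

lemma sum_surcharge_children_le (hx : IsCutCover ⊥ x)
    (hT : IsGreedyDFSOrder fun u v ↦ x s(u, v)) (hv : v ≠ ⊥) :
    ∑ c ∈ children v, surcharge (backFlow x) c ≤
      ∑ c ∈ children v, (backDegree x c / 6 : ℝ) + ∑ y, x s(v, y) - 2 := by
  classical
  let g := backFlow x
  let N := {c ∈ children v | 0 < treeLoad g c}
  let K := {c ∈ children v | ¬ 0 < treeLoad g c}
  have hN {c : V} (hc : c ∈ N) : c ∈ children v ∧ 0 < treeLoad g c := mem_filter.1 hc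
  have hK {c : V} (hc : c ∈ K) : c ∈ children v ∧ treeLoad g c = 0 := by
    obtain ⟨hc, hload⟩ := mem_filter.1 hc
    exact ⟨hc, (not_lt.1 hload).antisymm (treeLoad_nonneg (backFlow_nonneg hx.nonneg) c)⟩
  have hbot {c : V} (hc : c ∈ children v) : c ≠ ⊥ := (mem_children.1 hc).1
  have hcutK := two_add_sum_subtreeWeight_le hx hT hv (filter_subset _ _ : K ⊆ children v)
  rw [sum_eq_zero fun c hc ↦ (hK hc).2, add_zero] at hcutK
  have hsplit (φ : V → ℝ) : ∑ c ∈ N, φ c + ∑ c ∈ K, φ c = ∑ c ∈ children v, φ c :=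
    sum_filter_add_sum_filter_not _ _ _
  have hstar := sum_subtreeWeight_le hx.nonneg (Subset.refl (children v))
  have hsurK : ∑ c ∈ K, surcharge g c ≤ ∑ c ∈ K, subtreeWeight x c := sum_le_sum fun c hc ↦
    surcharge_backFlow_le_subtreeWeight hx hT (hbot (hK hc).1) (hK hc).2
  have hsurN : ∑ c ∈ N, surcharge g c ≤ ∑ c ∈ N, (backDegree x c / 6 : ℝ) +
      (∑ y, x s(v, y) - ∑ c ∈ K, subtreeWeight x c) - 2 := by
    rw [sum_congr rfl fun c hc ↦ surcharge_of_pos_treeLoad (hbot (hN hc).1) (hN hc).2]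
    refine sum_add_le_sum_add_sub_two (s := subtreeWeight x) (fun c _ ↦ by positivity)
      (fun c _ ↦ subtreeWeight_nonneg hx.nonneg c)
      (fun c hc ↦ max_le_max_left 0 (sub_le_sub_right
        (inflow_backFlow_le_subtreeWeight hx.nonneg (hbot (hN hc).1)) 1))
      (fun c hc ↦ max_sub_one_le (inflow_backFlow_mul_le hT (hbot (hN hc).1)))
      (fun c hc ↦ ?_) (fun c hc ↦ max_le_max_left 0 ?_) ?_ ?_
    · have := two_le_subtreeWeight_add_treeLoad hx hT (hbot (hN hc).1)
      have := (hN hc).2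
      grind
    · exact one_sub_treeLoad_le hx hT hv (filter_subset _ _) (fun c hc ↦ (hK hc).2) (hN hc).1
        fun hcK ↦ (hN hc).2.ne' (hK hcK).2
    · linarith
    · linarith [hsplit (subtreeWeight x)]
  have hback : ∑ c ∈ N, (backDegree x c / 6 : ℝ) ≤ ∑ c ∈ children v, (backDegree x c / 6 : ℝ) :=
    sum_le_sum_of_subset_of_nonneg (filter_subset _ _) fun _ _ _ ↦ by positivity
  linarith [hsplit (surcharge g)]

open Classical in
lemma sum_surcharge_le (hx : IsCutCover ⊥ x) (hT : IsGreedyDFSOrder fun u v ↦ x s(u, v)) :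
    ∑ w, surcharge (backFlow x) w + 2 * (Fintype.card V - 1) ≤
      (∑ w with w ≠ ⊥, (backDegree x w : ℝ)) / 6 + ∑ v, ∑ y, x s(v, y) := by
  have hchildren (v : V) : ∑ c ∈ children v, surcharge (backFlow x) c + (if v = ⊥ then 0 else 2) ≤
      ∑ c ∈ children v, (backDegree x c / 6 : ℝ) + ∑ y, x s(v, y) := by
    split_ifs with hv
    · subst hv
      have : 0 ≤ ∑ c ∈ children (⊥ : V), (backDegree x c / 6 : ℝ) :=
        sum_nonneg fun _ _ ↦ by positivity
      linarith [sum_surcharge_children_bot_le hx hT]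
    · linarith [sum_surcharge_children_le hx hT hv]
  have hsum := sum_le_sum fun v (_ : v ∈ univ) ↦ hchildren v
  have hcard : ∑ v : V, (if v = ⊥ then 0 else 2 : ℝ) = 2 * (Fintype.card V - 1) := by
    simp [sum_ite, filter_ne', card_erase_of_mem, Nat.cast_sub Fintype.card_pos, mul_comm]
  have hsur : ∑ c with c ≠ ⊥, surcharge (backFlow x) c = ∑ c, surcharge (backFlow x) c :=
    sum_filter_of_ne fun c _ hc hbot ↦ hc (hbot ▸ surcharge_backFlow_bot)
  rwa [sum_add_distrib, sum_add_distrib, sum_sum_children, sum_sum_children, hsur, hcard,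
    ← sum_div] at hsum

open Classical in
lemma sum_backDegree_add_card_le (hT : IsGreedyDFSOrder fun u v ↦ x s(u, v)) :
    ∑ w with w ≠ ⊥, backDegree x w + (Fintype.card V - 1) ≤ {e | x e ≠ 0}.ncard := by
  let P (w : V) : Finset V := {y | w ≤ y ∧ x s(y, Order.pred w) ≠ 0}
  have hP {w : V} (hw : w ≠ ⊥) : #(P w) = backDegree x w + 1 := by
    have : P w = insert w ({y | w < y ∧ x s(y, Order.pred w) ≠ 0} : Finset V) := by
      ext y
      have hpos : x s(w, Order.pred w) ≠ 0 := Sym2.eq_swap ▸ (hT.pred_pos hw).ne'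
      obtain rfl | hyw := eq_or_ne y w
      · simp [P, hpos]
      · simp [P, hyw, hyw.symm, le_iff_lt_or_eq]
    rw [this, card_insert_of_notMem (by simp), backDegree]
  calc ∑ w with w ≠ ⊥, backDegree x w + (Fintype.card V - 1)
      = ∑ w with w ≠ ⊥, #(P w) := by
        rw [sum_congr rfl fun w hw ↦ hP ((mem_filter_univ w).1 hw), sum_add_distrib]
        simp [filter_ne', card_erase_of_mem]
    _ = #{p : V × V | p.2 ≠ ⊥ ∧ p.1 ∈ P p.2} := by
        simp [card_filter, Fintype.sum_prod_type_right, sum_filter, ite_and]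
    _ ≤ {e | x e ≠ 0}.ncard := by
        rw [← Set.ncard_coe_finset]
        exact Set.ncard_le_ncard_of_injOn (fun p ↦ s(p.1, Order.pred p.2)) (by simp [P])
          (injOn_sym2_mk_pred.mono fun p hp ↦ by simp_all [P])

end SurchargeBound

section Assembly

open Finset Relation

variable {V : Type*} [Fintype V] {G : SimpleGraph V} {x : Sym2 V → ℝ} {r v : V}

namespace IsCutCover

lemma reflTransGen (hx : IsCutCover r x) (v : V) :
    ReflTransGen (fun a b ↦ 0 < x s(a, b)) r v := by
  classical
  by_contra hv
  let S : Finset V := {u | ¬ ReflTransGen (fun a b ↦ 0 < x s(a, b)) r u}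
  have hcut : 2 ≤ ∑ u ∈ S, ∑ w ∈ Sᶜ, x s(u, w) :=
    (hx.two_le_cutWeight S ⟨v, by simpa [S] using hv⟩ (by simp [S, ReflTransGen.refl])).trans
      (cutWeight_le_sum_compl hx.nonneg S)
  have hzero : ∑ u ∈ S, ∑ w ∈ Sᶜ, x s(u, w) ≤ 0 := sum_nonpos fun u hu ↦ sum_nonpos fun w hw ↦ by
    simp only [S, mem_compl, mem_filter_univ, not_not] at hu hw
    exact not_lt.1 fun huw ↦ hu (hw.tail (Sym2.eq_swap ▸ huw))
  linarith

lemma two_le_sum (hx : IsCutCover r x) (hv : v ≠ r) : 2 ≤ ∑ y, x s(v, y) := by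
  classical
  calc 2 ≤ cutWeight {v} x :=
        hx.two_le_cutWeight {v} (singleton_nonempty v) (by simpa using hv.symm)
    _ ≤ ∑ u ∈ {v}, ∑ y ∈ {v}ᶜ, x s(u, y) := cutWeight_le_sum_compl hx.nonneg {v}
    _ ≤ ∑ y, x s(v, y) := by
      rw [sum_singleton]
      exact sum_le_univ_sum_of_nonneg fun _ ↦ hx.nonneg _

lemma two_mul_card_sub_one_le (hx : IsCutCover r x) :
    2 * ((Fintype.card V : ℝ) - 1) ≤ ∑ v, ∑ y, x s(v, y) := by
  classical
  calc 2 * ((Fintype.card V : ℝ) - 1) = ∑ v ∈ univ.erase r, 2 := by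
        simp [card_erase_of_mem, mul_comm, Nat.cast_pred (Fintype.card_pos_iff.2 ⟨r⟩)]
    _ ≤ ∑ v ∈ univ.erase r, ∑ y, x s(v, y) :=
        sum_le_sum fun v hv ↦ hx.two_le_sum (ne_of_mem_erase hv)
    _ ≤ ∑ v, ∑ y, x s(v, y) := sum_le_univ_sum_of_nonneg fun _ ↦ sum_nonneg fun _ _ ↦ hx.nonneg _

lemma exists_spanning_closed_walk_of_sparse (hx : IsCutCover r x)
    (hxG : ∀ e ∉ G.edgeSet, x e = 0) (hsparse : {e | x e ≠ 0}.ncard ≤ 2 * (Fintype.card V - 1)) :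
    ∃ W : G.Walk r r, (∀ v, v ∈ W.support) ∧ (W.length : ℝ) ≤ 13 / 9 * ∑ e, x e := by
  classical
  have hadj {u v : V} (h : x s(u, v) ≠ 0) : G.Adj u v := not_imp_comm.1 (hxG s(u, v)) h
  obtain ⟨_, _, _, rfl, hT⟩ := exists_isGreedyDFSOrder (z := fun u v ↦ x s(u, v))
    (fun u v ↦ by rw [Sym2.eq_swap]) r hx.reflTransGen
  obtain ⟨W, hW, hlen⟩ := exists_spanning_closed_walk_of_surcharge
    (fun w hw ↦ hadj (hT.pred_pos hw).ne') (backFlow_nonneg hx.nonneg) fun p hp ↦ by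
      obtain ⟨⟨hbot, hlt⟩, hxp⟩ := ite_ne_right_iff.1 hp
      exact ⟨hbot, hlt.le, hadj hxp⟩
  refine ⟨W, hW, ?_⟩
  have hsurcharge := sum_surcharge_le hx hT
  have hback : (∑ w with w ≠ ⊥, (backDegree x w : ℝ)) ≤ (Fintype.card V - 1 : ℕ) := by
    have := (sum_backDegree_add_card_le hT).trans hsparse
    exact_mod_cast (by lia : ∑ w with w ≠ ⊥, backDegree x w ≤ Fintype.card V - 1)
  rw [Nat.cast_pred Fintype.card_pos] at hback
  have hdeg := hx.two_mul_card_sub_one_le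
  have hsum := sum_sum_sym2_mk_le hx.nonneg
  linarith

theorem exists_spanning_closed_walk (hx : IsCutCover r x) (hxG : ∀ e ∉ G.edgeSet, x e = 0) :
    ∃ W : G.Walk r r, (∀ v, v ∈ W.support) ∧ (W.length : ℝ) ≤ 13 / 9 * ∑ e, x e := by
  obtain ⟨y, hy, hyx, hyzero, hsparse⟩ := hx.exists_sparse
  obtain ⟨W, hW, hlen⟩ :=
    hy.exists_spanning_closed_walk_of_sparse (fun e he ↦ hyzero e (hxG e he)) hsparse
  exact ⟨W, hW, hlen.trans (by linarith)⟩

end IsCutCover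

lemma hkValue_eq_sum (G : SimpleGraph V) (x : Sym2 V → ℝ) :
    hkValue G x = ∑ e, G.edgeSet.indicator x e := by
  rw [hkValue, finsum_mem_def, finsum_eq_sum_of_fintype]

lemma hkCut_eq_cutWeight (G : SimpleGraph V) (x : Sym2 V → ℝ) (S : Finset V) :
    hkCut G x S = cutWeight S (G.edgeSet.indicator x) := by
  classical
  rw [hkCut, finsum_mem_def, finsum_eq_sum_of_fintype, cutWeight_apply]
  refine sum_congr rfl fun e _ ↦ ?_
  by_cases he : e ∈ G.edgeSet <;> by_cases hS : ∃ a b, e = s(a, b) ∧ a ∈ S ∧ b ∉ S <;>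
    simp [cutIndicator, Crosses, he, hS]

namespace HKFeasible

lemma isCutCover (hx : HKFeasible G x) (r : V) : IsCutCover r (G.edgeSet.indicator x) where
  nonneg := Set.indicator_nonneg fun e _ ↦ hx.1 e
  two_le_cutWeight S hS hr := hkCut_eq_cutWeight G x S ▸
    hx.2 S (coe_nonempty.2 hS) (Set.ne_univ_iff_exists_notMem _ |>.2 ⟨r, hr⟩)

end HKFeasible

end Assembly

section HeldKarp

variable {V : Type*} [Finite V] {G : SimpleGraph V}

theorem HKFeasible.exists_spanning_closed_walk {x : Sym2 V → ℝ} (hx : HKFeasible G x) (r : V) :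
    ∃ W : G.Walk r r, (∀ v, v ∈ W.support) ∧ (W.length : ℝ) ≤ 13 / 9 * hkValue G x := by
  have := Fintype.ofFinite V
  rw [hkValue_eq_sum]
  exact (hx.isCutCover r).exists_spanning_closed_walk fun _ ↦ (Set.indicator_of_notMem · x)

lemma hkFeasible_two (hG : G.Connected) : HKFeasible G fun _ ↦ 2 := by
  refine ⟨fun _ ↦ zero_le_two, fun S ⟨a, ha⟩ hS ↦ ?_⟩
  obtain ⟨b, hb⟩ := (Set.ne_univ_iff_exists_notMem S).1 hS
  obtain ⟨p⟩ := hG.preconnected a b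
  obtain ⟨d, -, hd, hd'⟩ := p.exists_boundary_dart S ha hb
  rw [hkCut, finsum_mem_def]
  have hmem : s(d.fst, d.snd) ∈ {e ∈ G.edgeSet | ∃ a b, e = s(a, b) ∧ a ∈ S ∧ b ∉ S} :=
    ⟨d.adj, _, _, rfl, hd, hd'⟩
  exact (Set.indicator_of_mem hmem fun _ ↦ (2 : ℝ)).ge.trans <|
    single_le_finsum _ (Set.toFinite _) (Set.indicator_nonneg fun _ _ ↦ zero_le_two)

lemma thirteen_div_nine_le : (13 / 9 : ℝ) ≤ 14 * (√2 - 1) / (12 * √2 - 13) := by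
  have hlt : 1.414 < √2 := by
    rw [Real.lt_sqrt (by norm_num)]
    norm_num
  have hgt : √2 < 1.415 := by
    rw [Real.sqrt_lt' (by norm_num)]
    norm_num
  rw [div_le_div_iff₀ (by norm_num) (by linarith)]
  linarith

end HeldKarp

theorem spanning_closed_walk_le_heldKarp_general {V : Type*} [Fintype V] (G : SimpleGraph V)
    (hconn : G.Connected) (r : V) :
    ∃ w : G.Walk r r, (∀ u : V, u ∈ w.support) ∧ (w.length : ℝ) ≤ 13 / 9 * OLP G := by
  have hfeas := hkFeasible_two hconn
  obtain ⟨W, hW, hmin⟩ := WellFounded.has_min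
    (InvImage.wf SimpleGraph.Walk.length Nat.lt_wfRel.wf) {W : G.Walk r r | ∀ u, u ∈ W.support}
    ((hfeas.exists_spanning_closed_walk r).imp fun _ ↦ And.left)
  refine ⟨W, hW, ?_⟩
  suffices 9 / 13 * W.length ≤ OLP G by linarith
  refine le_csInf ⟨_, _, hfeas, rfl⟩ ?_
  rintro _ ⟨x, hx, rfl⟩
  obtain ⟨W', hW', hlen⟩ := hx.exists_spanning_closed_walk r
  have : (W.length : ℝ) ≤ W'.length := by exact_mod_cast not_lt.1 (hmin W' hW')
  linarith

/-- Every connected simple graph on `n ≥ 2` vertices has a spanning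
closed walk of length at most `(14(√2 − 1)/(12√2 − 13)) · OLP(G)`; in particular
the integrality gap of the Held-Karp relaxation for graph-TSP is at most
`14(√2 − 1)/(12√2 − 13) < 1.461`. -/
theorem spanning_closed_walk_le_heldKarp
    {V : Type*} [Fintype V]
    (G : SimpleGraph V)
    (hn : 2 ≤ Fintype.card V)
    (hconn : G.Connected) :
    ∃ (v : V) (w : G.Walk v v), (∀ u : V, u ∈ w.support) ∧
      (w.length : ℝ) ≤ 14 * (Real.sqrt 2 - 1) / (12 * Real.sqrt 2 - 13) * OLP G := by
  obtain ⟨r⟩ := hconn.nonempty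
  obtain ⟨w, hw, hlen⟩ := spanning_closed_walk_le_heldKarp_general G hconn r
  have hOLP : 0 ≤ OLP G := by linarith [(w.length.cast_nonneg : (0 : ℝ) ≤ w.length)]
  exact ⟨r, w, hw, hlen.trans (mul_le_mul_of_nonneg_right thirteen_div_nine_le hOLP)⟩
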